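/- Fix k ≥ 2 and let m ≥ k be a natural number with k-normal form m =_k H_α(k)·p+q. Then the (k+1)-normal form of m[k←k+1] is H_(α[k←k+1])(k+1)·p + q[k←k+1]; in particular, α[k←k+1] is maximal among β ∈ OT0 with β < Ω such that H_β(k+1) ≤ m[k←k+1], and p is maximal with H_(α[k←k+1])(k+1)·p ≤ m[k←k+1]. -/

import Mathlib

set_option maxHeartbeats 1000000

attribute [local instance] Classical.propDecidable

/-- Raw terms of the system `T`: `0`, `1`, `ψᵢ a` and (right-nested) sums `a + b`. -/
inductive Tm : Type where
  | zero : Tm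
  | one  : Tm
  | psi  : ℕ → Tm → Tm
  | add  : Tm → Tm → Tm
deriving DecidableEq

instance : Nonempty Tm := ⟨Tm.zero⟩

/-- Head (first summand) of a term. -/
def Tm.hd : Tm → Tm
  | .add a _ => a
  | t => t

/-- Tail (remaining summands) of a term. -/
def Tm.tl : Tm → Tm
  | .add _ b => b
  | _ => .zero

/-- Whether a term is a genuine sum. -/
def Tm.isAdd : Tm → Prop
  | .add _ _ => True
  | _ => False

/-- The comparison relation `<` on terms of `T`. -/
inductive TLt : Tm → Tm → Prop where
  | zero_lt {a : Tm} : a ≠ Tm.zero → TLt Tm.zero a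
  | one_lt_psi0 {a : Tm} : TLt Tm.one (Tm.psi 0 a)
  | psi_mono {i : ℕ} {a b : Tm} : TLt a b → TLt (Tm.psi i a) (Tm.psi i b)
  | psi_lt {i j : ℕ} {a b : Tm} : i < j → TLt (Tm.psi i a) (Tm.psi j b)
  | lex_hd {a b : Tm} : (Tm.isAdd a ∨ Tm.isAdd b) → TLt (Tm.hd a) (Tm.hd b) → TLt a b
  | lex_tl {a b : Tm} : (Tm.isAdd a ∨ Tm.isAdd b) → Tm.hd a = Tm.hd b →
      TLt (Tm.tl a) (Tm.tl b) → TLt a b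

/-- `≤` on terms. -/
def TLe (a b : Tm) : Prop := TLt a b ∨ a = b

/-- Addition of terms: summands of the left argument smaller than the head of the
right argument are discarded. -/
noncomputable def Tm.addT : Tm → Tm → Tm
  | .zero, b => b
  | a, .zero => a
  | .add p r, b => if TLt p (Tm.hd b) then b else Tm.add p (Tm.addT r b)
  | a, b => if TLt a (Tm.hd b) then b else Tm.add a b

/-- The term representing a natural number. -/
def natToTm : ℕ → Tm
  | 0 => .zero
  | 1 => .one
  | n + 2 => Tm.add Tm.one (natToTm (n + 1))

/-- The natural number represented by a (numeral) term. -/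
def tmToNat : Tm → ℕ
  | .zero => 0
  | .one => 1
  | .psi _ _ => 0
  | .add a b => tmToNat a + tmToNat b

/-- Multiplication of a (principal) term by a natural number. -/
noncomputable def mulNat (a : Tm) : ℕ → Tm
  | 0 => .zero
  | n + 1 => Tm.addT (mulNat a n) a

/-- Principal terms: `1` and the `ψᵢ`-terms. -/
def Tm.IsPrincipal : Tm → Prop
  | .one => True
  | .psi _ _ => True
  | _ => False

/-- The well-formed terms of the system `T`. -/
inductive InT : Tm → Prop where
  | zero : InT .zero
  | one : InT .one
  | psi {i : ℕ} {a : Tm} : i < 3 → InT a → InT (.psi i a)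
  | add {a b : Tm} : Tm.IsPrincipal a → InT a → InT b → b ≠ .zero →
      TLe (Tm.hd b) a → InT (.add a b)

/-- `ω := ψ₀0`. -/
def omegaT : Tm := .psi 0 .zero
/-- `Ω := ψ₁0`. -/
def OmegaT : Tm := .psi 1 .zero
/-- `Ω₂ := ψ₂0`. -/
def Omega2T : Tm := .psi 2 .zero

/-- The type `tp(α)` of a term. -/
def tp : Tm → Tm
  | .zero => .zero
  | .one => .one
  | .add _ b => tp b
  | .psi i a =>
    if tp a = Tm.zero then Tm.psi i Tm.zero
    else if tp a = Tm.one then omegaT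
    else if (i = 0 ∧ tp a = OmegaT) ∨ (i = 1 ∧ tp a = Omega2T) then omegaT
    else tp a

/-- The fundamental sequence `α[x]` of a term `α` at index `x`. -/
noncomputable def fund : Tm → Tm → Tm
  | .zero, _ => .zero
  | .one, _ => .zero
  | .add a b, x => Tm.addT a (fund b x)
  | .psi i a, x =>
    if tp a = Tm.zero then x
    else if tp a = Tm.one then mulNat (Tm.psi i (fund a Tm.zero)) (tmToNat x)
    else if i = 0 ∧ tp a = OmegaT then
      Tm.psi 0 (fund a (Nat.rec (motive := fun _ => Tm) Tm.zero
        (fun _ ih => Tm.psi 0 (fund a ih)) (tmToNat x)))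
    else if i = 1 ∧ tp a = Omega2T then
      Tm.psi 1 (fund a (Nat.rec (motive := fun _ => Tm) Tm.zero
        (fun _ ih => Tm.psi 1 (fund a ih)) (tmToNat x)))
    else Tm.psi i (fund a x)
termination_by t _ => sizeOf t
decreasing_by all_goals simp

/-- The finite set `G₁(α)`. -/
def G1 : Tm → Finset Tm
  | .zero => ∅
  | .one => ∅
  | .psi 0 _ => ∅
  | .psi 1 b => insert b (G1 b)
  | .psi 2 b => G1 b
  | .psi (_ + 3) _ => ∅
  | .add a b => G1 a ∪ G1 b

/-- The finite set `G₀(α)`. -/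
def G0 : Tm → Finset Tm
  | .zero => ∅
  | .one => ∅
  | .psi 0 b => insert b (G0 b)
  | .psi 1 b => G0 b
  | .psi 2 b => G0 b
  | .psi (_ + 3) _ => ∅
  | .add a b => G0 a ∪ G0 b

/-- The well-founded subsystem `OT ⊆ T`. -/
inductive InOT : Tm → Prop where
  | zero : InOT .zero
  | one : InOT .one
  | psi2 {b : Tm} : InOT b → InOT (.psi 2 b)
  | add {a b : Tm} : InT (.add a b) → InOT a → InOT b → InOT (.add a b)
  | psi1 {b : Tm} : InOT b → (∀ γ ∈ G1 b, TLt γ b) → InOT (.psi 1 b)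
  | psi0 {b : Tm} : InOT b → (∀ γ ∈ G0 b, TLt γ b) → TLt b Omega2T → InOT (.psi 0 b)

/-- The norm `N(α)`. -/
def normN : Tm → ℕ
  | .zero => 0
  | .one => 1
  | .psi _ b => 1 + normN b
  | .add a b => normN a + normN b

/-- `OT₀ := {α ∈ OT : α < ψ₁Ω₂ and G₀α < ψ₁Ω₂}`. -/
def InOT0 (a : Tm) : Prop :=
  InOT a ∧ TLt a (Tm.psi 1 Omega2T) ∧ ∀ γ ∈ G0 a, TLt γ (Tm.psi 1 Omega2T)

/-- Single-step descent: `b = a[x]` for some term `x ≤ n`. -/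
def stepLe (n : ℕ) (b a : Tm) : Prop := ∃ x : Tm, TLe x (natToTm n) ∧ b = fund a x

/-- `a <ₙ b` : transitive closure of single-step descent. -/
def ltN (n : ℕ) (a b : Tm) : Prop := Relation.TransGen (stepLe n) a b

/-- `a ≤ₙ b` : reflexive transitive closure of single-step descent. -/
def leN (n : ℕ) (a b : Tm) : Prop := Relation.ReflTransGen (stepLe n) a b

mutual
/-- Graph of the Hardy hierarchy: `HRel α k n` means `H_α(k) = n`. -/
inductive HRel : Tm → ℕ → ℕ → Prop where
  | zero {k : ℕ} : HRel Tm.zero k k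
  | succ {α : Tm} {k n : ℕ} : tp α = Tm.one → HRel (fund α Tm.zero) k n →
      HRel α k (n * k)
  | lim {α β : Tm} {k n : ℕ} : tp α = omegaT → HIter α k k β → HRel β k n →
      HRel α k n

/-- Graph of the iteration `α{b}`: `HIter α k b β` means `α{b} = β`
(where `α{0} = α[0]` and `α{b+1} = α[H_(α{b})(k)]`). -/
inductive HIter : Tm → ℕ → ℕ → Tm → Prop where
  | zero {α : Tm} {k : ℕ} : HIter α k 0 (fund α Tm.zero)
  | succ {α β : Tm} {k b n : ℕ} : HIter α k b β → HRel β k n →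
      HIter α k (b + 1) (fund α (natToTm n))
end

/-- The Hardy function `H_α(k)`. -/
noncomputable def H (α : Tm) (k : ℕ) : ℕ := sInf {n | HRel α k n}

/-- The (unique, when it exists) ordinal term of the `k`-normal form of `m`:
the maximal `α ∈ OT₀ ∩ Ω` with `H_α(k) ≤ m`. -/
noncomputable def nfAlpha (k m : ℕ) : Tm :=
  Classical.epsilon fun α =>
    InOT0 α ∧ TLt α OmegaT ∧ H α k ≤ m ∧
      ∀ β : Tm, InOT0 β → TLt β OmegaT → TLt α β → m < H β k

theorem tmToNat_le_normN (t : Tm) : tmToNat t ≤ normN t := by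
  induction t with
  | zero => simp [tmToNat, normN]
  | one => simp [tmToNat, normN]
  | psi i a ih => simp [tmToNat, normN]
  | add a b iha ihb => simp only [tmToNat, normN]; omega

mutual
/-- Base change `α[k ← k+1]` on terms. -/
noncomputable def bcT (k : ℕ) : Tm → Tm
  | .zero => .zero
  | .one => .one
  | .psi i a => .psi i (bcT k a)
  | .add a b =>
      if a = Tm.one then natToTm (bcN k (tmToNat (Tm.add a b)))
      else if h : 0 < normN a ∧ 0 < normN b then Tm.add (bcT k a) (bcT k b)
      else Tm.zero
termination_by a => 2 * normN a + 1
decreasing_by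
  all_goals simp only [normN]
  · omega
  · have := tmToNat_le_normN (Tm.add a b); simp only [normN] at this ⊢; omega
  · omega
  · omega

/-- Base change `m[k ← k+1]` on natural numbers. -/
noncomputable def bcN (k m : ℕ) : ℕ :=
  if h1 : m < k then m
  else if h2 : m = k then k + 1
  else if hg : normN (nfAlpha k m) < m ∧ 0 < H (nfAlpha k m) k ∧ H (nfAlpha k m) k ≤ m then
    H (bcT k (nfAlpha k m)) (k + 1) * (m / H (nfAlpha k m) k) + bcN k (m % H (nfAlpha k m) k)
  else 0
termination_by 2 * m
decreasing_by
  · omega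
  · have := Nat.mod_lt m (y := H (nfAlpha k m) k) hg.2.1; omega
end

mutual
/-- The ordinal assignment `o_k` on terms of `OT₀`. -/
noncomputable def oT (k : ℕ) : Tm → Tm
  | .zero => .zero
  | .one => .one
  | .psi 0 b => .psi 1 (oT k b)
  | .psi 1 b => .psi 2 (oT k b)
  | .psi (_ + 2) _ => .zero
  | .add a b =>
      if a = Tm.one then oN k (tmToNat (Tm.add a b))
      else if h : 0 < normN a ∧ 0 < normN b then Tm.addT (oT k a) (oT k b)
      else Tm.zero
termination_by a => 2 * normN a + 1
decreasing_by
  all_goals simp only [normN]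
  · omega
  · omega
  · have := tmToNat_le_normN (Tm.add a b); simp only [normN] at this ⊢; omega
  · omega
  · omega

/-- The ordinal assignment `o_k` on natural numbers. -/
noncomputable def oN (k m : ℕ) : Tm :=
  if h1 : m < k then natToTm m
  else if h2 : m = k then omegaT
  else if hg : normN (nfAlpha k m) < m ∧ 0 < H (nfAlpha k m) k ∧ H (nfAlpha k m) k ≤ m then
    Tm.addT (Tm.psi 0 (oT k (nfAlpha k m))) (oN k (m - H (nfAlpha k m) k))
  else Tm.zero
termination_by 2 * m
decreasing_by
  · omega
  · omega
end

/-- Ordinal contexts: a term with a single hole, either replacing a summand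
(`ξ + ⟦·⟧ + η`) or nested under collapsing functions (`ξ + ψᵢ(μ⟦·⟧) + η`). -/
inductive Ctx : Type where
  | base : Tm → Tm → Ctx
  | psiC : Tm → ℕ → Ctx → Tm → Ctx

/-- Filling the hole of a context with a term. -/
noncomputable def Ctx.fill : Ctx → Tm → Tm
  | .base ξ η, γ => Tm.addT (Tm.addT ξ γ) η
  | .psiC ξ i μ η, γ => Tm.addT (Tm.addT ξ (Tm.psi i (Ctx.fill μ γ))) η

/-- The truncated context `λ⁻⟦·⟧`: all summands following the hole are removed,
at every level. -/
def Ctx.trunc : Ctx → Ctx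
  | .base ξ _ => .base ξ Tm.zero
  | .psiC ξ i μ _ => .psiC ξ i (Ctx.trunc μ) Tm.zero

/-- A context is valid if only `ψ₀` and `ψ₁` occur on the path to the hole. -/
def Ctx.Valid : Ctx → Prop
  | .base _ _ => True
  | .psiC _ i μ _ => i ≤ 1 ∧ Ctx.Valid μ

/-- A context is `ψ₀`-nesting free if its hole is not in the scope of a `ψ₀`. -/
def Ctx.NestFree : Ctx → Prop
  | .base _ _ => True
  | .psiC _ i μ _ => i = 1 ∧ Ctx.NestFree μ

namespace GB

def L : Tm → Tm → Prop
  | _, .zero => False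
  | .zero, _ => True
  | .add a b, .add c d => L a c ∨ (a = c ∧ L b d)
  | .add a _, .one => L a .one
  | .add a _, .psi j c => L a (.psi j c)
  | .one, .add c _ => L .one c ∨ Tm.one = c
  | .psi i a, .add c _ => L (.psi i a) c ∨ Tm.psi i a = c
  | .one, .one => False
  | .one, .psi _ _ => True
  | .psi _ _, .one => False
  | .psi i a, .psi j b => i < j ∨ (i = j ∧ L a b)
termination_by a b => sizeOf a + sizeOf b

theorem L_irrefl (a : Tm) : ¬ L a a := by
  induction a <;> simp_all [L]

theorem L_tri (a b : Tm) : L a b ∨ a = b ∨ L b a := by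
  fun_induction L a b with
  | case1 a => cases a <;> simp [L]
  | case2 b h => simp [L]
  | case3 a b c d ih1 ih2 => simp only [L, Tm.add.injEq]; grind
  | case4 a b ih => simp only [L]; grind
  | case5 a b j c ih => simp only [L]; grind
  | case6 c d ih => simp only [L]; grind
  | case7 i a c d ih => simp only [L]; grind
  | case8 => simp
  | case9 => simp
  | case10 => simp [L]
  | case11 i a j b ih => simp only [L, Tm.psi.injEq]; grind

theorem L_trans_aux (n : ℕ) : ∀ (a b c : Tm), sizeOf a + sizeOf b + sizeOf c < n →
    L a b → L b c → L a c := by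
  induction n with
  | zero => intro a b c h; omega
  | succ n ih =>
    intro a b c hn h1 h2
    have h1' := h1
    have h2' := h2
    rcases a with _ | _ | ⟨i, a⟩ | ⟨a1, a2⟩ <;> rcases b with _ | _ | ⟨j, b⟩ | ⟨b1, b2⟩ <;>
      rcases c with _ | _ | ⟨l, c⟩ | ⟨c1, c2⟩ <;> simp only [L] at h1 h2 ⊢ <;>
      simp only [Tm.psi.sizeOf_spec, Tm.add.sizeOf_spec, Tm.one.sizeOf_spec,
        sizeOf_nat] at hn
    · rcases h2 with h2 | rfl
      · left; exact ih _ _ _ (by simp; omega) h1' h2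
      · left; simp [L]
    · rcases h1 with h1 | rfl
      · exact absurd (ih _ _ _ (by simp; omega) h1 h2) (L_irrefl _)
      · exact absurd h2 (L_irrefl _)
    · rcases h1 with h1 | rfl <;> rcases h2 with h2 | ⟨rfl, h2⟩
      · left; exact ih _ _ _ (by simp; omega) h1 h2
      · left; exact h1
      · left; exact h2
      · right; rfl
    · rcases h1 with h1 | ⟨rfl, h1⟩ <;> rcases h2 with h2 | ⟨rfl, h2⟩
      · left; omega
      · left; omega
      · left; omega
      · right; exact ⟨rfl, ih _ _ _ (by omega) h1 h2⟩
    · rcases h2 with h2 | rfl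
      · left; exact ih _ _ _ (by simp; omega) h1' h2
      · left; exact h1'
    · rcases h1 with h1 | rfl
      · exact absurd (ih _ _ _ (by simp; omega) h1 h2) (by simp [L])
      · exact absurd h2 (by simp [L])
    · rcases h1 with h1 | rfl
      · simpa only [L] using ih _ _ _ (by simp; omega) h1 h2
      · simpa only [L] using h2
    · rcases h1 with h1 | rfl <;> rcases h2 with h2 | ⟨rfl, h2⟩
      · left; exact ih _ _ _ (by simp; omega) h1 h2
      · left; exact h1
      · left; exact h2
      · right; rfl
    · exact ih _ _ _ (by simp; omega) h1 h2'
    · rcases h2 with h2 | rfl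
      · left; exact ih _ _ _ (by simp; omega) h1 h2
      · left; exact h1
    · exact ih _ _ _ (by simp; omega) h1 h2'
    · rcases h2 with h2 | rfl
      · left; exact ih _ _ _ (by simp; omega) h1 h2
      · left; exact h1
    · rcases h1 with h1 | ⟨rfl, h1⟩
      · exact ih _ _ _ (by simp; omega) h1 h2
      · exact h2
    · rcases h1 with h1 | ⟨rfl, h1⟩
      · exact ih _ _ _ (by simp; omega) h1 h2
      · exact h2
    · rcases h1 with h1 | ⟨rfl, h1⟩ <;> rcases h2 with h2 | ⟨rfl, h2⟩
      · left; exact ih _ _ _ (by omega) h1 h2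
      · left; exact h1
      · left; exact h2
      · right; exact ⟨rfl, ih _ _ _ (by omega) h1 h2⟩

theorem L_trans (a b c : Tm) : L a b → L b c → L a c :=
  L_trans_aux _ a b c (Nat.lt_succ_self _)

noncomputable instance : LinearOrder Tm where
  lt := L
  le a b := L a b ∨ a = b
  le_refl a := Or.inr rfl
  le_trans a b c := by
    rintro (h | rfl) (h' | rfl)
    · exact Or.inl (L_trans _ _ _ h h')
    · exact Or.inl h
    · exact Or.inl h'
    · exact Or.inr rfl
  le_antisymm a b := by
    rintro (h | rfl) (h' | h')
    · exact absurd (L_trans _ _ _ h h') (L_irrefl _)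
    · exact h'.symm
    · rfl
    · rfl
  lt_iff_le_not_ge a b := by
    constructor
    · intro h
      refine ⟨Or.inl h, ?_⟩
      rintro (h' | rfl)
      · exact L_irrefl _ (L_trans _ _ _ h h')
      · exact L_irrefl _ h
    · rintro ⟨h | rfl, h'⟩
      · exact h
      · exact absurd (Or.inr rfl) h'
  le_total a b := by rcases L_tri a b with h | h | h <;> tauto
  toDecidableLE := Classical.decRel _
  toDecidableLT := Classical.decRel _
  toDecidableEq := inferInstance

open Tm

theorem lt_def (a b : Tm) : a < b ↔ L a b := Iff.rfl
@[simp] theorem not_lt_zero (a : Tm) : ¬ a < zero := by simp [lt_def, L]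
@[simp] theorem zero_lt (a : Tm) : zero < a ↔ a ≠ zero := by cases a <;> simp [lt_def, L]
@[simp] theorem zero_le (a : Tm) : zero ≤ a := by
  by_contra h; simp at h
@[simp] theorem le_zero (a : Tm) : a ≤ zero ↔ a = zero := by
  rw [← not_lt]; simp
@[simp] theorem add_lt_add (a b c d : Tm) : add a b < add c d ↔ a < c ∨ (a = c ∧ b < d) := by
  simp [lt_def, L]
@[simp] theorem add_lt_one (a b : Tm) : add a b < one ↔ a < one := by simp [lt_def, L]
@[simp] theorem add_lt_psi (a b : Tm) (i c) : add a b < psi i c ↔ a < psi i c := by simp [lt_def, L]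
@[simp] theorem one_lt_add (a b : Tm) : one < add a b ↔ one ≤ a := by
  rw [le_iff_lt_or_eq]; simp [lt_def, L]
@[simp] theorem psi_lt_add (a b : Tm) (i c) : psi i c < add a b ↔ psi i c ≤ a := by
  rw [le_iff_lt_or_eq]; simp [lt_def, L]
@[simp] theorem one_lt_psi (i c) : one < psi i c := by simp [lt_def, L]
@[simp] theorem one_le_psi (i c) : one ≤ psi i c := (one_lt_psi i c).le
@[simp] theorem psi_lt_one (i c) : ¬ psi i c < one := by simp [lt_def, L]
@[simp] theorem psi_le_one (i c) : ¬ psi i c ≤ one := by simp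
@[simp] theorem psi_lt_psi (i a j b) : psi i a < psi j b ↔ i < j ∨ (i = j ∧ a < b) := by
  simp [lt_def, L]
@[simp] theorem psi_le_psi (i a j b) : psi i a ≤ psi j b ↔ i < j ∨ (i = j ∧ a ≤ b) := by
  rw [le_iff_lt_or_eq, le_iff_lt_or_eq]; simp; tauto
theorem lt_of_hd {a b : Tm} (h : a.hd < b.hd) : a < b := by
  cases a <;> cases b <;> simp_all [Tm.hd] <;> grind

theorem TLt_lt {a b : Tm} (h : TLt a b) : a < b := by
  induction h with
  | zero_lt h => simpa using h
  | one_lt_psi0 => simp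
  | psi_mono _ ih => simpa using ih
  | psi_lt h => simp [h]
  | lex_hd _ _ ih => exact lt_of_hd ih
  | @lex_tl a b h0 h1 _ ih =>
    cases a <;> cases b <;> simp only [Tm.hd, Tm.tl, Tm.isAdd] at h0 h1 ih <;> simp at h0 ih <;>
      subst h1 <;> simp_all
end GB

namespace GB
open Tm

@[simp] theorem hd_zero : hd zero = zero := rfl
@[simp] theorem hd_one : hd one = one := rfl
@[simp] theorem hd_psi (i a) : hd (psi i a) = psi i a := rfl
@[simp] theorem hd_add (a b) : hd (add a b) = a := rfl
@[simp] theorem pr_zero : ¬ IsPrincipal zero := fun h => h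
@[simp] theorem pr_one : IsPrincipal one := trivial
@[simp] theorem pr_psi (i a) : IsPrincipal (psi i a) := trivial
@[simp] theorem pr_add (a b) : ¬ IsPrincipal (add a b) := fun h => h

theorem lt_psi_iff (t : Tm) (i c) : t < psi i c ↔ hd t < psi i c := by cases t <;> simp

def W : Tm → Prop
  | .zero => True
  | .one => True
  | .psi i a => i ≤ 1 ∧ W a
  | .add a b => IsPrincipal a ∧ W a ∧ W b ∧ b ≠ zero ∧ hd b ≤ a
@[simp] theorem W_zero : W zero := trivial
@[simp] theorem W_one : W one := trivial
@[simp] theorem W_psi (i a) : W (psi i a) ↔ i ≤ 1 ∧ W a := by simp [W]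
@[simp] theorem W_add (a b) : W (add a b) ↔
  IsPrincipal a ∧ W a ∧ W b ∧ b ≠ zero ∧ hd b ≤ a := by rw [W]

def cons (a t : Tm) : Tm := if t = zero then a else add a t
@[simp] theorem cons_zero (a) : cons a zero = a := by simp [cons]
theorem cons_nz (a) {t} (h : t ≠ zero) : cons a t = add a t := by simp [cons, h]
@[simp] theorem hd_cons (a t) (h : IsPrincipal a) : hd (cons a t) = a := by
  unfold cons; split
  · cases a <;> simp_all
  · simp
theorem W_cons {a t} (h : IsPrincipal a) : W (cons a t) ↔ W a ∧ W t ∧ hd t ≤ a := by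
  by_cases ht : t = zero
  · subst ht; simp
  · rw [cons_nz _ ht]; simp [h, ht]
theorem pr_ne_zero {a} (h : IsPrincipal a) : a ≠ zero := by rintro rfl; simp at h
theorem cons_ne_zero {a t} (h : IsPrincipal a) : cons a t ≠ zero := by
  unfold cons; split
  · exact pr_ne_zero h
  · simp

theorem pr_lt_add {a b c} (h : IsPrincipal a) : a < add b c ↔ a ≤ b := by
  cases a <;> simp_all
theorem add_lt_pr {a b c} (h : IsPrincipal a) : add b c < a ↔ b < a := by
  cases a <;> simp_all

theorem cons_lt_cons {a t b s} (ha : IsPrincipal a) (hb : IsPrincipal b) :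
    cons a t < cons b s ↔ a < b ∨ (a = b ∧ t < s) := by
  by_cases ht : t = zero <;> by_cases hs : s = zero
  · subst ht hs; simp
  · subst ht; rw [cons_nz _ hs, cons_zero, pr_lt_add ha, le_iff_lt_or_eq]; simp [hs]
  · subst hs; rw [cons_nz _ ht, cons_zero, add_lt_pr hb]; simp
  · rw [cons_nz _ hs, cons_nz _ ht]; simp

theorem cons_inj {a t b s} (ha : IsPrincipal a) (hb : IsPrincipal b) :
    cons a t = cons b s ↔ a = b ∧ t = s := by
  constructor
  · intro h
    have h1 : a = b := by
      have := congrArg hd h; rwa [hd_cons _ _ ha, hd_cons _ _ hb] at this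
    subst h1
    refine ⟨rfl, ?_⟩
    by_contra hne
    rcases lt_or_gt_of_ne hne with h' | h'
    · have := (cons_lt_cons (t := t) (s := s) ha ha).2 (Or.inr ⟨rfl, h'⟩)
      exact absurd h this.ne
    · have := (cons_lt_cons (t := s) (s := t) ha ha).2 (Or.inr ⟨rfl, h'⟩)
      exact absurd h.symm this.ne
  · rintro ⟨rfl, rfl⟩; rfl

theorem cons_le_cons {a t b s} (ha : IsPrincipal a) (hb : IsPrincipal b) :
    cons a t ≤ cons b s ↔ a < b ∨ (a = b ∧ t ≤ s) := by
  rw [le_iff_lt_or_eq, cons_lt_cons ha hb, cons_inj ha hb, le_iff_lt_or_eq]; tauto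

theorem W.eq_cons {t} (h : W t) (h0 : t ≠ zero) :
    ∃ a s, t = cons a s ∧ IsPrincipal a ∧ W a ∧ W s ∧ hd s ≤ a := by
  cases t with
  | zero => simp at h0
  | one => exact ⟨one, zero, by simp⟩
  | psi i a => exact ⟨psi i a, zero, by simpa using h⟩
  | add a b => simp at h; exact ⟨a, b, by rw [cons_nz _ h.2.2.2.1], by tauto⟩

theorem add_eq_cons {a b} (h : W (add a b)) : add a b = cons a b := by
  simp at h; rw [cons_nz _ h.2.2.2.1]

theorem W.lt_one {t} (h : W t) (h1 : t < one) : t = zero := by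
  by_contra h0
  obtain ⟨a, s, rfl, ha, -⟩ := h.eq_cons h0
  rw [show one = cons one zero by simp, cons_lt_cons ha (by simp)] at h1
  cases a <;> simp_all

theorem W.hd_pr {t} (h : W t) (h0 : t ≠ zero) : IsPrincipal (hd t) := by
  obtain ⟨a, s, rfl, ha, -⟩ := h.eq_cons h0
  rwa [hd_cons _ _ ha]

theorem W.hd_le {t} (h : W t) : hd t ≤ t := by
  by_cases h0 : t = zero
  · subst h0; simp
  obtain ⟨a, s, rfl, ha, -⟩ := h.eq_cons h0
  rw [hd_cons _ _ ha]
  conv_lhs => rw [← cons_zero a]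
  rw [cons_le_cons ha ha]; simp

theorem hd_mono {s t} (hs : W s) (ht : W t) (h : s ≤ t) : hd s ≤ hd t := by
  by_contra h'; push Not at h'
  exact absurd (lt_of_hd h') (not_lt.2 h)

theorem tail_lt {a b} (h : W (add a b)) : b < add a b := by
  have hw := h
  simp only [W_add] at h
  obtain ⟨p, s, rfl, hp, -⟩ := h.2.2.1.eq_cons h.2.2.2.1
  rw [hd_cons _ _ hp] at h
  rw [add_eq_cons hw, cons_lt_cons hp h.1]
  rcases lt_or_eq_of_le h.2.2.2.2 with h' | h'
  · left; exact h'
  · right; refine ⟨h', ?_⟩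
    subst h'
    have : W (cons p s) := h.2.2.1
    by_cases hs : s = zero
    · subst hs; simpa using pr_ne_zero hp
    · rw [cons_nz _ hs] at this ⊢
      exact tail_lt this
termination_by sizeOf b
decreasing_by subst_vars; rw [cons_nz _ hs]; simp

/-- repetition -/
def rep (a : Tm) : ℕ → Tm
  | 0 => zero
  | n + 1 => cons a (rep a n)
@[simp] theorem rep_zero (a) : rep a 0 = zero := rfl
theorem rep_succ (a n) : rep a (n + 1) = cons a (rep a n) := rfl

theorem hd_rep {a} (h : IsPrincipal a) (n) : hd (rep a n) = if n = 0 then zero else a := by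
  cases n <;> simp [rep_succ, h]
theorem W_rep {a} (h : IsPrincipal a) (ha : W a) (n) : W (rep a n) := by
  induction n with
  | zero => simp
  | succ n ih => rw [rep_succ, W_cons h]; refine ⟨ha, ih, ?_⟩; rw [hd_rep h]; split <;> simp
theorem rep_lt {a} (h : IsPrincipal a) {n m} (hnm : n < m) : rep a n < rep a m := by
  induction n generalizing m with
  | zero => cases m with
    | zero => omega
    | succ m => simp [rep_succ, cons_ne_zero h]
  | succ n ih => cases m with
    | zero => omega
    | succ m => rw [rep_succ, rep_succ, cons_lt_cons h h]; exact Or.inr ⟨rfl, ih (by omega)⟩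
theorem rep_le {a} (h : IsPrincipal a) {n m} : rep a n ≤ rep a m ↔ n ≤ m := by
  constructor
  · intro h'; by_contra hh; exact absurd (rep_lt h (not_le.1 hh)) (not_lt.2 h')
  · intro h'; rcases h'.lt_or_eq with h' | rfl
    · exact (rep_lt h h').le
    · rfl
theorem rep_lt_iff {a} (h : IsPrincipal a) {n m} : rep a n < rep a m ↔ n < m := by
  rw [← not_le, rep_le h, not_le]
theorem nat_rep (n) : natToTm n = rep one n := by
  induction n using natToTm.induct with
  | case1 => rfl
  | case2 => rfl
  | case3 n ih => rw [natToTm, ih, rep_succ one (n+1), cons_nz]; simp [rep_succ, cons_ne_zero]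

theorem rep_eq_zero {a} (h : IsPrincipal a) {n} : rep a n = zero ↔ n = 0 := by
  cases n <;> simp [rep_succ, cons_ne_zero h]
theorem rep_inj {a} (h : IsPrincipal a) {n m} : rep a n = rep a m ↔ n = m := by
  rw [le_antisymm_iff, rep_le h, rep_le h]; omega

/-- numerals -/
abbrev nm (n : ℕ) : Tm := rep one n
@[simp] theorem W_nm (n) : W (nm n) := W_rep (by simp) (by simp) n
@[simp] theorem nm_lt_psi (n i a) : nm n < psi i a := by
  rw [lt_psi_iff, hd_rep (by simp)]; split <;> simp
theorem normN_cons (a t) : normN (cons a t) = normN a + normN t := by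
  unfold cons; split <;> simp_all [normN]
theorem tmToNat_cons (a t) : tmToNat (cons a t) = tmToNat a + tmToNat t := by
  unfold cons; split <;> simp_all [tmToNat]
@[simp] theorem tmToNat_nm (n) : tmToNat (nm n) = n := by
  induction n with
  | zero => simp [tmToNat]
  | succ n ih => rw [nm, rep_succ, tmToNat_cons]; simp [nm] at ih; simp [ih, tmToNat]; omega
theorem normN_rep (a n) : normN (rep a n) = n * normN a := by
  induction n with
  | zero => simp [normN]
  | succ n ih => rw [rep_succ, normN_cons, ih]; ring
@[simp] theorem normN_nm (n) : normN (nm n) = n := by simp [normN_rep, normN]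
theorem W_num {t} (h : W t) (h1 : hd t ≤ one) : ∃ n, t = nm n := by
  induction t with
  | zero => exact ⟨0, rfl⟩
  | one => exact ⟨1, rfl⟩
  | psi i a => simp at h1
  | add a b iha ihb =>
    have h' := h
    simp at h h1
    have ha : a = one := by cases a <;> simp_all
    subst ha
    obtain ⟨n, rfl⟩ := ihb h.2.2.1 h.2.2.2.2
    exact ⟨n + 1, add_eq_cons h'⟩

def kd : Tm → ℕ
  | .zero => 0
  | .one => 1
  | .add _ b => kd b
  | .psi 0 _ => 2
  | .psi (_ + 1) a => if kd a = 0 then 3 else if kd a = 1 then 2 else kd a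

@[simp] theorem kd_zero : kd zero = 0 := rfl
@[simp] theorem kd_one : kd one = 1 := rfl
@[simp] theorem kd_add (a b) : kd (add a b) = kd b := rfl
@[simp] theorem kd_psi0 (a) : kd (psi 0 a) = 2 := rfl
theorem kd_psi1 (a) : kd (psi 1 a) = if kd a = 0 then 3 else if kd a = 1 then 2 else kd a := rfl
theorem kd_le : ∀ t, kd t ≤ 3
  | .zero => by simp
  | .one => by simp
  | .add _ b => by simpa using kd_le b
  | .psi 0 _ => by simp
  | .psi (_ + 1) a => by have := kd_le a; rw [kd]; split <;> [skip; split] <;> omega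
theorem kd_psi_ge : ∀ i a, 2 ≤ kd (psi i a)
  | 0, _ => by simp
  | _ + 1, a => by rw [kd]; split <;> [skip; split] <;> omega
theorem kd_cons (a t) : kd (cons a t) = if t = zero then kd a else kd t := by
  unfold cons; split <;> simp
theorem kd_eq_zero {t} (h : W t) : kd t = 0 ↔ t = zero := by
  induction t with
  | zero => simp
  | one => simp
  | psi i a ih => have := kd_psi_ge i a; simp; omega
  | add a b _ ih => simp at h; simp [ih h.2.2.1, h]

def zz (g : Tm → Tm) : ℕ → Tm
  | 0 => zero
  | n + 1 => psi 0 (g (zz g n))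
@[simp] theorem zz_zero (g) : zz g 0 = zero := rfl
theorem zz_succ (g n) : zz g (n + 1) = psi 0 (g (zz g n)) := rfl

def fd : Tm → Tm → Tm
  | .zero, _ => .zero
  | .one, _ => .zero
  | .add a b, x => cons a (fd b x)
  | .psi i a, x =>
    if kd a = 0 then x
    else if kd a = 1 then rep (psi i (fd a zero)) (tmToNat x)
    else if i = 0 ∧ kd a = 3 then zz (fd a) (tmToNat x + 1)
    else psi i (fd a x)

@[simp] theorem fd_zero (x) : fd zero x = zero := rfl
@[simp] theorem fd_one (x) : fd one x = zero := rfl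
@[simp] theorem fd_add (a b x) : fd (add a b) x = cons a (fd b x) := rfl
theorem fd_psi_0 {i a x} (h : kd a = 0) : fd (psi i a) x = x := by simp [fd, h]
theorem fd_psi_1 {i a x} (h : kd a = 1) :
    fd (psi i a) x = rep (psi i (fd a zero)) (tmToNat x) := by simp [fd, h]
theorem fd_psi_2 {i a x} (h : kd a = 2) : fd (psi i a) x = psi i (fd a x) := by simp [fd, h]
theorem fd_psi0_3 {a x} (h : kd a = 3) : fd (psi 0 a) x = zz (fd a) (tmToNat x + 1) := by
  simp [fd, h]
theorem fd_psi1_3 {a x} (h : kd a = 3) : fd (psi 1 a) x = psi 1 (fd a x) := by simp [fd, h]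

/-- admissible index -/
def Adm (t x : Tm) : Prop := (kd t = 2 → ∃ n, x = nm n) ∧ (kd t = 3 → W x ∧ x < psi 1 zero)

theorem Adm.w (t x : Tm) (h : kd t ≤ 1) : Adm t x := ⟨by omega, by omega⟩
theorem adm2 {t} (h : kd t = 2) (n) : Adm t (nm n) := ⟨fun _ => ⟨n, rfl⟩, by omega⟩
theorem adm3 {t x} (h : kd t = 3) (hx : W x) (h' : x < psi 1 zero) : Adm t x :=
  ⟨by omega, fun _ => ⟨hx, h'⟩⟩
theorem adm_nm (t n) : Adm t (nm n) := ⟨fun _ => ⟨n, rfl⟩, fun _ => ⟨by simp, by simp⟩⟩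

theorem zz_lt_Omega (g n) : zz g n < psi 1 zero := by cases n <;> simp [zz_succ]

theorem fd_basic (t : Tm) : ∀ x, W t → Adm t x →
    W (fd t x) ∧ hd (fd t x) ≤ hd t ∧ (t ≠ zero → fd t x < t) := by
  induction t with
  | zero => simp
  | one => simp
  | add a b iha ihb =>
    intro x h hx
    have h' := h
    simp only [W_add] at h
    obtain ⟨h1, h2, h3⟩ := ihb x h.2.2.1 hx
    rw [fd_add, hd_cons _ _ h.1, W_cons h.1]
    refine ⟨⟨h.2.1, h1, h2.trans h.2.2.2.2⟩, le_rfl, fun _ => ?_⟩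
    rw [add_eq_cons h', cons_lt_cons h.1 h.1]
    exact Or.inr ⟨rfl, h3 h.2.2.2.1⟩
  | psi i a ih =>
    intro x h hx
    simp only [W_psi] at h
    have hk := kd_le a
    have hi : i = 0 ∨ i = 1 := by omega
    obtain h0 | h0 | h0 | h0 : kd a = 0 ∨ kd a = 1 ∨ kd a = 2 ∨ kd a = 3 := by omega
    · rw [fd_psi_0 h0]
      rw [kd_eq_zero h.2] at h0; subst h0
      rcases hi with rfl | rfl
      · obtain ⟨n, rfl⟩ := hx.1 rfl
        have := (nm_lt_psi n 0 zero)
        exact ⟨by simp, by rw [lt_psi_iff] at this; exact this.le, fun _ => this⟩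
      · obtain ⟨h1, h2⟩ := hx.2 rfl
        exact ⟨h1, by rw [lt_psi_iff] at h2; exact h2.le, fun _ => h2⟩
    · rw [fd_psi_1 h0, hd_rep (by simp)]
      obtain ⟨h1, h2, h3⟩ := ih zero h.2 (Adm.w _ _ (by omega))
      have hne : a ≠ zero := by rintro rfl; simp at h0
      refine ⟨W_rep (by simp) (by simp [h.1, h1]) _, ?_, fun _ => ?_⟩
      · split <;> simp [(h3 hne).le]
      · rw [lt_psi_iff, hd_rep (by simp)]; split <;> simp [h3 hne]
    · have hne : a ≠ zero := by rintro rfl; simp at h0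
      obtain ⟨h1, h2, h3⟩ := ih x h.2 ⟨fun _ => hx.1 (by
        rcases hi with rfl | rfl <;> simp [kd_psi1, h0]), by omega⟩
      rw [fd_psi_2 h0]
      simp [h1, h3 hne, (h3 hne).le, h.1]
    · have hne : a ≠ zero := by rintro rfl; simp at h0
      rcases hi with rfl | rfl
      · rw [fd_psi0_3 h0]
        have hW : ∀ n, W (zz (fd a) n) := by
          intro n
          induction n with
          | zero => simp
          | succ n ihn =>
            simp [zz_succ, (ih _ h.2 (adm3 h0 ihn (zz_lt_Omega _ _))).1]
        obtain ⟨h1, h2, h3⟩ := ih _ h.2 (adm3 h0 (hW (tmToNat x)) (zz_lt_Omega _ _))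
        rw [zz_succ]
        simp [h1, h3 hne, (h3 hne).le]
      · obtain ⟨h1, h2, h3⟩ := ih x h.2 ⟨by omega, fun _ => hx.2 (by simp [kd_psi1, h0])⟩
        rw [fd_psi1_3 h0]
        simp [h1, h3 hne, (h3 hne).le]

theorem fd_W {t x} (h : W t) (hx : Adm t x) : W (fd t x) := (fd_basic t x h hx).1
theorem fd_hd {t x} (h : W t) (hx : Adm t x) : hd (fd t x) ≤ hd t := (fd_basic t x h hx).2.1
theorem fd_lt {t x} (h : W t) (hx : Adm t x) (h0 : t ≠ zero) : fd t x < t :=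
  (fd_basic t x h hx).2.2 h0
theorem zz_W {a} (h : W a) (h0 : kd a = 3) (n) : W (zz (fd a) n) := by
  induction n with
  | zero => simp
  | succ n ihn => simp [zz_succ, fd_W h (adm3 h0 ihn (zz_lt_Omega _ _))]
theorem zz_adm {a} (h : W a) (h0 : kd a = 3) (n) : Adm a (zz (fd a) n) :=
  adm3 h0 (zz_W h h0 n) (zz_lt_Omega _ _)

theorem adm_psi2 {i a x} (h0 : kd a = 2) (h : Adm (psi i a) x) : Adm a x :=
  ⟨fun _ => h.1 (by cases i <;> simp [kd, h0]), by omega⟩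
theorem adm_psi3 {a x} (h0 : kd a = 3) (h : Adm (psi 1 a) x) : Adm a x :=
  ⟨by omega, fun _ => h.2 (by simp [kd_psi1, h0])⟩

theorem kd_split (a : Tm) : kd a = 0 ∨ kd a = 1 ∨ kd a = 2 ∨ kd a = 3 := by
  have := kd_le a; omega

theorem fd_mono (t : Tm) : ∀ x y, W t → Adm t x → Adm t y → 2 ≤ kd t → x < y →
    fd t x < fd t y := by
  induction t with
  | zero => simp
  | one => simp
  | add a b iha ihb =>
    intro x y h hx hy hk hxy
    simp only [W_add] at h
    rw [fd_add, fd_add, cons_lt_cons h.1 h.1]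
    exact Or.inr ⟨rfl, ihb x y h.2.2.1 hx hy hk hxy⟩
  | psi i a ih =>
    intro x y h hx hy hk hxy
    simp only [W_psi] at h
    have hi : i = 0 ∨ i = 1 := by omega
    obtain h0 | h0 | h0 | h0 := kd_split a
    · rwa [fd_psi_0 h0, fd_psi_0 h0]
    · have hk2 : kd (psi i a) = 2 := by rcases hi with rfl | rfl <;> simp [kd_psi1, h0]
      obtain ⟨n, rfl⟩ := hx.1 hk2
      obtain ⟨m, rfl⟩ := hy.1 hk2
      rw [fd_psi_1 h0, fd_psi_1 h0, tmToNat_nm, tmToNat_nm, rep_lt_iff (by simp)]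
      rwa [rep_lt_iff (by simp)] at hxy
    · rw [fd_psi_2 h0, fd_psi_2 h0]
      simpa using ih x y h.2 (adm_psi2 h0 hx) (adm_psi2 h0 hy) (by omega) hxy
    · rcases hi with rfl | rfl
      · obtain ⟨n, rfl⟩ := hx.1 rfl
        obtain ⟨m, rfl⟩ := hy.1 rfl
        rw [rep_lt_iff (by simp)] at hxy
        rw [fd_psi0_3 h0, fd_psi0_3 h0, tmToNat_nm, tmToNat_nm]
        have : StrictMono (zz (fd a)) := by
          apply strictMono_nat_of_lt_succ
          intro n
          induction n with
          | zero => simp [zz_succ]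
          | succ n ihn =>
            rw [zz_succ, zz_succ]
            simpa using ih _ _ h.2 (zz_adm h.2 h0 _) (zz_adm h.2 h0 _) (by omega) ihn
        exact this (by omega)
      · rw [fd_psi1_3 h0, fd_psi1_3 h0]
        simpa using ih x y h.2 (adm_psi3 h0 hx) (adm_psi3 h0 hy) (by omega) hxy

theorem fd_mono_le {t x y} (h : W t) (hx : Adm t x) (hy : Adm t y) (hk : 2 ≤ kd t) (hxy : x ≤ y) :
    fd t x ≤ fd t y := by
  rcases hxy.lt_or_eq with h' | rfl
  · exact (fd_mono t x y h hx hy hk h').le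
  · rfl

theorem zz_mono {a} (h : W a) (h0 : kd a = 3) : StrictMono (zz (fd a)) := by
  apply strictMono_nat_of_lt_succ
  intro n
  induction n with
  | zero => simp [zz_succ]
  | succ n ihn =>
    rw [zz_succ, zz_succ]
    simpa using fd_mono a _ _ h (zz_adm h h0 _) (zz_adm h h0 _) (by omega) ihn

theorem pred_le (t : Tm) : ∀ e, W t → W e → kd t = 1 → e < t → e ≤ fd t zero := by
  induction t with
  | zero => simp
  | one => intro e _ he _ h; simp [he.lt_one h]
  | psi i a => intro e _ _ h; have := kd_psi_ge i a; omega
  | add a b _ ih =>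
    intro e h he hk hlt
    by_cases h0 : e = zero
    · subst h0; simp
    obtain ⟨p, s, rfl, hp, -, hs, -⟩ := he.eq_cons h0
    rw [add_eq_cons h] at hlt
    simp only [W_add] at h
    rw [fd_add, cons_le_cons hp h.1]
    rw [cons_lt_cons hp h.1] at hlt
    rcases hlt with h1 | ⟨rfl, h1⟩
    · left; exact h1
    · right; exact ⟨rfl, ih s h.2.2.1 hs hk h1⟩

theorem norm_k1 (t : Tm) (hk : kd t = 1) : normN t = normN (fd t zero) + 1 := by
  induction t with
  | zero => simp at hk
  | one => simp [normN]
  | psi i a => have := kd_psi_ge i a; omega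
  | add a b _ ih => rw [fd_add, normN_cons, normN, ih hk]; omega

theorem norm_k3 (t : Tm) (x) (h : W t) (hk : kd t = 3) :
    normN (fd t x) + 1 = normN t + normN x := by
  induction t with
  | zero => simp at hk
  | one => simp at hk
  | psi i a ih =>
    simp only [W_psi] at h
    have hi : i = 0 ∨ i = 1 := by omega
    rcases hi with rfl | rfl
    · simp at hk
    · rw [kd_psi1] at hk
      split at hk
      · rw [fd_psi_0 ‹_›]; rw [kd_eq_zero h.2] at *; subst_vars; simp [normN]; omega
      · split at hk
        · omega
        · rw [fd_psi1_3 hk]; have := ih h.2 hk; simp only [normN]; omega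
  | add a b _ ih =>
    simp only [W_add] at h
    have := ih h.2.2.1 hk; rw [fd_add, normN_cons, normN]; omega

theorem norm_zz {a} (h : W a) (h0 : kd a = 3) (n) : normN (zz (fd a) n) = n * normN a := by
  induction n with
  | zero => simp [normN]
  | succ n ih =>
    have := norm_k3 a (zz (fd a) n) h h0
    rw [zz_succ, normN, Nat.add_comm, this, ih]; ring

theorem normN_pos {t} (h : W t) (h0 : t ≠ zero) : 1 ≤ normN t := by
  induction t with
  | zero => simp at h0
  | one => simp [normN]
  | psi i a => simp [normN]
  | add a b _ ih => simp at h; have := ih h.2.2.1 h.2.2.2.1; simp only [normN]; omega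

theorem norm_k2 (t : Tm) (n) (h : W t) (hk : kd t = 2) (hn : 2 ≤ n) :
    normN t ≤ normN (fd t (nm n)) := by
  induction t with
  | zero => simp at hk
  | one => simp at hk
  | add a b _ ih =>
    simp only [W_add] at h
    have := ih h.2.2.1 hk; rw [fd_add, normN_cons, normN]; omega
  | psi i a ih =>
    simp only [W_psi] at h
    obtain h0 | h0 | h0 | h0 := kd_split a
    · rw [fd_psi_0 h0]; rw [kd_eq_zero h.2] at h0; subst h0; simp [normN]; omega
    · rw [fd_psi_1 h0, tmToNat_nm, normN_rep, normN, normN, norm_k1 a h0]; nlinarith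
    · rw [fd_psi_2 h0, normN, normN]; have := ih h.2 h0; omega
    · have hi : i = 0 := by
        by_contra hi
        obtain rfl : i = 1 := by omega
        simp [kd_psi1, h0] at hk
      subst hi
      have : a ≠ zero := by rintro rfl; simp at h0
      have := normN_pos h.2 this
      rw [fd_psi0_3 h0, norm_zz h.2 h0, tmToNat_nm, normN]; nlinarith

/-! link to frozen functions -/
theorem addT_cons {a t} (ha : IsPrincipal a) (h : hd t ≤ a) : addT a t = cons a t := by
  have hn : ¬ TLt a (hd t) := fun h' => absurd (TLt_lt h') (not_lt.2 h)
  cases a <;> simp at ha <;> cases t <;> simp_all [addT, cons]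

theorem mulNat_rep {a} (ha : IsPrincipal a) (n) : mulNat a n = rep a n := by
  have key : ∀ n, addT (rep a n) a = rep a (n + 1) := by
    intro n
    induction n with
    | zero => cases a <;> simp [addT, rep_succ]
    | succ n ih =>
      have hn : ¬ TLt a a := fun h' => absurd (TLt_lt h') (lt_irrefl _)
      have hhd : hd a = a := by cases a <;> simp_all
      by_cases h0 : rep a n = zero
      · rw [rep_eq_zero ha] at h0; subst h0
        rw [rep_succ, rep_zero, cons_zero, rep_succ, rep_succ, rep_zero, cons_zero]
        exact addT_cons ha (by rw [hhd])
      · rw [rep_succ a n, cons_nz _ h0]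
        have : addT (add a (rep a n)) a = add a (addT (rep a n) a) := by
          cases a <;> simp at ha <;> simp_all [addT]
        rw [this, ih, rep_succ a (n+1), cons_nz]
        rw [Ne, rep_eq_zero ha]; omega
  induction n with
  | zero => rfl
  | succ n ih => rw [mulNat, ih, key]

def tpOf : ℕ → Tm
  | 0 => zero
  | 1 => one
  | 2 => omegaT
  | _ => OmegaT

theorem tp_kd (t) (h : W t) : tp t = tpOf (kd t) := by
  induction t with
  | zero => rfl
  | one => rfl
  | add a b _ ih => simp only [W_add] at h; rw [tp, ih h.2.2.1, kd_add]
  | psi i a ih =>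
    simp only [W_psi] at h
    have hi : i = 0 ∨ i = 1 := by omega
    rw [tp, ih h.2]
    obtain h0 | h0 | h0 | h0 := kd_split a <;> rcases hi with rfl | rfl <;>
      simp [h0, kd_psi1, tpOf, omegaT, OmegaT, Omega2T]

theorem fund_fd (t : Tm) : ∀ x, W t → Adm t x → fund t x = fd t x := by
  induction t with
  | zero => intro x _ _; rw [fund]; rfl
  | one => intro x _ _; rw [fund]; rfl
  | add a b _ ih =>
    intro x h hx
    simp only [W_add] at h
    rw [fund, ih x h.2.2.1 hx, addT_cons h.1 ((fd_hd h.2.2.1 hx).trans h.2.2.2.2), fd_add]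
  | psi i a ih =>
    intro x h hx
    simp only [W_psi] at h
    have hi : i = 0 ∨ i = 1 := by omega
    rw [fund, tp_kd a h.2]
    obtain h0 | h0 | h0 | h0 := kd_split a
    · simp [h0, tpOf, fd_psi_0 h0]
    · simp only [h0, tpOf, fd_psi_1 h0, mulNat_rep (pr_psi _ _)]
      simp [ih zero h.2 (Adm.w _ _ (by omega))]
    · rw [fd_psi_2 h0, ← ih x h.2 (adm_psi2 h0 hx)]
      simp [h0, tpOf, omegaT, OmegaT, Omega2T]
    · rcases hi with rfl | rfl
      · rw [fd_psi0_3 h0, zz_succ]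
        have key : ∀ n, (Nat.rec (motive := fun _ => Tm) Tm.zero
            (fun _ ih => Tm.psi 0 (fund a ih)) n) = zz (fd a) n := by
          intro n
          induction n with
          | zero => rfl
          | succ n ihn => simp only [ihn]; rw [zz_succ, ih _ h.2 (zz_adm h.2 h0 n)]
        simp [h0, tpOf, OmegaT]
        rw [key, ih _ h.2 (zz_adm h.2 h0 _)]
      · rw [fd_psi1_3 h0, ← ih x h.2 (adm_psi3 h0 hx)]
        simp [h0, tpOf, omegaT, OmegaT, Omega2T]
end GB

namespace GB
open Tm

inductive Emb : Tm → Tm → Prop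
  | zero (d) : Emb zero d
  | one : Emb one one
  | psi (i) {c d} : Emb c d → Emb (psi i c) (psi i d)
  | add {a b c d} : Emb a b → Emb c d → Emb (add a c) (add b d)
  | left {a b} (d) : Emb a b → Emb a (add b d)
  | right {c d} (b) : Emb c d → Emb c (add b d)

theorem Emb.refl (a : Tm) : Emb a a := by
  induction a with
  | zero => exact .zero _
  | one => exact .one
  | psi i a ih => exact .psi i ih
  | add a b iha ihb => exact .add iha ihb

theorem Emb.norm {a b} (h : Emb a b) : normN a ≤ normN b := by
  induction h <;> simp_all [normN] <;> omega

theorem emb_zero {a} (h : Emb a zero) : a = zero := by cases h; rfl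

theorem Emb.eq_of_norm {a b} (h : Emb a b) (hb : W b) : normN a = normN b → a = b := by
  induction h with
  | zero d =>
    intro hn; by_contra h0
    have := normN_pos hb (Ne.symm h0); simp [normN] at hn; omega
  | one => simp
  | psi i h ih => intro hn; simp [normN] at hn; rw [ih (by simpa using hb.2) hn]
  | @add a b c d h1 h2 ih1 ih2 =>
    intro hn
    have := h1.norm; have := h2.norm
    simp only [normN, W_add] at hn hb
    rw [ih1 hb.2.1 (by omega), ih2 hb.2.2.1 (by omega)]
  | @left a b d h1 ih =>
    intro hn
    have := h1.norm
    simp only [normN, W_add] at hn hb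
    have := normN_pos hb.2.2.1 hb.2.2.2.1
    omega
  | @right c d b h1 ih =>
    intro hn
    have := h1.norm
    simp only [normN, W_add] at hn hb
    have := normN_pos hb.2.1 (pr_ne_zero hb.1)
    omega

theorem emb_cons_left {a b} (d) (h : Emb a b) : Emb a (cons b d) := by
  unfold cons; split
  · exact h
  · exact .left _ h
theorem emb_cons_right {c d} (b) (h : Emb c d) : Emb c (cons b d) := by
  unfold cons; split
  · subst_vars; rw [emb_zero h]; exact .zero _
  · exact .right _ h
theorem emb_cons {a b c d} (h1 : Emb a b) (h2 : Emb c d) : Emb (cons a c) (cons b d) := by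
  by_cases hc : c = zero
  · subst hc; rw [cons_zero]; exact emb_cons_left _ h1
  · have hd : d ≠ zero := by rintro rfl; exact hc (emb_zero h2)
    rw [cons_nz _ hc, cons_nz _ hd]; exact .add h1 h2
theorem emb_rep {a b} (h : Emb a b) {n m} (hn : n ≤ m) : Emb (rep a n) (rep b m) := by
  induction n generalizing m with
  | zero => exact .zero _
  | succ n ih =>
    cases m with
    | zero => omega
    | succ m => exact emb_cons h (ih (by omega))
theorem emb_nm {n m} : Emb (nm n) (nm m) ↔ n ≤ m := by
  constructor
  · intro h; simpa using h.norm
  · intro h; exact emb_rep .one h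

theorem fd_k1 {t} (x y) (h : kd t ≤ 1) : fd t x = fd t y := by
  induction t with
  | zero => rfl
  | one => rfl
  | psi i a => have := kd_psi_ge i a; omega
  | add a b _ ih => rw [fd_add, fd_add, ih h]

theorem kd_psi_congr {i a b} (hi : i ≤ 1) (h : kd a = kd b) : kd (psi i a) = kd (psi i b) := by
  have hi : i = 0 ∨ i = 1 := by omega
  rcases hi with rfl | rfl <;> simp [kd_psi1, h]

def SI (a b : Tm) : Prop := ∀ w, Adm b w → w ≠ zero → Emb a (fd b w)
def SII (a b : Tm) : Prop := kd a = kd b ∧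
  (∀ w w', Adm b w → Adm b w' → Emb w w' → Emb (fd a w) (fd b w')) ∧
  (normN a < normN b → ∀ w, Adm b w → w ≠ zero → normN (fd a w) < normN (fd b w))

theorem lemS {a b} (h : Emb a b) : W a → W b → b ≠ zero → SI a b ∨ SII a b := by
  induction h with
  | zero d => intro _ _ _; left; intro w _ _; exact .zero _
  | one => intro _ _ _; right; exact ⟨rfl, fun _ _ _ _ _ => .zero _, by simp⟩
  | @psi i c d h ih =>
    intro ha hb _
    simp only [W_psi] at ha hb
    by_cases hd0 : d = zero
    · subst hd0
      have := emb_zero h; subst this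
      right
      refine ⟨rfl, fun w w' _ _ hw => ?_, by simp⟩
      rwa [fd_psi_0 rfl, fd_psi_0 rfl]
    have hi : i = 0 ∨ i = 1 := by omega
    have hk : kd d ≠ 0 := by rwa [Ne, kd_eq_zero hb.2]
    rcases ih ha.2 hb.2 hd0 with hI | hII
    · left
      intro w hw hw0
      obtain h0 | h0 | h0 | h0 := kd_split d
      · omega
      · obtain ⟨n, rfl⟩ := hw.1 (by rcases hi with rfl | rfl <;> simp [kd_psi1, h0])
        rw [fd_psi_1 h0, tmToNat_nm]
        cases n with
        | zero => simp at hw0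
        | succ n =>
          rw [rep_succ]
          apply emb_cons_left
          apply Emb.psi
          rw [fd_k1 zero one (by omega)]
          exact hI one (Adm.w _ _ (by omega)) (by simp)
      · rw [fd_psi_2 h0]
        exact .psi _ (hI w (adm_psi2 h0 hw) hw0)
      · rcases hi with rfl | rfl
        · obtain ⟨n, rfl⟩ := hw.1 rfl
          rw [fd_psi0_3 h0, tmToNat_nm, zz_succ]
          cases n with
          | zero => simp at hw0
          | succ n => exact .psi _ (hI _ (zz_adm hb.2 h0 _) (by simp [zz_succ]))
        · rw [fd_psi1_3 h0]
          exact .psi _ (hI w (adm_psi3 h0 hw) hw0)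
    · right
      obtain ⟨h1, h2, h3⟩ := hII
      refine ⟨kd_psi_congr ha.1 h1, ?_⟩
      obtain h0 | h0 | h0 | h0 := kd_split d
      · omega
      · have hk2 : kd (psi i d) = 2 := by rcases hi with rfl | rfl <;> simp [kd_psi1, h0]
        have hc0 := h1.trans h0
        constructor
        · intro w w' hw hw' hww
          obtain ⟨n, rfl⟩ := hw.1 hk2
          obtain ⟨m, rfl⟩ := hw'.1 hk2
          rw [fd_psi_1 h0, fd_psi_1 hc0, tmToNat_nm, tmToNat_nm]
          exact emb_rep (.psi _ (h2 _ _ (Adm.w _ _ (by omega)) (Adm.w _ _ (by omega)) (.zero _)))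
            (emb_nm.1 hww)
        · intro hn w hw hw0
          obtain ⟨n, rfl⟩ := hw.1 hk2
          rw [fd_psi_1 h0, fd_psi_1 hc0, tmToNat_nm, normN_rep, normN_rep, normN, normN]
          have e1 := norm_k1 _ h0
          have e2 := norm_k1 _ hc0
          simp only [normN] at hn
          have : n ≠ 0 := by rintro rfl; simp at hw0
          apply Nat.mul_lt_mul_of_pos_left _ (by omega)
          omega
      · have hc0 := h1.trans h0
        constructor
        · intro w w' hw hw' hww
          rw [fd_psi_2 h0, fd_psi_2 hc0]
          exact .psi _ (h2 _ _ (adm_psi2 h0 hw) (adm_psi2 h0 hw') hww)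
        · intro hn w hw hw0
          simp only [normN] at hn
          have := h3 (by omega) w (adm_psi2 h0 hw) hw0
          rw [fd_psi_2 h0, fd_psi_2 hc0]; simp only [normN]; omega
      · have hc0 := h1.trans h0
        rcases hi with rfl | rfl
        · constructor
          · intro w w' hw hw' hww
            obtain ⟨n, rfl⟩ := hw.1 rfl
            obtain ⟨m, rfl⟩ := hw'.1 rfl
            rw [fd_psi0_3 h0, fd_psi0_3 hc0, tmToNat_nm, tmToNat_nm]
            rw [emb_nm] at hww
            have key : ∀ n m, n ≤ m → Emb (zz (fd c) n) (zz (fd d) m) := by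
              intro n
              induction n with
              | zero => intros; exact .zero _
              | succ n ihn =>
                intro m hm
                cases m with
                | zero => omega
                | succ m =>
                  exact .psi _ (h2 _ _ (adm3 h0 (zz_W ha.2 hc0 _) (zz_lt_Omega _ _))
                    (zz_adm hb.2 h0 _) (ihn m (by omega)))
            exact key _ _ (by omega)
          · intro hn w hw hw0
            rw [fd_psi0_3 h0, fd_psi0_3 hc0, norm_zz ha.2 hc0, norm_zz hb.2 h0]
            simp only [normN] at hn
            exact Nat.mul_lt_mul_of_pos_left (by omega) (by omega)
        · constructor
          · intro w w' hw hw' hww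
            rw [fd_psi1_3 h0, fd_psi1_3 hc0]
            exact .psi _ (h2 _ _ (adm_psi3 h0 hw) (adm_psi3 h0 hw') hww)
          · intro hn w hw hw0
            simp only [normN] at hn
            have := h3 (by omega) w (adm_psi3 h0 hw) hw0
            rw [fd_psi1_3 h0, fd_psi1_3 hc0]; simp only [normN]; omega
  | @add a b c d h1 h2 _ ih =>
    intro ha hb _
    simp only [W_add] at ha hb
    rcases ih ha.2.2.1 hb.2.2.1 hb.2.2.2.1 with hI | ⟨k1, k2, k3⟩
    · left
      intro w hw hw0
      have := hI w hw hw0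
      rw [fd_add, ← cons_nz _ ha.2.2.2.1]
      exact emb_cons h1 this
    · right
      refine ⟨k1, fun w w' hw hw' hww => ?_, fun hn w hw hw0 => ?_⟩
      · exact emb_cons h1 (k2 w w' hw hw' hww)
      · rw [fd_add, fd_add, normN_cons, normN_cons]
        simp only [normN] at hn
        have e1 := h1.norm
        have e2 := h2.norm
        by_cases hcd : normN c = normN d
        · rw [h2.eq_of_norm hb.2.2.1 hcd]; omega
        · have := k3 (by omega) w hw hw0; omega
  | @left a b d h ih => intro _ _ _; left; intro w _ _; exact emb_cons_left _ h
  | @right c d b h ih =>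
    intro ha hb _
    simp only [W_add] at hb
    rcases ih ha hb.2.2.1 hb.2.2.2.1 with hI | ⟨k1, k2, k3⟩
    · left; intro w hw hw0; exact emb_cons_right _ (hI w hw hw0)
    · right
      refine ⟨k1, fun w w' hw hw' hww => emb_cons_right _ (k2 w w' hw hw' hww),
        fun hn w hw hw0 => ?_⟩
      have := (k2 w w hw hw (Emb.refl _)).norm
      have := normN_pos hb.2.1 (pr_ne_zero hb.1)
      rw [fd_add, normN_cons]; omega

/-! G0 -/
@[simp] theorem G0_zero : G0 zero = ∅ := by simp [G0]
@[simp] theorem G0_one : G0 one = ∅ := by simp [G0]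
@[simp] theorem G0_psi0 (b) : G0 (psi 0 b) = insert b (G0 b) := by simp [G0]
@[simp] theorem G0_psi1 (b) : G0 (psi 1 b) = G0 b := by simp [G0]
@[simp] theorem G0_add (a b) : G0 (add a b) = G0 a ∪ G0 b := by simp [G0]
@[simp] theorem G0_cons (a b) : G0 (cons a b) = G0 a ∪ G0 b := by
  unfold cons; split <;> simp_all

theorem G0_W {a : Tm} : W a → ∀ {γ}, γ ∈ G0 a → W γ ∧ G0 γ ⊆ G0 a ∧ normN γ < normN a := by
  induction a with
  | zero => simp
  | one => simp
  | psi i a ih =>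
    intro h γ hγ
    simp only [W_psi] at h
    have hi : i = 0 ∨ i = 1 := by omega
    rcases hi with rfl | rfl
    · simp at hγ
      rcases hγ with rfl | hγ
      · exact ⟨h.2, by simp, by simp [normN]⟩
      · obtain ⟨h1, h2, h3⟩ := ih h.2 hγ
        exact ⟨h1, by rw [G0_psi0]; exact h2.trans (Finset.subset_insert _ _), by simp [normN]; omega⟩
    · simp at hγ
      obtain ⟨h1, h2, h3⟩ := ih h.2 hγ
      exact ⟨h1, by rwa [G0_psi1], by simp [normN]; omega⟩
  | add a b iha ihb =>
    intro h γ hγ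
    simp only [W_add] at h
    simp at hγ
    rcases hγ with hγ | hγ
    · obtain ⟨h1, h2, h3⟩ := iha h.2.1 hγ
      exact ⟨h1, by rw [G0_add]; exact h2.trans Finset.subset_union_left, by simp [normN]; omega⟩
    · obtain ⟨h1, h2, h3⟩ := ihb h.2.2.1 hγ
      exact ⟨h1, by rw [G0_add]; exact h2.trans Finset.subset_union_right, by simp [normN]; omega⟩

def O (a : Tm) : Prop := W a ∧ ∀ γ ∈ G0 a, ∀ δ ∈ G0 γ, δ < γ
theorem O.w {a} (h : O a) : W a := h.1
theorem O_zero : O zero := ⟨by simp, by simp⟩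
theorem O_one : O one := ⟨by simp, by simp⟩
theorem O_nm (n) : O (nm n) := by
  refine ⟨by simp, ?_⟩
  have : G0 (nm n) = ∅ := by
    induction n with
    | zero => simp
    | succ n ih => rw [nm, rep_succ, G0_cons]; simp [nm] at ih; simp [ih]
  simp [this]
theorem O_psi0 {a} : O (psi 0 a) ↔ O a ∧ ∀ γ ∈ G0 a, γ < a := by
  simp only [O, W_psi, G0_psi0, Finset.mem_insert, forall_eq_or_imp]; tauto
theorem O_psi1 {a} : O (psi 1 a) ↔ O a := by simp [O]
theorem O_psi {i a} (h : O (psi i a)) : O a := by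
  have hw := h.1
  simp only [W_psi] at hw
  have hi : i = 0 ∨ i = 1 := by omega
  rcases hi with rfl | rfl
  · exact (O_psi0.1 h).1
  · exact O_psi1.1 h
theorem O_cons {a t} (ha : IsPrincipal a) : O (cons a t) ↔ O a ∧ O t ∧ hd t ≤ a := by
  simp only [O, W_cons ha, G0_cons, Finset.mem_union]
  constructor
  · rintro ⟨⟨h1, h2, h3⟩, h4⟩
    exact ⟨⟨h1, fun γ h => h4 γ (Or.inl h)⟩, ⟨h2, fun γ h => h4 γ (Or.inr h)⟩, h3⟩
  · rintro ⟨⟨h1, h4⟩, ⟨h2, h5⟩, h3⟩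
    exact ⟨⟨h1, h2, h3⟩, fun γ h => h.elim (h4 γ) (h5 γ)⟩
theorem O_add {a b} : O (add a b) ↔ IsPrincipal a ∧ O a ∧ O b ∧ b ≠ zero ∧ hd b ≤ a := by
  constructor
  · intro h
    have hw := h.1
    rw [add_eq_cons hw] at h
    simp only [W_add] at hw
    rw [O_cons hw.1] at h; tauto
  · rintro ⟨h1, h2, h3, h4, h5⟩
    rw [← cons_nz _ h4, O_cons h1]; tauto
theorem O.eq_cons {t} (h : O t) (h0 : t ≠ zero) :
    ∃ a s, t = cons a s ∧ IsPrincipal a ∧ O a ∧ O s ∧ hd s ≤ a := by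
  obtain ⟨a, s, rfl, ha, -⟩ := h.1.eq_cons h0
  exact ⟨a, s, rfl, ha, by rwa [O_cons ha] at h⟩
theorem O.g0 {a γ} (h : O a) (hγ : γ ∈ G0 a) : O γ ∧ ∀ δ ∈ G0 γ, δ < γ := by
  obtain ⟨h1, h2, -⟩ := G0_W h.1 hγ
  exact ⟨⟨h1, fun δ hδ => h.2 δ (h2 hδ)⟩, h.2 γ hγ⟩

/-- sandwich for `psi` -/
theorem sand {i c a γ} (hγ : W γ) (h1 : psi i c ≤ γ) (h2 : γ < psi i a) :
    ∃ d s, γ = cons (psi i d) s ∧ c ≤ d ∧ d < a := by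
  have h0 : γ ≠ zero := by rintro rfl; simp at h1
  obtain ⟨p, s, rfl, hp, -⟩ := hγ.eq_cons h0
  rw [← cons_zero (psi i c), cons_le_cons (by simp) hp] at h1
  rw [← cons_zero (psi i a), cons_lt_cons hp (by simp)] at h2
  have h2' : p < psi i a := by simpa using h2
  have h1' : psi i c ≤ p := by rcases h1 with h | h; exacts [h.le, h.1.le]
  cases p with
  | zero => simp at hp
  | one => simp at h1'
  | add => simp at hp
  | psi j d =>
    simp at h1' h2'
    have : j = i := by omega
    subst this
    exact ⟨d, s, rfl, by simpa using h1', by simpa using h2'⟩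

theorem sand_add {a b t γ} (hw : W (add a b)) (hγ : W γ) (h1 : cons a t ≤ γ) (h2 : γ < add a b) :
    ∃ s, γ = cons a s ∧ t ≤ s ∧ s < b ∧ W s := by
  have ha : IsPrincipal a := by simp at hw; exact hw.1
  have h0 : γ ≠ zero := by rintro rfl; simp at h1; exact cons_ne_zero ha h1
  obtain ⟨p, s, rfl, hp, -, hs, -⟩ := hγ.eq_cons h0
  rw [add_eq_cons hw, cons_lt_cons hp ha] at h2
  rw [cons_le_cons ha hp] at h1
  rcases h1 with h1 | ⟨rfl, h1⟩ <;> rcases h2 with h2 | ⟨h3, h2⟩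
  · exact absurd (h1.trans h2) (lt_irrefl _)
  · subst h3; exact absurd h1 (lt_irrefl _)
  · exact absurd h2 (lt_irrefl _)
  · exact ⟨s, rfl, h1, h2, hs⟩

theorem BEO (μ : Tm) : ∀ γ z, W μ → kd μ = 3 → W γ → W z → z < psi 1 zero → fd μ z ≤ γ → γ < μ →
    ∃ β, W β ∧ β < psi 1 zero ∧ z ≤ β ∧ G0 β ⊆ G0 γ ∧ ∀ z0, Emb z0 β → Emb (fd μ z0) γ := by
  induction μ with
  | zero => simp
  | one => simp
  | psi i a ih =>
    intro γ z hμ hk hγ hz hz1 h1 h2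
    simp only [W_psi] at hμ
    have hi : i = 0 ∨ i = 1 := by omega
    rcases hi with rfl | rfl
    · simp at hk
    obtain h0 | h0 | h0 | h0 := kd_split a <;> rw [kd_psi1, h0] at hk <;> simp at hk
    · rw [kd_eq_zero hμ.2] at h0; subst h0
      rw [fd_psi_0 rfl] at h1
      exact ⟨γ, hγ, h2, h1, le_rfl, fun z0 hz0 => by rwa [fd_psi_0 rfl]⟩
    · rw [fd_psi1_3 h0] at h1
      obtain ⟨d, s, rfl, hd1, hd2⟩ := sand hγ h1 h2
      rw [W_cons (by simp)] at hγ
      obtain ⟨β, b1, b2, b3, b4, b5⟩ := ih d z hμ.2 h0 (by simpa using hγ.1.2) hz hz1 hd1 hd2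
      refine ⟨β, b1, b2, b3, ?_, fun z0 hz0 => ?_⟩
      · rw [G0_cons, G0_psi1]; exact b4.trans Finset.subset_union_left
      · rw [fd_psi1_3 h0]; exact emb_cons_left _ (.psi _ (b5 z0 hz0))
  | add a b _ ih =>
    intro γ z hμ hk hγ hz hz1 h1 h2
    obtain ⟨s, rfl, hs1, hs2, hs⟩ := sand_add hμ hγ h1 h2
    simp only [W_add] at hμ
    obtain ⟨β, b1, b2, b3, b4, b5⟩ := ih s z hμ.2.2.1 hk hs hz hz1 hs1 hs2
    refine ⟨β, b1, b2, b3, ?_, fun z0 hz0 => emb_cons (Emb.refl _) (b5 z0 hz0)⟩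
    rw [G0_cons]; exact b4.trans Finset.subset_union_right

theorem rep_emb {p : Tm} (hp : IsPrincipal p) (n) : ∀ s, W s → hd s ≤ p → rep p n ≤ s →
    Emb (rep p n) s := by
  induction n with
  | zero => intros; exact .zero _
  | succ n ih =>
    intro s hs h1 h2
    have h0 : s ≠ zero := by rintro rfl; simp [rep_succ, cons_ne_zero hp] at h2
    obtain ⟨q, t, rfl, hq, -, ht, htq⟩ := hs.eq_cons h0
    rw [hd_cons _ _ hq] at h1
    rw [rep_succ, cons_le_cons hp hq] at h2
    rcases h2 with h2 | ⟨rfl, h2⟩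
    · exact absurd h2 (not_lt.2 h1)
    · exact emb_cons (Emb.refl _) (ih t ht htq h2)

theorem BE3 {a : Tm} (ha : W a) (h0 : kd a = 3) (n) : ∀ c, O c → (∀ γ ∈ G0 c, γ < c) →
    fd a (zz (fd a) n) ≤ c → c < a → Emb (fd a (zz (fd a) n)) c := by
  induction n with
  | zero =>
    intro c hc hg h1 h2
    obtain ⟨β, b1, b2, b3, b4, b5⟩ := BEO a c _ ha h0 hc.1 (zz_W ha h0 _) (zz_lt_Omega _ _) h1 h2
    exact b5 _ (.zero _)
  | succ n ih =>
    intro c hc hg h1 h2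
    obtain ⟨β, b1, b2, b3, b4, b5⟩ := BEO a c _ ha h0 hc.1 (zz_W ha h0 _) (zz_lt_Omega _ _) h1 h2
    apply b5
    rw [zz_succ] at b3 ⊢
    have hb0 : β ≠ zero := by rintro rfl; simp at b3
    obtain ⟨p, s, rfl, hp, hpw, -⟩ := b1.eq_cons hb0
    rw [lt_psi_iff, hd_cons _ _ hp] at b2
    rw [← cons_zero (psi 0 _), cons_le_cons (by simp) hp] at b3
    have b3' : psi 0 (fd a (zz (fd a) n)) ≤ p := by rcases b3 with h | h; exacts [h.le, h.1.le]
    cases p with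
    | zero => simp at hp
    | one => simp at b3'
    | add => simp at hp
    | psi j d =>
      have : j = 0 := by simp at b2; exact b2
      subst this
      simp at b3'
      have hd : d ∈ G0 c := b4 (by simp)
      exact emb_cons_left _ (.psi _ (ih d (hc.g0 hd).1 (hc.g0 hd).2 b3' ((hg d hd).trans h2)))

theorem BE2 (δ : Tm) : ∀ α n, W δ → kd δ = 2 → O α → fd δ (nm n) ≤ α → α < δ →
    Emb (fd δ (nm n)) α := by
  induction δ with
  | zero => simp
  | one => simp
  | psi i a ih =>
    intro α n hδ hk hα h1 h2
    simp only [W_psi] at hδ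
    have hi : i = 0 ∨ i = 1 := by omega
    obtain h0 | h0 | h0 | h0 := kd_split a
    · rw [fd_psi_0 h0] at h1 ⊢
      rw [kd_eq_zero hδ.2] at h0; subst h0
      rcases hi with rfl | rfl
      · apply rep_emb (by simp) _ _ hα.1 _ h1
        rw [lt_psi_iff] at h2
        by_cases hz : α = zero
        · subst hz; simp
        have := hα.1.hd_pr hz
        revert this h2
        cases hd α <;> simp
      · simp [kd_psi1] at hk
    · rw [fd_psi_1 h0, tmToNat_nm] at h1 ⊢
      cases n with
      | zero => exact .zero _
      | succ n =>
        have h1' : psi i (fd a zero) ≤ α := by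
          refine le_trans ?_ h1
          rw [rep_succ]; conv_lhs => rw [← cons_zero (psi i _)]
          rw [cons_le_cons (by simp) (by simp)]; simp
        obtain ⟨d, s, rfl, hd1, hd2⟩ := sand hα.1 h1' h2
        have hw := hα.1
        rw [W_cons (by simp)] at hw
        have := pred_le a d hδ.2 (by simpa using hw.1.2) h0 hd2
        have hda : d = fd a zero := le_antisymm this hd1
        subst hda
        exact rep_emb (by simp) _ _ hα.1 (by rw [hd_cons _ _ (by simp)]) h1
    · rw [fd_psi_2 h0] at h1 ⊢
      obtain ⟨d, s, rfl, hd1, hd2⟩ := sand hα.1 h1 h2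
      rw [O_cons (by simp)] at hα
      exact emb_cons_left _ (.psi _ (ih d n hδ.2 h0 (O_psi hα.1) hd1 hd2))
    · rcases hi with rfl | rfl
      · rw [fd_psi0_3 h0, zz_succ] at h1 ⊢
        obtain ⟨d, s, rfl, hd1, hd2⟩ := sand hα.1 h1 h2
        rw [O_cons (by simp), O_psi0] at hα
        exact emb_cons_left _ (.psi _ (BE3 hδ.2 h0 _ d hα.1.1 hα.1.2 hd1 hd2))
      · simp [kd_psi1, h0] at hk
  | add a b _ ih =>
    intro α n hδ hk hα h1 h2
    obtain ⟨s, rfl, hs1, hs2, hs⟩ := sand_add hδ hα.1 h1 h2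
    simp only [W_add] at hδ
    rw [O_cons hδ.1] at hα
    exact emb_cons (Emb.refl _) (ih s n hδ.2.2.1 hk hα.2.1 hs1 hs2)
end GB

namespace GB
open Tm

theorem G0_rep (p n) {ζ} (h : ζ ∈ G0 (rep p n)) : ζ ∈ G0 p := by
  induction n with
  | zero => simp at h
  | succ n ih => rw [rep_succ, G0_cons] at h; simp at h; tauto
@[simp] theorem G0_nm (n) : G0 (nm n) = ∅ := by
  ext ζ; constructor
  · intro h; have := G0_rep _ _ h; simp at this
  · simp

theorem dom (δ : Tm) : ∀ x, W δ → Adm δ x → ∀ ζ ∈ G0 (fd δ x),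
    (∃ ξ ∈ G0 δ, ζ ≤ ξ) ∨ (kd δ = 3 ∧ ζ ∈ G0 x) := by
  induction δ with
  | zero => simp
  | one => simp
  | add a b _ ih =>
    intro x h hx ζ hζ
    simp only [W_add] at h
    rw [fd_add, G0_cons] at hζ
    simp only [Finset.mem_union] at hζ
    simp only [G0_add, Finset.mem_union, kd_add]
    rcases hζ with h1 | h1
    · left; exact ⟨ζ, Or.inl h1, le_rfl⟩
    · rcases ih x h.2.2.1 hx ζ h1 with ⟨ξ, h2, h3⟩ | h2
      · left; exact ⟨ξ, Or.inr h2, h3⟩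
      · right; exact h2
  | psi i a ih =>
    intro x h hx ζ hζ
    simp only [W_psi] at h
    have hi : i = 0 ∨ i = 1 := by omega
    obtain h0 | h0 | h0 | h0 := kd_split a
    · rw [fd_psi_0 h0] at hζ
      rcases hi with rfl | rfl
      · obtain ⟨n, rfl⟩ := hx.1 rfl; simp at hζ
      · right; exact ⟨by simp [kd_psi1, h0], hζ⟩
    · left
      rw [fd_psi_1 h0] at hζ
      have hζ := G0_rep _ _ hζ
      have hA : Adm a zero := Adm.w _ _ (by omega)
      have ha0 : a ≠ zero := by rintro rfl; simp at h0
      have := ih zero h.2 hA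
      rcases hi with rfl | rfl
      · simp at hζ
        rcases hζ with rfl | hζ
        · exact ⟨a, by simp, (fd_lt h.2 hA ha0).le⟩
        · rcases this ζ hζ with ⟨ξ, h1, h2⟩ | h1
          · exact ⟨ξ, by simp [h1], h2⟩
          · omega
      · simp at hζ
        rcases this ζ hζ with ⟨ξ, h1, h2⟩ | h1
        · exact ⟨ξ, by simp [h1], h2⟩
        · omega
    · left
      rw [fd_psi_2 h0] at hζ
      have hA := adm_psi2 h0 hx
      have ha0 : a ≠ zero := by rintro rfl; simp at h0
      have := ih x h.2 hA
      rcases hi with rfl | rfl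
      · simp at hζ
        rcases hζ with rfl | hζ
        · exact ⟨a, by simp, (fd_lt h.2 hA ha0).le⟩
        · rcases this ζ hζ with ⟨ξ, h1, h2⟩ | h1
          · exact ⟨ξ, by simp [h1], h2⟩
          · omega
      · simp at hζ
        rcases this ζ hζ with ⟨ξ, h1, h2⟩ | h1
        · exact ⟨ξ, by simp [h1], h2⟩
        · omega
    · have ha0 : a ≠ zero := by rintro rfl; simp at h0
      rcases hi with rfl | rfl
      · left
        rw [fd_psi0_3 h0] at hζ
        have key : ∀ n, ∀ ζ ∈ G0 (zz (fd a) n), ∃ ξ ∈ G0 (psi 0 a), ζ ≤ ξ := by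
          intro n
          induction n with
          | zero => simp
          | succ n ihn =>
            intro ζ hζ
            rw [zz_succ] at hζ
            have hA := zz_adm h.2 h0 n
            simp only [G0_psi0, Finset.mem_insert] at hζ
            rcases hζ with rfl | hζ
            · exact ⟨a, by simp, (fd_lt h.2 hA ha0).le⟩
            · rcases ih _ h.2 hA ζ hζ with ⟨ξ, h1, h2⟩ | h1
              · exact ⟨ξ, by simp [h1], h2⟩
              · exact ihn ζ h1.2
        exact key _ ζ hζ
      · rw [fd_psi1_3 h0] at hζ
        simp at hζ
        rcases ih x h.2 (adm_psi3 h0 hx) ζ hζ with ⟨ξ, h1, h2⟩ | h1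
        · left; exact ⟨ξ, by simp [h1], h2⟩
        · right; exact ⟨by simp [kd_psi1, h0], h1.2⟩

theorem O_rep {p} (hp : IsPrincipal p) (h : O p) (n) : O (rep p n) := by
  induction n with
  | zero => exact O_zero
  | succ n ih => rw [rep_succ, O_cons hp]; refine ⟨h, ih, ?_⟩; rw [hd_rep hp]; split <;> simp

theorem O_fd (t : Tm) : ∀ x, O t → Adm t x → O x → O (fd t x) := by
  induction t with
  | zero => intros; exact O_zero
  | one => intros; exact O_zero
  | add a b _ ih =>
    intro x h hx hox
    rw [O_add] at h
    rw [fd_add, O_cons h.1]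
    exact ⟨h.2.1, ih x h.2.2.1 hx hox, (fd_hd h.2.2.1.1 hx).trans h.2.2.2.2⟩
  | psi i a ih =>
    intro x h hx hox
    have hi : i = 0 ∨ i = 1 := by have := h.1; simp at this; omega
    have hoa := O_psi h
    obtain h0 | h0 | h0 | h0 := kd_split a
    · rwa [fd_psi_0 h0]
    · rw [fd_psi_1 h0]
      apply O_rep (by simp)
      have hA : Adm a zero := Adm.w _ _ (by omega)
      have := ih zero hoa hA O_zero
      rcases hi with rfl | rfl
      · rw [O_psi0] at h ⊢
        refine ⟨this, fun ζ hζ => ?_⟩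
        rcases dom a zero hoa.1 hA ζ hζ with ⟨ξ, h1, h2⟩ | h1
        · have hw := G0_W this.1 hζ
          have := pred_le a ζ hoa.1 hw.1 h0 (h2.trans_lt (h.2 ξ h1))
          rcases this.lt_or_eq with h3 | h3
          · exact h3
          · rw [← h3] at hw; omega
        · omega
      · rwa [O_psi1]
    · rw [fd_psi_2 h0]
      have hA := adm_psi2 h0 hx
      have := ih x hoa hA hox
      rcases hi with rfl | rfl
      · rw [O_psi0] at h ⊢
        obtain ⟨n, rfl⟩ := hx.1 rfl
        refine ⟨this, fun ζ hζ => ?_⟩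
        rcases dom a _ hoa.1 hA ζ hζ with ⟨ξ, h1, h2⟩ | h1
        · by_contra hc
          have := (BE2 a ζ n hoa.1 h0 (this.g0 hζ).1 (not_lt.1 hc) (h2.trans_lt (h.2 ξ h1))).norm
          have hw := G0_W ‹O (fd a (nm n))›.1 hζ
          omega
        · omega
      · rwa [O_psi1]
    · rcases hi with rfl | rfl
      · rw [fd_psi0_3 h0]
        rw [O_psi0] at h
        have key : ∀ n, O (zz (fd a) n) := by
          intro n
          induction n with
          | zero => exact O_zero
          | succ n ihn =>
            have hA := zz_adm hoa.1 h0 n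
            have := ih _ hoa hA ihn
            rw [zz_succ, O_psi0]
            refine ⟨this, fun ζ hζ => ?_⟩
            by_contra hc
            have hw := G0_W this.1 hζ
            rcases dom a _ hoa.1 hA ζ hζ with ⟨ξ, h1, h2⟩ | h1
            · have := (BE3 hoa.1 h0 n ζ (this.g0 hζ).1 (this.g0 hζ).2 (not_lt.1 hc)
                (h2.trans_lt (h.2 ξ h1))).norm
              omega
            · cases n with
              | zero => simp at h1
              | succ n =>
                have h1 := h1.2
                rw [zz_succ] at h1 ihn
                have hm := fd_mono a _ _ hoa.1 (zz_adm hoa.1 h0 n) (zz_adm hoa.1 h0 (n+1))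
                  (by omega) (zz_mono hoa.1 h0 (Nat.lt_succ_self n))
                rw [O_psi0] at ihn
                simp only [G0_psi0, Finset.mem_insert] at h1
                rcases h1 with rfl | h1
                · exact hc hm
                · exact hc ((ihn.2 _ h1).trans hm)
        exact key _
      · rw [fd_psi1_3 h0, O_psi1]
        exact ih x hoa (adm_psi3 h0 hx) hox

theorem O_fdn {t} (h : O t) (n) : O (fd t (nm n)) := O_fd t _ h (adm_nm t n) (O_nm n)
theorem O_fd0 {t} (h : O t) : O (fd t zero) := O_fdn h 0

/-! well-foundedness -/
def CO (a : Tm) : Prop := O a ∧ a < psi 1 zero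
theorem CO.w {a} (h : CO a) : W a := h.1.1

def rS (S : Tm → Prop) (a b : Tm) : Prop := S a ∧ a < b

theorem acc_zero (S) : Acc (rS S) zero := ⟨_, fun y h => absurd h.2 (not_lt_zero y)⟩
theorem acc_sum (S : Tm → Prop) (hSW : ∀ a, S a → W a)
    (hS : ∀ a t, IsPrincipal a → S (cons a t) → S a ∧ S t) {a : Tm} (ha : Acc (rS S) a) :
    IsPrincipal a → ∀ t, Acc (rS S) t → Acc (rS S) (cons a t) := by
  induction ha with
  | intro a ha iha =>
    intro hp t ht
    have small : ∀ n e, normN e ≤ n → S e → hd e < a → Acc (rS S) e := by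
      intro n
      induction n with
      | zero =>
        intro e hn he _
        have : e = zero := by
          by_contra h0; have := normN_pos (hSW e he) h0; omega
        rw [this]; exact acc_zero S
      | succ n ihn =>
        intro e hn he h1
        by_cases h0 : e = zero
        · rw [h0]; exact acc_zero S
        obtain ⟨b, s, rfl, hb, hbw, hsw, hs⟩ := (hSW e he).eq_cons h0
        have hS' := hS _ _ hb he
        rw [hd_cons _ _ hb] at h1
        rw [normN_cons] at hn
        have := normN_pos hbw (pr_ne_zero hb)
        exact iha b ⟨hS'.1, h1⟩ hb s (ihn s (by omega) hS'.2 (hs.trans_lt h1))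
    induction ht with
    | intro t ht iht =>
      refine ⟨_, fun e he => ?_⟩
      obtain ⟨he, hlt⟩ := he
      by_cases h0 : e = zero
      · rw [h0]; exact acc_zero S
      obtain ⟨b, s, rfl, hb, hbw, hsw, hs⟩ := (hSW e he).eq_cons h0
      have hS' := hS _ _ hb he
      rw [cons_lt_cons hb hp] at hlt
      rcases hlt with h1 | ⟨rfl, h1⟩
      · exact small _ _ le_rfl he (by rwa [hd_cons _ _ hb])
      · exact iht s ⟨hS'.2, h1⟩

theorem acc_one (S : Tm → Prop) (hSW : ∀ a, S a → W a) : Acc (rS S) one :=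
  ⟨_, fun y h => by rw [(hSW y h.1).lt_one h.2]; exact acc_zero S⟩

abbrev A0 := Acc (rS CO)

theorem CO_cons {a t} (ha : IsPrincipal a) : CO (cons a t) ↔ CO a ∧ CO t ∧ hd t ≤ a := by
  simp only [CO, O_cons ha]
  rw [lt_psi_iff, hd_cons _ _ ha, lt_psi_iff t]
  constructor
  · rintro ⟨⟨h1, h2, h3⟩, h4⟩; exact ⟨⟨h1, h4⟩, ⟨h2, h3.trans_lt h4⟩, h3⟩
  · tauto

theorem A0_sum {a t} (ha : A0 a) (hp : IsPrincipal a) (ht : A0 t) : A0 (cons a t) :=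
  acc_sum CO (fun _ h => h.w) (fun a t hp h => by rw [CO_cons hp] at h; tauto) ha hp t ht

def MC : Tm → Prop
  | .zero => True
  | .one => True
  | .psi 0 b => A0 (psi 0 b)
  | .psi (_ + 1) b => MC b
  | .add a b => MC a ∧ MC b

theorem MC_cons {a t} : MC (cons a t) ↔ MC a ∧ MC t := by
  unfold cons; split
  · subst_vars; simp [MC]
  · simp [MC]

def M (a : Tm) : Prop := O a ∧ MC a
theorem M_cons {a t} (ha : IsPrincipal a) (h : M (cons a t)) : M a ∧ M t := by
  obtain ⟨h1, h2⟩ := h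
  rw [O_cons ha] at h1
  rw [MC_cons] at h2
  exact ⟨⟨h1.1, h2.1⟩, ⟨h1.2.1, h2.2⟩⟩

theorem pr_countable {p} (hp : IsPrincipal p) (h : p < psi 1 zero) : p = one ∨ ∃ b, p = psi 0 b := by
  cases p <;> simp_all

theorem MC_A0 (n) : ∀ a, normN a ≤ n → O a → MC a → a < psi 1 zero → A0 a := by
  induction n with
  | zero =>
    intro a hn ha _ _
    have : a = zero := by by_contra h0; have := normN_pos ha.1 h0; omega
    rw [this]; exact acc_zero _
  | succ n ih =>
    intro a hn ha hm hlt
    by_cases h0 : a = zero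
    · rw [h0]; exact acc_zero _
    obtain ⟨b, s, rfl, hb, hbw, hsw, hs⟩ := ha.eq_cons h0
    rw [MC_cons] at hm
    rw [lt_psi_iff, hd_cons _ _ hb] at hlt
    rw [normN_cons] at hn
    have := normN_pos hbw.1 (pr_ne_zero hb)
    refine A0_sum ?_ hb (ih s (by omega) hsw hm.2 (by rw [lt_psi_iff]; exact hs.trans_lt hlt))
    rcases pr_countable hb hlt with rfl | ⟨c, rfl⟩
    · exact acc_one _ fun _ h => h.w
    · exact hm.1

abbrev A1 := Acc (rS M)
theorem A1_sum {a t} (ha : A1 a) (hp : IsPrincipal a) (ht : A1 t) : A1 (cons a t) :=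
  acc_sum M (fun _ h => h.1.1) (fun a t hp h => M_cons hp h) ha hp t ht

theorem A0_A1 {a} (h : A0 a) : CO a → A1 a := by
  induction h with
  | intro a _ ih =>
    intro ha
    refine ⟨_, fun e he => ?_⟩
    have : CO e := ⟨he.1.1, he.2.trans ha.2⟩
    exact ih e ⟨this, he.2⟩ this

theorem A1_psi1 {b} (h : A1 b) : A1 (psi 1 b) := by
  induction h with
  | intro b _ ih =>
    have small : ∀ n e, normN e ≤ n → M e → e < psi 1 b → A1 e := by
      intro n
      induction n with
      | zero =>
        intro e hn he _
        have : e = zero := by by_contra h0; have := normN_pos he.1.1 h0; omega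
        rw [this]; exact acc_zero _
      | succ n ihn =>
        intro e hn he h1
        by_cases h0 : e = zero
        · rw [h0]; exact acc_zero _
        obtain ⟨p, s, rfl, hp, hpw, hsw, hs⟩ := he.1.eq_cons h0
        have hS' := M_cons hp he
        rw [lt_psi_iff, hd_cons _ _ hp] at h1
        rw [normN_cons] at hn
        have := normN_pos hpw.1 (pr_ne_zero hp)
        refine A1_sum ?_ hp (ihn s (by omega) hS'.2 (by rw [lt_psi_iff]; exact hs.trans_lt h1))
        cases p with
        | zero => simp at hp
        | add => simp at hp
        | one => exact acc_one _ fun _ h => h.1.1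
        | psi i d =>
          simp at h1
          have hi : i = 0 ∨ i = 1 := by omega
          rcases hi with rfl | rfl
          · exact A0_A1 hS'.1.2 ⟨hpw, by simp⟩
          · have hd : M d := ⟨O_psi1.1 hpw, hS'.1.2⟩
            exact ih d ⟨hd, by simpa using h1⟩
    exact ⟨_, fun e he => small _ e le_rfl he.1 he.2⟩

theorem MC_of {c} (h : W c) : (∀ d ∈ G0 c, A0 (psi 0 d)) → MC c := by
  induction c with
  | zero => intro _; trivial
  | one => intro _; trivial
  | psi i a ih =>
    simp only [W_psi] at h
    have hi : i = 0 ∨ i = 1 := by omega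
    rcases hi with rfl | rfl
    · intro hd; exact hd a (by simp)
    · intro hd; exact ih h.2 (by simpa using hd)
  | add a b iha ihb =>
    intro hd
    simp only [W_add] at h
    exact ⟨iha h.2.1 fun d h => hd d (by simp [h]), ihb h.2.2.1 fun d h => hd d (by simp [h])⟩

theorem A0_psi0 {b} (h : A1 b) : A0 (psi 0 b) := by
  induction h with
  | intro b _ ih =>
    have small : ∀ n e, normN e ≤ n → CO e → e < psi 0 b → A0 e := by
      intro n
      induction n with
      | zero =>
        intro e hn he _
        have : e = zero := by by_contra h0; have := normN_pos he.1.1 h0; omega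
        rw [this]; exact acc_zero _
      | succ n ihn =>
        intro e hn he h1
        by_cases h0 : e = zero
        · rw [h0]; exact acc_zero _
        obtain ⟨p, s, rfl, hp, hpw, hsw, hs⟩ := he.1.eq_cons h0
        have hS' := (CO_cons hp).1 he
        rw [lt_psi_iff, hd_cons _ _ hp] at h1
        rw [normN_cons] at hn
        have := normN_pos hpw.1 (pr_ne_zero hp)
        refine A0_sum ?_ hp (ihn s (by omega) hS'.2.1 (by rw [lt_psi_iff]; exact hs.trans_lt h1))
        rcases pr_countable hp hS'.1.2 with rfl | ⟨c, rfl⟩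
        · exact acc_one _ fun _ h => h.w
        · simp at h1
          rw [O_psi0] at hpw
          have hMc : M c := ⟨hpw.1, MC_of hpw.1.1 fun d hd => by
            have hn' := (G0_W hpw.1.1 hd).2.2
            have := hpw.1.g0 hd
            refine ihn (psi 0 d) ?_ ⟨O_psi0.2 this, by simp⟩ (by simpa using (hpw.2 d hd).trans h1)
            simp only [normN] at hn ⊢; omega⟩
          exact ih c ⟨hMc, h1⟩
    exact ⟨_, fun e he => small _ e le_rfl he.1 he.2⟩

theorem O_A1 (a : Tm) : O a → MC a ∧ A1 a := by
  induction a with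
  | zero => intro _; exact ⟨trivial, acc_zero _⟩
  | one => intro _; exact ⟨trivial, acc_one _ fun _ h => h.1.1⟩
  | psi i a ih =>
    intro h
    have := h.1
    simp only [W_psi] at this
    have hi : i = 0 ∨ i = 1 := by omega
    have hh := ih (O_psi h)
    rcases hi with rfl | rfl
    · have := A0_psi0 hh.2
      exact ⟨this, A0_A1 this ⟨h, by simp⟩⟩
    · exact ⟨hh.1, A1_psi1 hh.2⟩
  | add a b iha ihb =>
    intro h
    rw [O_add] at h
    have h1 := iha h.2.1
    have h2 := ihb h.2.2.1
    refine ⟨⟨h1.1, h2.1⟩, ?_⟩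
    rw [← cons_nz _ h.2.2.2.1]
    exact A1_sum h1.2 h.1 h2.2

theorem CO_A0 {a} (h : CO a) : A0 a := MC_A0 _ a le_rfl h.1 (O_A1 a h.1).1 h.2

theorem co_ind {P : Tm → Prop} (h : ∀ a, CO a → (∀ b, CO b → b < a → P b) → P a) :
    ∀ a, CO a → P a := by
  intro a ha
  have := CO_A0 ha
  induction this with
  | intro a _ ih => exact h a ha fun b hb hlt => ih b ⟨hb, hlt⟩ hb
end GB

namespace GB
open Tm

theorem kd_co {a} (h : W a) (h1 : a < psi 1 zero) : kd a ≤ 2 := by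
  induction a with
  | zero => simp
  | one => simp
  | psi i a => have : i = 0 := by simp at h1; exact h1
               subst this; simp
  | add a b _ ih =>
    simp only [W_add] at h
    rw [lt_psi_iff] at h1
    exact ih h.2.2.1 (by rw [lt_psi_iff]; exact h.2.2.2.2.trans_lt h1)

theorem CO_zero : CO zero := ⟨O_zero, by simp⟩
theorem CO_fdn {t} (h : CO t) (n) : CO (fd t (nm n)) := by
  refine ⟨O_fdn h.1 n, ?_⟩
  by_cases h0 : t = zero
  · subst h0; simp
  · exact (fd_lt h.1.1 (adm_nm t n) h0).trans h.2
theorem CO_fd0 {t} (h : CO t) : CO (fd t zero) := CO_fdn h 0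
theorem ne_of_kd {t} (h : 1 ≤ kd t) : t ≠ zero := by rintro rfl; simp at h

noncomputable def it (α : Tm) (k : ℕ) : ℕ → Tm
  | 0 => fd α zero
  | b + 1 => fd α (nm (H (it α k b) k))

theorem it_form (α k b) : ∃ n, it α k b = fd α (nm n) := by
  cases b with
  | zero => exact ⟨0, rfl⟩
  | succ b => exact ⟨_, rfl⟩
theorem CO_it {α} (h : CO α) (k b) : CO (it α k b) := by
  obtain ⟨n, hn⟩ := it_form α k b; rw [hn]; exact CO_fdn h n
theorem it_lt {α} (h : W α) (h0 : α ≠ zero) (k b) : it α k b < α := by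
  obtain ⟨n, hn⟩ := it_form α k b; rw [hn]; exact fd_lt h (adm_nm _ _) h0

theorem H_of {α k X} (h : ∀ n, HRel α k n ↔ n = X) : H α k = X := by
  have : {n | HRel α k n} = {X} := by ext n; simp [h]
  rw [H, this]; simp

theorem fund_nat {α} (h : W α) (n) : fund α (natToTm n) = fd α (nm n) := by
  rw [nat_rep, fund_fd α _ h (adm_nm _ _)]
theorem fund_zero {α} (h : W α) : fund α zero = fd α zero := fund_fd α _ h (adm_nm _ 0)

theorem HRel_zero {k n} : HRel zero k n ↔ n = k := by
  constructor
  · intro h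
    cases h with
    | zero => rfl
    | succ h => simp [tp] at h
    | lim h => simp [tp, omegaT] at h
  · rintro rfl; exact .zero
theorem HRel_succ {α k n} (h : W α) (h1 : kd α = 1) :
    HRel α k n ↔ ∃ n', HRel (fd α zero) k n' ∧ n = n' * k := by
  constructor
  · intro hr
    cases hr with
    | zero => simp at h1
    | succ _ h2 => rw [fund_zero h] at h2; exact ⟨_, h2, rfl⟩
    | lim h2 => rw [tp_kd _ h, h1] at h2; simp [tpOf, omegaT] at h2
  · rintro ⟨n', h2, rfl⟩
    rw [← fund_zero h] at h2
    exact .succ (by rw [tp_kd _ h, h1]; rfl) h2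
theorem HRel_lim {α k n} (h : W α) (h1 : kd α = 2) :
    HRel α k n ↔ ∃ β, HIter α k k β ∧ HRel β k n := by
  constructor
  · intro hr
    cases hr with
    | zero => simp at h1
    | succ h2 => rw [tp_kd _ h, h1] at h2; simp [tpOf, omegaT] at h2
    | lim _ h2 h3 => exact ⟨_, h2, h3⟩
  · rintro ⟨β, h2, h3⟩
    exact .lim (by rw [tp_kd _ h, h1]; rfl) h2 h3
theorem HIter_iff {α k b β} (h : W α) (hH : ∀ b n, HRel (it α k b) k n ↔ n = H (it α k b) k) :
    HIter α k b β ↔ β = it α k b := by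
  induction b generalizing β with
  | zero =>
    constructor
    · intro hr; cases hr; rw [fund_zero h]; rfl
    · rintro rfl; rw [it, ← fund_zero h]; exact .zero
  | succ b ih =>
    constructor
    · intro hr
      cases hr with
      | succ h1 h2 => rw [ih] at h1; subst h1; rw [hH] at h2; subst h2; rw [fund_nat h]; rfl
    · rintro rfl
      rw [it, ← fund_nat h]
      exact .succ (ih.2 rfl) ((hH _ _).2 rfl)

theorem H_spec (k) : ∀ α, CO α → ∀ n, HRel α k n ↔ n = H α k := by
  refine co_ind ?_
  intro α hα ih
  suffices ∃ X, ∀ n, HRel α k n ↔ n = X by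
    obtain ⟨X, hX⟩ := this; rw [H_of hX]; exact hX
  have hk := kd_co hα.w hα.2
  obtain h0 | h0 | h0 : kd α = 0 ∨ kd α = 1 ∨ kd α = 2 := by omega
  · rw [kd_eq_zero hα.w] at h0; subst h0
    exact ⟨k, fun n => HRel_zero⟩
  · refine ⟨H (fd α zero) k * k, fun n => ?_⟩
    rw [HRel_succ hα.w h0]
    have := ih _ (CO_fd0 hα) (fd_lt hα.w (adm_nm _ 0) (ne_of_kd (by omega)))
    simp [this]
  · refine ⟨H (it α k k) k, fun n => ?_⟩
    have h' : ∀ b n, HRel (it α k b) k n ↔ n = H (it α k b) k := fun b =>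
      ih _ (CO_it hα k b) (it_lt hα.w (ne_of_kd (by omega)) k b)
    rw [HRel_lim hα.w h0]
    simp [HIter_iff hα.w h', h']

theorem H_zero (k) : H zero k = k := H_of fun n => HRel_zero
theorem H_succ {α} (hα : CO α) (h : kd α = 1) (k) : H α k = H (fd α zero) k * k := by
  apply H_of
  intro n
  rw [HRel_succ hα.w h]; simp [H_spec k _ (CO_fd0 hα)]
theorem H_lim {α} (hα : CO α) (h : kd α = 2) (k) : H α k = H (it α k k) k := by
  apply H_of
  intro n
  rw [HRel_lim hα.w h]; simp [HIter_iff hα.w fun b => H_spec k _ (CO_it hα k b),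
    H_spec k _ (CO_it hα k _)]

noncomputable def ex (α : Tm) (k : ℕ) : ℕ := Nat.log k (H α k)

theorem ex_aux {k} (hk : 2 ≤ k) : ∀ α, CO α → ∃ e, 1 ≤ e ∧ H α k = k ^ e := by
  refine co_ind ?_
  intro α hα ih
  have hk' := kd_co hα.w hα.2
  obtain h0 | h0 | h0 : kd α = 0 ∨ kd α = 1 ∨ kd α = 2 := by omega
  · rw [kd_eq_zero hα.w] at h0; subst h0
    exact ⟨1, le_rfl, by rw [H_zero]; simp⟩
  · obtain ⟨e, h1, h2⟩ := ih _ (CO_fd0 hα) (fd_lt hα.w (adm_nm _ 0) (ne_of_kd (by omega)))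
    exact ⟨e + 1, by omega, by rw [H_succ hα h0, h2, pow_succ]⟩
  · obtain ⟨e, h1, h2⟩ := ih _ (CO_it hα k k) (it_lt hα.w (ne_of_kd (by omega)) k k)
    exact ⟨e, h1, by rw [H_lim hα h0, h2]⟩

theorem ex_spec {k} (hk : 2 ≤ k) {α} (hα : CO α) : 1 ≤ ex α k ∧ H α k = k ^ ex α k := by
  obtain ⟨e, h1, h2⟩ := ex_aux hk α hα
  have : ex α k = e := by rw [ex, h2, Nat.log_pow (by omega)]
  rw [this]; exact ⟨h1, h2⟩
theorem H_ge {k} (hk : 2 ≤ k) {α} (hα : CO α) : k ≤ H α k := by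
  obtain ⟨h1, h2⟩ := ex_spec hk hα
  rw [h2]; exact Nat.le_self_pow (by omega) k
theorem ex_zero {k} (hk : 2 ≤ k) : ex zero k = 1 := by
  have := (ex_spec hk CO_zero).2
  rw [H_zero] at this
  have h2 : k ^ 1 = k ^ ex zero k := by simpa using this
  exact (Nat.pow_right_injective hk h2).symm
theorem ex_succ {k} (hk : 2 ≤ k) {α} (hα : CO α) (h : kd α = 1) :
    ex α k = ex (fd α zero) k + 1 := by
  have h1 := (ex_spec hk hα).2
  have h2 := (ex_spec hk (CO_fd0 hα)).2
  rw [H_succ hα h, h2, ← pow_succ] at h1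
  exact (Nat.pow_right_injective hk h1).symm
theorem ex_lim {k} {α} (hα : CO α) (h : kd α = 2) : ex α k = ex (it α k k) k := by
  rw [ex, H_lim hα h]; rfl

theorem N_lt_H {k} (hk : 2 ≤ k) : ∀ α, CO α → normN α < H α k := by
  refine co_ind ?_
  intro α hα ih
  have hk' := kd_co hα.w hα.2
  obtain h0 | h0 | h0 : kd α = 0 ∨ kd α = 1 ∨ kd α = 2 := by omega
  · rw [kd_eq_zero hα.w] at h0; subst h0
    rw [H_zero]; simp [normN]; omega
  · have := ih _ (CO_fd0 hα) (fd_lt hα.w (adm_nm _ 0) (ne_of_kd (by omega)))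
    rw [H_succ hα h0, norm_k1 _ h0]; nlinarith
  · have := ih _ (CO_it hα k k) (it_lt hα.w (ne_of_kd (by omega)) k k)
    rw [H_lim hα h0]
    refine lt_of_le_of_lt ?_ this
    obtain ⟨j, rfl⟩ : ∃ j, k = j + 1 := ⟨k - 1, by omega⟩
    rw [it]
    apply norm_k2 _ _ hα.w h0
    have := H_ge hk (CO_it hα (j+1) j); omega

theorem fd_emb {ξ} (h : O ξ) (hk : kd ξ = 2) {n m} (hnm : n ≤ m) :
    Emb (fd ξ (nm n)) (fd ξ (nm m)) :=
  BE2 ξ _ n h.1 hk (O_fdn h m)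
    (fd_mono_le h.1 (adm_nm _ _) (adm_nm _ _) (by omega) ((rep_le (by simp)).2 hnm))
    (fd_lt h.1 (adm_nm _ _) (ne_of_kd (by omega)))
theorem fd_inj {ξ} (h : W ξ) (hk : kd ξ = 2) {n m} (he : fd ξ (nm n) = fd ξ (nm m)) : n = m := by
  by_contra hne
  rcases lt_or_gt_of_ne hne with h1 | h1
  · exact absurd he (fd_mono ξ _ _ h (adm_nm _ _) (adm_nm _ _) (by omega)
      ((rep_lt_iff (by simp)).2 h1)).ne
  · exact absurd he.symm (fd_mono ξ _ _ h (adm_nm _ _) (adm_nm _ _) (by omega)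
      ((rep_lt_iff (by simp)).2 h1)).ne
theorem nm_ne {n} (h : n ≠ 0) : nm n ≠ zero := by rwa [Ne, rep_eq_zero (by simp)]

theorem pow_le_pow' {k k' e e' : ℕ} (hk : 2 ≤ k) (hkk : k ≤ k') (he : e ≤ e') : k ^ e ≤ k' ^ e' :=
  (Nat.pow_le_pow_left hkk e).trans (Nat.pow_le_pow_right (by omega) he)

theorem it_pos {α} (k) (hk : 2 ≤ k) : ∃ j, k = j + 1 ∧ it α k k = fd α (nm (H (it α k j) k)) := by
  obtain ⟨j, rfl⟩ : ∃ j, k = j + 1 := ⟨k - 1, by omega⟩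
  exact ⟨j, rfl, rfl⟩

theorem mon : ∀ ξ, CO ξ → ∀ ζ k k', CO ζ → Emb ζ ξ → 2 ≤ k → k ≤ k' →
    ex ζ k ≤ ex ξ k' ∧ (k = k' → ζ ≠ ξ → ex ζ k < ex ξ k') := by
  refine co_ind ?_
  intro ξ hξ ih ζ k k' hζ he hk hkk
  have hk2 : 2 ≤ k' := hk.trans hkk
  by_cases h0 : ξ = zero
  · subst h0
    have := emb_zero he; subst this
    rw [ex_zero hk, ex_zero hk2]; simp
  have hkd := kd_co hξ.w hξ.2
  have hkd0 : kd ξ ≠ 0 := by rwa [Ne, kd_eq_zero hξ.w]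
  rcases lemS he hζ.w hξ.w h0 with hI | ⟨h1, h2, h3⟩
  · obtain h0' | h0' : kd ξ = 1 ∨ kd ξ = 2 := by omega
    · have e1 := hI one (Adm.w _ _ (by omega)) (by simp)
      rw [fd_k1 one zero (by omega)] at e1
      have := ih _ (CO_fd0 hξ) (fd_lt hξ.w (adm_nm _ 0) h0) ζ k k' hζ e1 hk hkk
      rw [ex_succ hk2 hξ h0']
      exact ⟨by omega, fun _ _ => by omega⟩
    · obtain ⟨j, hj, hit⟩ := it_pos (α := ξ) k' hk2
      have hge := H_ge hk2 (CO_it hξ k' j)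
      have e1 := hI (nm (H (it ξ k' j) k')) (adm_nm _ _) (nm_ne (by omega))
      rw [← hit] at e1
      have := ih _ (CO_it hξ k' k') (it_lt hξ.w h0 _ _) ζ k k' hζ e1 hk hkk
      rw [ex_lim hξ h0']
      refine ⟨this.1, fun hkk' hne => this.2 hkk' ?_⟩
      intro heq
      have e2 := hI (nm 1) (adm_nm _ _) (nm_ne (by omega))
      have e3 := fd_emb hξ.1 h0' (show 1 ≤ H (it ξ k' j) k' by omega)
      rw [heq, hit] at e2
      have := e3.eq_of_norm (CO_fdn hξ _).w (le_antisymm e3.norm e2.norm)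
      have := fd_inj hξ.w h0' this
      omega
  · have hneN : ζ ≠ ξ → normN ζ < normN ξ := fun hne =>
      lt_of_le_of_ne he.norm fun h => hne (he.eq_of_norm hξ.w h)
    obtain h0' | h0' : kd ξ = 1 ∨ kd ξ = 2 := by omega
    · rw [ex_succ hk2 hξ h0', ex_succ hk hζ (by omega)]
      have := ih _ (CO_fd0 hξ) (fd_lt hξ.w (adm_nm _ 0) h0) _ k k' (CO_fd0 hζ)
        (h2 zero zero (adm_nm _ 0) (adm_nm _ 0) (.zero _)) hk hkk
      refine ⟨by omega, fun hkk' hne => ?_⟩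
      have := this.2 hkk' (fun heq => by
        have := h3 (hneN hne) one (Adm.w _ _ (by omega)) (by simp)
        rw [fd_k1 one zero (by omega), fd_k1 (t := ξ) one zero (by omega), heq] at this
        omega)
      omega
    · have key : ∀ b' b, b ≤ b' → Emb (it ζ k b) (it ξ k' b') := by
        intro b'
        induction b' with
        | zero =>
          intro b hb
          obtain rfl : b = 0 := by omega
          exact h2 zero zero (adm_nm _ 0) (adm_nm _ 0) (.zero _)
        | succ b' ihb =>
          intro b hb
          cases b with
          | zero => exact h2 zero _ (adm_nm _ 0) (adm_nm _ _) (.zero _)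
          | succ b =>
            refine h2 _ _ (adm_nm _ _) (adm_nm _ _) (emb_nm.2 ?_)
            rw [(ex_spec hk (CO_it hζ k b)).2, (ex_spec hk2 (CO_it hξ k' b')).2]
            exact pow_le_pow' hk hkk (ih _ (CO_it hξ k' b') (it_lt hξ.w h0 _ _) _ k k'
              (CO_it hζ k b) (ihb b (by omega)) hk hkk).1
      have := ih _ (CO_it hξ k' k') (it_lt hξ.w h0 _ _) _ k k' (CO_it hζ k k)
        (key k' k hkk) hk hkk
      rw [ex_lim hξ h0', ex_lim hζ (by omega)]
      refine ⟨this.1, fun hkk' hne => this.2 hkk' ?_⟩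
      intro heq
      subst hkk'
      obtain ⟨j, hj, -⟩ := it_pos (α := ξ) k hk
      have i1 : it ξ k k = fd ξ (nm (H (it ξ k j) k)) := by
        conv_lhs => rw [show it ξ k k = it ξ k (j+1) by rw [← hj]]
        rfl
      have i2 : it ζ k k = fd ζ (nm (H (it ζ k j) k)) := by
        conv_lhs => rw [show it ζ k k = it ζ k (j+1) by rw [← hj]]
        rfl
      have hle : H (it ζ k j) k ≤ H (it ξ k j) k := by
        rw [(ex_spec hk (CO_it hζ k j)).2, (ex_spec hk2 (CO_it hξ k j)).2]
        exact pow_le_pow' hk hkk (ih _ (CO_it hξ k j) (it_lt hξ.w h0 _ _) _ k k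
              (CO_it hζ k j) (key j j le_rfl) hk hkk).1
      have hge := H_ge hk (CO_it hζ k j)
      have n1 := h3 (hneN hne) (nm (H (it ζ k j) k)) (adm_nm _ _) (nm_ne (by omega))
      have n2 := (fd_emb hξ.1 h0' hle).norm
      rw [← i2, heq] at n1
      rw [← i1] at n2
      omega

theorem ex_mono {ζ ξ k k'} (hζ : CO ζ) (hξ : CO ξ) (h : Emb ζ ξ) (hk : 2 ≤ k) (hkk : k ≤ k') :
    ex ζ k ≤ ex ξ k' := (mon ξ hξ ζ k k' hζ h hk hkk).1
theorem H_mono {ζ ξ k k'} (hζ : CO ζ) (hξ : CO ξ) (h : Emb ζ ξ) (hk : 2 ≤ k) (hkk : k ≤ k') :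
    H ζ k ≤ H ξ k' := by
  rw [(ex_spec hk hζ).2, (ex_spec (hk.trans hkk) hξ).2]
  exact pow_le_pow' hk hkk (ex_mono hζ hξ h hk hkk)
theorem H_strict {ζ ξ k} (hζ : CO ζ) (hξ : CO ξ) (h : Emb ζ ξ) (hne : ζ ≠ ξ) (hk : 2 ≤ k) :
    H ζ k < H ξ k := by
  rw [(ex_spec hk hζ).2, (ex_spec hk hξ).2]
  exact Nat.pow_lt_pow_right (by omega) ((mon ξ hξ ζ k k hζ h hk le_rfl).2 rfl hne)

theorem it_emb {ζ ξ k k'} (hζ : CO ζ) (hξ : CO ξ)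
    (h2 : ∀ w w', w ≤ w' → Emb (fd ζ (nm w)) (fd ξ (nm w'))) (hk : 2 ≤ k) (hkk : k ≤ k') :
    ∀ b' b, b ≤ b' → Emb (it ζ k b) (it ξ k' b') := by
  intro b'
  induction b' with
  | zero =>
    intro b hb
    obtain rfl : b = 0 := by omega
    exact h2 0 0 le_rfl
  | succ b' ihb =>
    intro b hb
    cases b with
    | zero => exact h2 0 _ (by omega)
    | succ b =>
      exact h2 _ _ (H_mono (CO_it hζ k b) (CO_it hξ k' b') (ihb b (by omega)) hk hkk)

theorem H_it_lt {α} (hα : CO α) (h : kd α = 2) {k} (hk : 2 ≤ k) (b) :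
    it α k b < it α k (b + 1) ∧ H (it α k b) k < H (it α k (b + 1)) k := by
  have st : ∀ {n m}, n < m → H (fd α (nm n)) k < H (fd α (nm m)) k := fun hnm =>
    H_strict (CO_fdn hα _) (CO_fdn hα _) (fd_emb hα.1 h hnm.le)
      (fun he => by have := fd_inj hα.w h he; omega) hk
  have lt : ∀ {n m}, n < m → fd α (nm n) < fd α (nm m) := fun hnm =>
    fd_mono α _ _ hα.w (adm_nm _ _) (adm_nm _ _) (by omega) ((rep_lt_iff (by simp)).2 hnm)
  induction b with
  | zero =>
    have := H_ge hk (CO_it hα k 0)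
    exact ⟨lt (n := 0) (m := H (it α k 0) k) (by omega), st (n := 0) (m := H (it α k 0) k) (by omega)⟩
  | succ b ih => exact ⟨lt ih.2, st ih.2⟩
end GB

namespace GB
open Tm

theorem W_case {t} (h : W t) : (∃ n, t = nm n) ∨
    ∃ i a s, t = cons (psi i a) s ∧ i ≤ 1 ∧ W a ∧ W s ∧ hd s ≤ psi i a := by
  by_cases h0 : t = zero
  · exact Or.inl ⟨0, h0⟩
  obtain ⟨p, s, rfl, hp, hpw, hs, hle⟩ := h.eq_cons h0
  cases p with
  | zero => simp at hp
  | one => exact Or.inl (W_num h (by simp))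
  | psi i a => simp at hpw; exact Or.inr ⟨i, a, s, rfl, hpw.1, hpw.2, hs, hle⟩
  | add a b => simp at hp

theorem W_ind {P : Tm → Prop} (h1 : ∀ n, P (nm n))
    (h2 : ∀ i a s, i ≤ 1 → W a → W s → hd s ≤ psi i a → P a → P s → P (cons (psi i a) s)) :
    ∀ t, W t → P t := by
  have : ∀ N t, normN t < N → W t → P t := by
    intro N
    induction N with
    | zero => intro t h; omega
    | succ N ih =>
      intro t hN h
      rcases W_case h with ⟨n, rfl⟩ | ⟨i, a, s, rfl, hi, ha, hs, hle⟩
      · exact h1 n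
      · rw [normN_cons] at hN; simp only [normN] at hN
        exact h2 i a s hi ha hs hle (ih a (by omega) ha) (ih s (by omega) hs)
  intro t h; exact this _ t (Nat.lt_succ_self _) h

def mp (f : ℕ → ℕ) : Tm → Tm
  | .zero => .zero
  | .one => .one
  | .psi i a => .psi i (mp f a)
  | .add a b => if a = one then nm (f (tmToNat (add a b))) else add (mp f a) (mp f b)

structure Fm (f : ℕ → ℕ) : Prop where
  sm : StrictMono f
  z : f 0 = 0
  o : f 1 = 1

theorem cons_psi_ne_nm {i a s n} : cons (psi i a) s ≠ nm n := by
  intro h; have := congrArg hd h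
  rw [hd_cons _ _ (by simp), hd_rep (by simp)] at this; split at this <;> simp at this

variable {f : ℕ → ℕ}
@[simp] theorem mp_zero : mp f zero = zero := rfl
@[simp] theorem mp_one : mp f one = one := rfl
@[simp] theorem mp_psi (i a) : mp f (psi i a) = psi i (mp f a) := rfl
theorem mp_nm (hf : Fm f) (n) : mp f (nm n) = nm (f n) := by
  match n with
  | 0 => simp [nm, hf.z]
  | 1 => simp [nm, rep_succ, hf.o]
  | n + 2 =>
    have : nm (n + 2) = add one (nm (n + 1)) := by
      rw [nm, rep_succ, cons_nz]; simp [rep_succ, cons_ne_zero]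
    rw [this, mp, if_pos rfl, ← this, tmToNat_nm]

theorem mp_ne_zero (hf : Fm f) {t} (h : W t) (h0 : t ≠ zero) : mp f t ≠ zero := by
  cases t with
  | zero => simp at h0
  | one => simp
  | psi i a => simp
  | add a b =>
    rw [mp]; split
    · rw [Ne, rep_eq_zero (by simp), ← hf.z]
      subst_vars
      simp only [tmToNat]
      have := hf.sm (show 0 < 1 + tmToNat b by omega)
      omega
    · simp
theorem mp_cons (hf : Fm f) {i a s} (h : W s) :
    mp f (cons (psi i a) s) = cons (psi i (mp f a)) (mp f s) := by
  by_cases h0 : s = zero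
  · subst h0; simp
  · rw [cons_nz _ h0, cons_nz _ (mp_ne_zero hf h h0), mp, if_neg (by simp)]; simp

theorem mp_lt (hf : Fm f) : ∀ a, W a → ∀ b, W b → a < b → mp f a < mp f b := by
  apply W_ind
  · intro n b hb h
    rcases W_case hb with ⟨m, rfl⟩ | ⟨j, b, s, rfl, hj, hb, hs, hle⟩
    · rw [mp_nm hf, mp_nm hf, rep_lt_iff (by simp)]
      rw [rep_lt_iff (by simp)] at h; exact hf.sm h
    · rw [mp_nm hf, mp_cons hf hs]
      apply lt_of_hd; rw [hd_cons _ _ (by simp), ← lt_psi_iff]; simp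
  · intro i a s hi ha hs hle iha ihs b hb h
    rcases W_case hb with ⟨m, rfl⟩ | ⟨j, b, t, rfl, hj, hbb, ht, hle'⟩
    · exfalso
      have : nm m < cons (psi i a) s := by
        apply lt_of_hd; rw [hd_cons _ _ (by simp), ← lt_psi_iff]; simp
      exact lt_asymm h this
    · rw [mp_cons hf hs, mp_cons hf ht]
      rw [cons_lt_cons (by simp) (by simp)] at h ⊢
      simp only [psi_lt_psi] at h ⊢
      rcases h with (h | ⟨rfl, h⟩) | ⟨h1, h⟩
      · exact Or.inl (Or.inl h)
      · exact Or.inl (Or.inr ⟨rfl, iha _ hbb h⟩)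
      · right; injection h1 with h1 h2; subst h1 h2; exact ⟨rfl, ihs _ ht h⟩
theorem mp_lt_iff (hf : Fm f) {a b} (ha : W a) (hb : W b) : mp f a < mp f b ↔ a < b := by
  refine ⟨fun h => ?_, mp_lt hf a ha b hb⟩
  by_contra h'
  rcases (not_lt.1 h').lt_or_eq with h' | rfl
  · exact lt_asymm h (mp_lt hf b hb a ha h')
  · exact lt_irrefl _ h
theorem mp_le_iff (hf : Fm f) {a b} (ha : W a) (hb : W b) : mp f a ≤ mp f b ↔ a ≤ b := by
  rw [← not_lt, mp_lt_iff hf hb ha, not_lt]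
theorem mp_inj (hf : Fm f) {a b} (ha : W a) (hb : W b) (h : mp f a = mp f b) : a = b :=
  le_antisymm ((mp_le_iff hf ha hb).1 h.le) ((mp_le_iff hf hb ha).1 h.ge)

theorem mp_W (hf : Fm f) : ∀ a, W a → W (mp f a) := by
  apply W_ind
  · intro n; rw [mp_nm hf]; simp
  · intro i a s hi ha hs hle iha ihs
    rw [mp_cons hf hs, W_cons (by simp)]
    refine ⟨by simp [hi, iha], ihs, ?_⟩
    rcases W_case hs with ⟨m, rfl⟩ | ⟨j, b, t, rfl, hj, hb, ht, hle'⟩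
    · rw [mp_nm hf]; have := nm_lt_psi (f m) i (mp f a); rw [lt_psi_iff] at this; exact this.le
    · rw [mp_cons hf ht, hd_cons _ _ (by simp)]
      rw [hd_cons _ _ (by simp)] at hle
      exact (mp_le_iff hf (a := psi j b) (b := psi i a) (by simp [hj, hb]) (by simp [hi, ha])).2 hle

theorem mp_emb (hf : Fm f) : ∀ a, W a → Emb a (mp f a) := by
  apply W_ind
  · intro n; rw [mp_nm hf, emb_nm]; exact hf.sm.le_apply
  · intro i a s hi ha hs hle iha ihs
    rw [mp_cons hf hs]; exact emb_cons (.psi i iha) ihs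

theorem kd_nm (n) : kd (nm n) = if n = 0 then 0 else 1 := by
  induction n with
  | zero => rfl
  | succ n ih => rw [nm, rep_succ, kd_cons]; by_cases h : n = 0 <;> simp_all [rep_eq_zero]
theorem mp_kd (hf : Fm f) : ∀ a, W a → kd (mp f a) = kd a := by
  apply W_ind
  · intro n; rw [mp_nm hf, kd_nm, kd_nm]
    have := hf.z
    by_cases h : n = 0
    · simp [h, this]
    · have := hf.sm (Nat.pos_of_ne_zero h)
      rw [if_neg h, if_neg (by omega)]
  · intro i a s hi ha hs hle iha ihs
    rw [mp_cons hf hs, kd_cons, kd_cons]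
    by_cases h : s = zero
    · subst h; simp only [mp_zero, if_true]; exact kd_psi_congr hi iha
    · rw [if_neg (mp_ne_zero hf hs h), if_neg h, ihs]

theorem mp_rep (hf : Fm f) {i a} (hi : i ≤ 1) (ha : W a) (n) :
    mp f (rep (psi i a) n) = rep (psi i (mp f a)) n := by
  induction n with
  | zero => rfl
  | succ n ih => rw [rep_succ, rep_succ, mp_cons hf (W_rep (by simp) (by simp [hi, ha]) _), ih]

theorem mp_G0 (hf : Fm f) : ∀ a, W a → ∀ γ, γ ∈ G0 (mp f a) ↔ ∃ δ ∈ G0 a, γ = mp f δ := by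
  apply W_ind
  · intro n γ; rw [mp_nm hf]; simp [G0_nm]
  · intro i a s hi ha hs hle iha ihs γ
    rw [mp_cons hf hs, G0_cons, G0_cons]
    have hi : i = 0 ∨ i = 1 := by omega
    rcases hi with rfl | rfl
    · simp only [G0_psi0, Finset.mem_union, Finset.mem_insert, iha, ihs]
      constructor
      · rintro ((rfl | ⟨δ, h, rfl⟩) | ⟨δ, h, rfl⟩)
        · exact ⟨a, by simp⟩
        · exact ⟨δ, by simp [h]⟩
        · exact ⟨δ, by simp [h]⟩
      · rintro ⟨δ, (rfl | h) | h, rfl⟩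
        · simp
        · exact Or.inl (Or.inr ⟨δ, h, rfl⟩)
        · exact Or.inr ⟨δ, h, rfl⟩
    · simp only [G0_psi1, Finset.mem_union, iha, ihs]
      constructor
      · rintro (⟨δ, h, rfl⟩ | ⟨δ, h, rfl⟩)
        · exact ⟨δ, by simp [h]⟩
        · exact ⟨δ, by simp [h]⟩
      · rintro ⟨δ, h | h, rfl⟩
        · exact Or.inl (⟨δ, h, rfl⟩)
        · exact Or.inr ⟨δ, h, rfl⟩
theorem mp_O (hf : Fm f) {a} (ha : W a) : O (mp f a) ↔ O a := by
  unfold O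
  constructor
  · rintro ⟨-, h⟩
    refine ⟨ha, fun γ hγ δ hδ => ?_⟩
    have hγw := G0_W ha hγ
    have hδw := G0_W hγw.1 hδ
    rw [← mp_lt_iff hf hδw.1 hγw.1]
    exact h _ ((mp_G0 hf a ha _).2 ⟨γ, hγ, rfl⟩) _ ((mp_G0 hf γ hγw.1 _).2 ⟨δ, hδ, rfl⟩)
  · rintro ⟨-, h⟩
    refine ⟨mp_W hf a ha, fun γ hγ δ hδ => ?_⟩
    obtain ⟨γ, hγ2, rfl⟩ := (mp_G0 hf a ha _).1 hγ
    have hγw := G0_W ha hγ2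
    obtain ⟨δ, hδ2, rfl⟩ := (mp_G0 hf γ hγw.1 _).1 hδ
    have hδw := G0_W hγw.1 hδ2
    exact mp_lt hf _ hδw.1 _ hγw.1 (h _ hγ2 _ hδ2)

theorem mp_lt_Om (hf : Fm f) {a} (ha : W a) : mp f a < psi 1 zero ↔ a < psi 1 zero :=
  mp_lt_iff hf (b := psi 1 zero) ha (by simp)

/-- `mp` commutes with `fd` at kind three -/
theorem mp_fd3 (hf : Fm f) : ∀ a, W a → kd a = 3 → ∀ z, W z → z < psi 1 zero →
    mp f (fd a z) = fd (mp f a) (mp f z) := by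
  apply W_ind
  · intro n h; rw [kd_nm] at h; split at h <;> simp at h
  · intro i a s hi ha hs hle iha ihs hk z hz hz'
    rw [mp_cons hf hs]
    by_cases h0 : s = zero
    · subst h0
      simp only [cons_zero, mp_zero] at hk ⊢
      have hi : i = 0 ∨ i = 1 := by omega
      rcases hi with rfl | rfl
      · simp at hk
      · have hka : kd a = 0 ∨ kd a = 3 := by
          rw [kd_psi1] at hk; split at hk <;> [skip; split at hk] <;> omega
        have hkm := mp_kd hf a ha
        rcases hka with h | h
        · rw [fd_psi_0 h, fd_psi_0 (by omega)]
        · rw [fd_psi1_3 h, fd_psi1_3 (by omega), mp_psi, iha h z hz hz']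
    · rw [cons_nz _ h0, cons_nz _ (mp_ne_zero hf hs h0), fd_add, fd_add]
      rw [cons_nz _ h0, kd_add] at hk
      rw [mp_cons hf (fd_W hs (adm3 hk hz hz')), ihs hk z hz hz']
theorem mp_zz (hf : Fm f) {a} (ha : W a) (hk : kd a = 3) (n) :
    mp f (zz (fd a) n) = zz (fd (mp f a)) n := by
  induction n with
  | zero => rfl
  | succ n ih => rw [zz_succ, zz_succ, mp_psi, mp_fd3 hf a ha hk _ (zz_W ha hk n) (zz_lt_Omega _ _), ih]

/-! ok flags -/
def np : Tm → Bool
  | .psi (_ + 1) _ => false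
  | _ => true
def nd : Tm → Bool
  | .psi (_ + 1) d => np (hd d)
  | _ => false
def okL : Bool → Bool → Bool → Tm → Prop
  | _, _, _, .zero => True
  | _, u, _, .one => u = true
  | _, _, v, .psi i b => if i = 0 then okL true false false b else okL false v false b
  | w, u, v, .add c t => okL w u v c ∧ okL w (np c) (w && nd c) t
@[simp] theorem okL_zero (w u v) : okL w u v zero := trivial
@[simp] theorem okL_one (w u v) : okL w u v one ↔ u = true := by simp [okL]
@[simp] theorem okL_psi0 (w u v b) : okL w u v (psi 0 b) ↔ okL true false false b := by simp [okL]
@[simp] theorem okL_psi1 (w u v b) : okL w u v (psi 1 b) ↔ okL false v false b := by simp [okL]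
@[simp] theorem okL_add (w u v c t) :
  okL w u v (add c t) ↔ okL w u v c ∧ okL w (np c) (w && nd c) t := by rw [okL]
theorem okL_cons (w u v c t) :
    okL w u v (cons c t) ↔ okL w u v c ∧ okL w (np c) (w && nd c) t := by
  unfold cons; split
  · subst_vars; simp
  · simp
@[simp] theorem np_one : np one = true := rfl
@[simp] theorem np_zero : np zero = true := rfl
@[simp] theorem nd_one : nd one = false := rfl
@[simp] theorem np_psi0 (a) : np (psi 0 a) = true := rfl
@[simp] theorem np_psi1 (a) : np (psi 1 a) = false := rfl
@[simp] theorem nd_psi0 (a) : nd (psi 0 a) = false := rfl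
@[simp] theorem nd_psi1 (a) : nd (psi 1 a) = np (hd a) := rfl
theorem okL_nm (w u v n) : okL w u v (nm n) ↔ n = 0 ∨ u = true := by
  induction n generalizing u v with
  | zero => simp
  | succ n ih => rw [nm, rep_succ, okL_cons]; simp [ih]
theorem np_nm (n) : np (hd (nm n)) = true := by rw [hd_rep (by simp)]; split <;> rfl
theorem mp_np (hf : Fm f) {a} (ha : W a) : np (hd (mp f a)) = np (hd a) := by
  rcases W_case ha with ⟨m, rfl⟩ | ⟨j, b, t, rfl, hj, hb, ht, hle'⟩
  · rw [mp_nm hf, np_nm, np_nm]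
  · rw [mp_cons hf ht, hd_cons _ _ (by simp), hd_cons _ _ (by simp)]
    have hi : j = 0 ∨ j = 1 := by omega
    rcases hi with rfl | rfl <;> simp
theorem mp_okL (hf : Fm f) : ∀ a, W a → ∀ w u v, okL w u v (mp f a) ↔ okL w u v a := by
  apply W_ind
  · intro n w u v; rw [mp_nm hf, okL_nm, okL_nm]
    have := hf.z
    by_cases h : n = 0
    · simp [h, this]
    · have := hf.sm (Nat.pos_of_ne_zero h)
      simp [h]; omega
  · intro i a s hi ha hs hle iha ihs w u v
    rw [mp_cons hf hs, okL_cons, okL_cons]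
    have hi : i = 0 ∨ i = 1 := by omega
    rcases hi with rfl | rfl
    · simp [iha, ihs]
    · simp [iha, ihs, mp_np hf ha]
/-- `u` irrelevance -/
theorem okL_u {t} (h : W t) (h1 : hd t ≠ one) (w u u' v) : okL w u v t → okL w u' v t := by
  cases t with
  | zero => simp
  | one => simp at h1
  | psi i b => simp [okL]
  | add c t =>
    simp only [okL_add]
    simp only [hd_add] at h1
    simp only [W_add] at h
    rintro ⟨h2, h3⟩
    refine ⟨?_, h3⟩
    cases c with
    | zero => simp at h
    | one => simp at h1
    | psi i b => simpa [okL] using h2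
    | add => simp at h
end GB

namespace GB
open Tm

@[simp] theorem G1_zero : G1 zero = ∅ := by simp [G1]
@[simp] theorem G1_one : G1 one = ∅ := by simp [G1]
@[simp] theorem G1_psi0 (b) : G1 (psi 0 b) = ∅ := by simp [G1]
@[simp] theorem G1_psi1 (b) : G1 (psi 1 b) = insert b (G1 b) := by simp [G1]
@[simp] theorem G1_add (a b) : G1 (add a b) = G1 a ∪ G1 b := by simp [G1]
theorem G1_cons (a b) : G1 (cons a b) = G1 a ∪ G1 b := by
  unfold cons; split <;> simp_all

theorem lt_psi1 : ∀ t, W t → t < psi 1 t := by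
  apply W_ind
  · intro n; simp
  · intro i a s hi ha hs hle iha ihs
    rw [lt_psi_iff, hd_cons _ _ (by simp), psi_lt_psi]
    have hi : i = 0 ∨ i = 1 := by omega
    rcases hi with rfl | rfl
    · simp
    · right; refine ⟨rfl, iha.trans_le ?_⟩
      have := (W_cons (a := psi 1 a) (t := s) (by simp)).2 ⟨by simp [ha], hs, hle⟩
      simpa using this.hd_le

theorem G1_lt {b} : W b → ∀ γ ∈ G1 b, γ < b := by
  induction b with
  | zero => simp
  | one => simp
  | psi i b ih =>
    intro h γ hγ
    simp only [W_psi] at h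
    have hi : i = 0 ∨ i = 1 := by omega
    rcases hi with rfl | rfl
    · simp at hγ
    · simp at hγ
      rcases hγ with rfl | hγ
      · exact lt_psi1 _ h.2
      · exact (ih h.2 γ hγ).trans (lt_psi1 _ h.2)
  | add c t ihc iht =>
    intro h γ hγ
    have hw := h
    simp only [W_add] at h
    simp at hγ
    rcases hγ with hγ | hγ
    · exact (ihc h.2.1 γ hγ).trans ((pr_lt_add h.1).2 le_rfl)
    · exact (iht h.2.2.1 γ hγ).trans (tail_lt hw)

theorem G1_hd {b} : W b → ∀ γ ∈ G1 b, np (hd b) = false := by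
  intro h γ hγ
  have hb : psi 1 zero ≤ b := by
    by_contra hlt; push Not at hlt
    have : ∀ b, W b → b < psi 1 zero → G1 b = ∅ := by
      apply W_ind
      · intro n _; induction n with
        | zero => simp
        | succ n ih => rw [nm, rep_succ, G1_cons]; simpa using ih (by simp)
      · intro i a s hi ha hs hle iha ihs hlt
        rw [lt_psi_iff, hd_cons _ _ (by simp)] at hlt
        have hi : i = 0 := by
          have : i = 0 ∨ i = 1 := by omega
          rcases this with rfl | rfl <;> simp_all
        subst hi
        rw [G1_cons, ihs (by rw [lt_psi_iff]; exact hle.trans_lt hlt)]; simp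
    rw [this b h hlt] at hγ; simp at hγ
  rcases W_case h with ⟨n, rfl⟩ | ⟨i, a, s, rfl, hi, ha, hs, hle⟩
  · exact absurd (nm_lt_psi n 1 zero) (not_lt.2 hb)
  · rw [hd_cons _ _ (by simp)]
    have : i = 0 ∨ i = 1 := by omega
    rcases this with rfl | rfl
    · exfalso; apply not_lt.2 hb; rw [lt_psi_iff, hd_cons _ _ (by simp)]; simp
    · simp

theorem ok_hd1 {w u v t} (h : W t) (ho : okL w u v t) (h1 : hd t = one) : u = true := by
  cases t with
  | zero => simp at h1
  | one => simpa using ho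
  | psi => simp at h1
  | add c t => simp at h1; subst h1; simp at ho; exact ho.1
theorem ok_hd2 {w u v t c} (h : W t) (ho : okL w u v t) (h1 : hd t = psi 1 c) (hc : hd c = one) : v = true := by
  have : okL w u v (hd t) ∧ W (hd t) := by
    cases t with
    | zero => simp
    | one => simp_all
    | psi => simp_all
    | add c t => simp at ho h ⊢; exact ⟨ho.1, h.2.1⟩
  rw [h1] at this
  simp at this
  exact ok_hd1 this.2 this.1 hc

theorem tlt_cons {a b s t} (ha : IsPrincipal a) (hb : IsPrincipal b)
    (h : TLt a b ∨ (a = b ∧ TLt s t)) : TLt (cons a s) (cons b t) := by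
  by_cases hs : s = zero <;> by_cases ht : t = zero
  · subst hs ht; simp
    rcases h with h | ⟨_, h⟩
    · exact h
    · have := TLt_lt h; simp at this
  · subst hs; rw [cons_zero, cons_nz _ ht]
    rcases h with h | ⟨rfl, h⟩
    · refine .lex_hd (Or.inr trivial) ?_
      cases a <;> simp_all [hd]
    · refine .lex_tl (Or.inr trivial) ?_ ?_
      · cases a <;> simp_all [hd]
      · cases a <;> simp_all [tl]
  · subst ht; rw [cons_zero, cons_nz _ hs]
    rcases h with h | ⟨rfl, h⟩
    · refine .lex_hd (Or.inl trivial) ?_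
      cases b <;> simp_all [hd]
    · have := TLt_lt h; simp at this
  · rw [cons_nz _ ht, cons_nz _ hs]
    rcases h with h | ⟨rfl, h⟩
    · exact .lex_hd (Or.inl trivial) h
    · exact .lex_tl (Or.inl trivial) rfl h

theorem tlt_nm {n m} (h : n < m) : TLt (nm n) (nm m) := by
  induction n generalizing m with
  | zero => exact .zero_lt (by rw [Ne, rep_eq_zero (by simp)]; omega)
  | succ n ih =>
    cases m with
    | zero => omega
    | succ m => exact tlt_cons (by simp) (by simp) (Or.inr ⟨rfl, ih (by omega)⟩)

theorem np_mono {a b : Tm} (ha : W a) (hb : W b) (h : a ≤ b) (hn : np (hd b) = true) : np (hd a) = true := by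
  have h' := hd_mono ha hb h
  rcases W_case ha with ⟨n, rfl⟩ | ⟨i, a, s, rfl, hi, ha, hs, hle⟩
  · exact np_nm n
  rcases W_case hb with ⟨n, rfl⟩ | ⟨j, b, t, rfl, hj, hb, ht, hle'⟩
  · exfalso
    rw [hd_cons _ _ (by simp)] at h'
    have := nm_lt_psi n i a
    rw [lt_psi_iff] at this; exact not_lt.2 h' this
  · rw [hd_cons _ _ (by simp)] at h' hn ⊢
    rw [hd_cons _ _ (by simp)] at h'
    have hi2 : i = 0 ∨ i = 1 := by omega
    have hj2 : j = 0 ∨ j = 1 := by omega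
    rcases hi2 with rfl | rfl <;> rcases hj2 with rfl | rfl <;> simp_all

def Q (a b : Tm) : Prop := (hd a = one → np (hd b) = true) ∧
  ∀ c, hd a = psi 1 c → hd c = one → ∀ d, hd b = psi 1 d → np (hd d) = true

theorem Q_triv {a b w} (ha : W a) (h : okL w false false a) : Q a b :=
  ⟨fun h1 => by have := ok_hd1 ha h h1; simp at this,
   fun c h1 h2 => by have := ok_hd2 ha h h1 h2; simp at this⟩

theorem tlt_of_lt : ∀ a, W a → ∀ b w u v, W b → okL w u v a → a < b → Q a b → TLt a b := by
  apply W_ind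
  · intro n b w u v hb ho hab hq
    cases n with
    | zero => exact .zero_lt (by rintro rfl; simp at hab)
    | succ n =>
    rcases W_case hb with ⟨m, rfl⟩ | ⟨j, b, t, rfl, hj, hbb, ht, hle'⟩
    · exact tlt_nm (by rwa [rep_lt_iff (by simp)] at hab)
    · have h1 := hq.1 (by rw [hd_rep (by simp)]; simp)
      rw [hd_cons _ _ (by simp)] at h1
      have hj : j = 0 ∨ j = 1 := by omega
      rcases hj with rfl | rfl
      · exact tlt_cons (by simp) (by simp) (Or.inl .one_lt_psi0)
      · simp at h1
  · intro i a s hi ha hs hle iha ihs b w u v hb ho hab hq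
    rcases W_case hb with ⟨m, rfl⟩ | ⟨j, b, t, rfl, hj, hbb, ht, hle'⟩
    · exfalso
      have : nm m < cons (psi i a) s := by
        apply lt_of_hd; rw [hd_cons _ _ (by simp), ← lt_psi_iff]; simp
      exact lt_asymm hab this
    · rw [cons_lt_cons (by simp) (by simp), psi_lt_psi] at hab
      apply tlt_cons (by simp) (by simp)
      rw [okL_cons] at ho
      rcases hab with (h | ⟨rfl, h⟩) | ⟨h1, h⟩
      · exact Or.inl (.psi_lt h)
      · left; apply TLt.psi_mono
        have hi : i = 0 ∨ i = 1 := by omega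
        rcases hi with rfl | rfl
        · simp at ho
          exact iha b _ _ _ hbb ho.1 h (Q_triv ha ho.1)
        · simp at ho
          refine iha b _ _ _ hbb ho.1 h ⟨fun h1 => hq.2 a (by rw [hd_cons _ _ (by simp)]) h1 b (by rw [hd_cons _ _ (by simp)]), fun c h1 h2 => by have := ok_hd2 ha ho.1 h1 h2; simp at this⟩
      · right; injection h1 with h1 h2; subst h1 h2
        refine ⟨rfl, ihs t _ _ _ ht ho.2 h ⟨fun h1 => ?_, fun c h1 h2 d h3 => ?_⟩⟩
        · have h2 := ok_hd1 hs ho.2 h1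
          have hi : i = 0 ∨ i = 1 := by omega
          rcases hi with rfl | rfl
          · have := np_mono (b := psi 0 a) (a := hd t) ?_ (by simp [ha]) hle' (by simp)
            · cases t <;> simp_all
              rename_i c _; cases c <;> simp_all
            · cases t <;> simp_all
          · simp at h2
        · have h2 := ok_hd2 hs ho.2 h1 h2
          have hi : i = 0 ∨ i = 1 := by omega
          rcases hi with rfl | rfl
          · simp at h2
          · simp at h2
            rw [h3] at hle'; simp at hle'
            have hdw : W d := by
              have : W (hd t) := by cases t <;> simp_all
              rw [h3] at this; simpa using this
            exact np_mono hdw ha hle' h2.2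

theorem G1_ok {c} : ∀ u, W c → okL false u false c → ∀ γ ∈ G1 c, okL false false false γ := by
  induction c with
  | zero => simp
  | one => simp
  | psi i b ih =>
    intro u h ho γ hγ
    simp only [W_psi] at h
    have hi : i = 0 ∨ i = 1 := by omega
    rcases hi with rfl | rfl
    · simp at hγ
    · simp at hγ ho
      rcases hγ with rfl | hγ
      · exact ho
      · exact ih _ h.2 ho γ hγ
  | add c t ihc iht =>
    intro u h ho γ hγ
    simp at hγ ho h
    rcases hγ with hγ | hγ
    · exact ihc _ h.2.1 ho.1 γ hγ
    · exact iht _ h.2.2.1 ho.2 γ hγ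
theorem G0_ok {c} : ∀ w u v, W c → okL w u v c → ∀ γ ∈ G0 c, okL true false false γ := by
  induction c with
  | zero => simp
  | one => simp
  | psi i b ih =>
    intro w u v h ho γ hγ
    simp only [W_psi] at h
    have hi : i = 0 ∨ i = 1 := by omega
    rcases hi with rfl | rfl
    · simp at hγ ho
      rcases hγ with rfl | hγ
      · exact ho
      · exact ih _ _ _ h.2 ho γ hγ
    · simp at hγ ho
      exact ih _ _ _ h.2 ho γ hγ
  | add c t ihc iht =>
    intro w u v h ho γ hγ
    simp at hγ ho h
    rcases hγ with hγ | hγ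
    · exact ihc _ _ _ h.2.1 ho.1 γ hγ
    · exact iht _ _ _ h.2.2.1 ho.2 γ hγ

theorem tlt_E {a} (ha : W a) (h1 : hd a ≠ one) (h2 : ∀ c, hd a = psi 1 c → hd c ≠ one) :
    TLt a (psi 1 Omega2T) ∧ TLt a Omega2T := by
  rcases W_case ha with ⟨n, rfl⟩ | ⟨i, a, s, rfl, hi, haa, hs, hle⟩
  · cases n with
    | zero => exact ⟨.zero_lt (by simp), .zero_lt (by simp [Omega2T])⟩
    | succ n => rw [hd_rep (by simp)] at h1; simp at h1
  · rw [hd_cons _ _ (by simp)] at h2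
    have key : ∀ p, IsPrincipal p → TLt (psi i a) p → TLt (cons (psi i a) s) p := by
      intro p hp h
      conv_rhs => rw [← cons_zero p]
      exact tlt_cons (by simp) hp (Or.inl h)
    have hi : i = 0 ∨ i = 1 := by omega
    rcases hi with rfl | rfl
    · exact ⟨key _ (by simp) (.psi_lt (by omega)), key _ (by simp [Omega2T]) (.psi_lt (by omega))⟩
    · refine ⟨key _ (by simp) (.psi_mono ?_), key _ (by simp [Omega2T]) (.psi_lt (by omega))⟩
      have h2 := h2 a rfl
      rcases W_case haa with ⟨n, rfl⟩ | ⟨j, b, t, rfl, hj, hb, ht, hle⟩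
      · cases n with
        | zero => exact .zero_lt (by simp [Omega2T])
        | succ n => rw [hd_rep (by simp)] at h2; simp at h2
      · conv_rhs => rw [← cons_zero Omega2T]
        exact tlt_cons (by simp) (by simp [Omega2T]) (Or.inl (.psi_lt (by omega)))

theorem InT_nm (n) : InT (nm n) ∧ InOT (nm n) := by
  induction n with
  | zero => exact ⟨.zero, .zero⟩
  | succ n ih =>
    rw [nm, rep_succ]
    by_cases h : rep one n = zero
    · rw [h, cons_zero]; exact ⟨.one, .one⟩
    · rw [cons_nz _ h]
      have : InT (add one (rep one n)) := by
        refine .add trivial .one ih.1 h (Or.inr ?_)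
        rw [hd_rep (by simp), if_neg]; rintro rfl; simp at h
      exact ⟨this, .add this .one ih.2⟩

theorem InOT_of : ∀ a, W a → O a → ∀ w u v, okL w u v a → InT a ∧ InOT a := by
  apply W_ind
  · intro n _ _ _ _ _; exact InT_nm n
  · intro i a s hi ha hs hle iha ihs hO w u v ho
    rw [okL_cons] at ho
    rw [O_cons (by simp)] at hO
    have hi : i = 0 ∨ i = 1 := by omega
    have h1 : InT (psi i a) ∧ InOT (psi i a) := by
      rcases hi with rfl | rfl
      · simp at ho
        have hOa := O_psi0.1 hO.1
        have h := iha hOa.1 _ _ _ ho.1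
        refine ⟨.psi (by omega) h.1, .psi0 h.2 (fun γ hγ => ?_) (tlt_E ha (fun h1 => ?_) (fun c h1 h2 => ?_)).2⟩
        · have hγw := (G0_W ha hγ).1
          have := G0_ok _ _ _ ha ho.1 γ hγ
          exact tlt_of_lt γ hγw a _ _ _ ha this (hOa.2 γ hγ) (Q_triv hγw this)
        · have := ok_hd1 ha ho.1 h1; simp at this
        · have := ok_hd2 ha ho.1 h1 h2; simp at this
      · simp at ho
        have hOa := O_psi1.1 hO.1
        have h := iha hOa _ _ _ ho.1
        refine ⟨.psi (by omega) h.1, .psi1 h.2 (fun γ hγ => ?_)⟩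
        have hγw : W γ := by
          have : ∀ c, W c → ∀ γ ∈ G1 c, W γ := by
            intro c
            induction c with
            | zero => simp
            | one => simp
            | psi i b ih =>
              intro h γ hγ
              simp only [W_psi] at h
              have hi : i = 0 ∨ i = 1 := by omega
              rcases hi with rfl | rfl
              · simp at hγ
              · simp at hγ
                rcases hγ with rfl | hγ
                · exact h.2
                · exact ih h.2 γ hγ
            | add c t ihc iht =>
              intro h γ hγ
              simp at hγ h
              rcases hγ with hγ | hγ
              · exact ihc h.2.1 γ hγ
              · exact iht h.2.2.1 γ hγ
          exact this a ha γ hγ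
        have := G1_ok _ ha ho.1 γ hγ
        exact tlt_of_lt γ hγw a _ _ _ ha this (G1_lt ha γ hγ) (Q_triv hγw this)
    have h2 := ihs hO.2.1 _ _ _ ho.2
    by_cases h0 : s = zero
    · subst h0; simpa using h1
    rw [cons_nz _ h0]
    suffices TLe (hd s) (psi i a) by
      have h3 : InT (add (psi i a) s) := .add trivial h1.1 h2.1 h0 this
      exact ⟨h3, .add h3 h1.2 h2.2⟩
    rcases hle.lt_or_eq with hlt | heq
    · left
      have hhw : W (hd s) := by cases s <;> simp_all
      have hoh : okL w (np (psi i a)) (w && nd (psi i a)) (hd s) := by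
        have := ho.2
        cases s <;> simp_all
      have hp := hs.hd_pr h0
      refine tlt_of_lt _ hhw _ _ _ _ (by simp [ha]; omega) hoh hlt ⟨fun h1 => ?_, fun c h1 h2 d h3 => ?_⟩
      · simpa using ok_hd1 hhw hoh h1
      · have := ok_hd2 hhw hoh h1 h2
        simp at h3; obtain ⟨rfl, rfl⟩ := h3
        simp at this; exact this.2
    · exact Or.inr heq

def C (a : Tm) : Prop := CO a ∧ okL true false false a

theorem C_tlt {a b} (ha : C a) (hb : W b) (h : a < b) : TLt a b :=
  tlt_of_lt a ha.1.w b _ _ _ hb ha.2 h (Q_triv ha.1.w ha.2)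

theorem C_in {a} (h : C a) : InOT0 a ∧ TLt a OmegaT := by
  have key : ∀ a, W a → okL true false false a → TLt a (psi 1 Omega2T) := fun a ha ho =>
    (tlt_E ha (fun h1 => by have := ok_hd1 ha ho h1; simp at this)
      (fun c h1 h2 => by have := ok_hd2 ha ho h1 h2; simp at this)).1
  refine ⟨⟨(InOT_of a h.1.w h.1.1 _ _ _ h.2).2, key a h.1.w h.2, fun γ hγ => ?_⟩,
    C_tlt h (by simp [OmegaT]) h.1.2⟩
  exact key γ (G0_W h.1.w hγ).1 (G0_ok _ _ _ h.1.w h.2 γ hγ)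

theorem InT_W {a} (h : InT a) : ∀ c t, a = add c t → IsPrincipal c ∧ t ≠ zero ∧ hd t ≤ c := by
  cases h with
  | add h1 h2 h3 h4 h5 =>
    intro c t e; injection e with e1 e2; subst e1 e2
    exact ⟨h1, h4, by rcases h5 with h | h; exacts [(TLt_lt h).le, h.le]⟩
  | _ => intro c t e; simp at e

theorem E_lem {b} (h : InOT b) : b < psi 1 Omega2T → ∀ γ ∈ G1 b, γ < Omega2T := by
  induction h with
  | zero => simp
  | one => simp
  | psi2 => intro h; simp at h
  | psi0 => simp
  | @psi1 b hb hg ih =>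
    intro h γ hγ
    simp at h hγ
    rcases hγ with rfl | hγ
    · exact h
    · exact (TLt_lt (hg γ hγ)).trans h
  | @add c t hT hc ht ihc iht =>
    intro h γ hγ
    simp at h hγ
    obtain ⟨h1, h2, h3⟩ := InT_W hT _ _ rfl
    rcases hγ with hγ | hγ
    · exact ihc h γ hγ
    · exact iht (by rw [lt_psi_iff]; exact h3.trans_lt h) γ hγ

theorem D2 {a} (h : InOT a) : a < Omega2T → (∀ γ ∈ G1 a, γ < Omega2T) →
    (∀ γ ∈ G0 a, γ < psi 1 Omega2T) → O a := by
  induction h with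
  | zero => intros; exact O_zero
  | one => intros; exact O_one
  | psi2 => intro h; simp [Omega2T] at h
  | @psi0 b hb hg h2 ih =>
    intro h hg1 hg0
    simp at hg0
    have := ih ((hg0.1).trans (by simp [Omega2T])) (E_lem hb hg0.1) hg0.2
    exact O_psi0.2 ⟨this, fun γ hγ => TLt_lt (hg γ hγ)⟩
  | @psi1 b hb hg ih =>
    intro h hg1 hg0
    simp at hg1 hg0
    exact O_psi1.2 (ih hg1.1 hg1.2 hg0)
  | @add c t hT hc ht ihc iht =>
    intro h hg1 hg0
    obtain ⟨h1, h2, h3⟩ := InT_W hT _ _ rfl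
    simp [Omega2T] at h
    simp at hg1 hg0
    exact O_add.2 ⟨h1, ihc h (fun γ hγ => hg1 γ (Or.inl hγ)) (fun γ hγ => hg0 γ (Or.inl hγ)),
      iht (by rw [Omega2T, lt_psi_iff]; exact h3.trans_lt h) (fun γ hγ => hg1 γ (Or.inr hγ)) (fun γ hγ => hg0 γ (Or.inr hγ)), h2, h3⟩

theorem TLt_one_aux {γ b} (h : TLt γ b) : hd γ = one → (∃ n, b = nm n) ∨ np (hd b) = true := by
  induction h with
  | zero_lt => simp
  | one_lt_psi0 => simp
  | psi_mono => simp
  | psi_lt => simp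
  | @lex_hd a b h1 h2 ih =>
    intro h
    have := TLt_lt h2
    rw [h] at ih
    rcases ih rfl with ⟨n, hn⟩ | hn
    · right; rw [hn]; cases n with
      | zero => rfl
      | succ n => rw [nm, rep_succ]; unfold cons; split <;> rfl
    · right
      cases b with
      | add c t =>
        cases c with
        | add => rfl
        | _ => simpa using hn
      | _ => simpa using hn
  | lex_tl h1 h2 h3 ih => intro h; right; rw [← h2, h]; rfl
theorem TLt_one {γ b} (h : TLt γ b) (h1 : hd γ = one) : np (hd b) = true := by
  rcases TLt_one_aux h h1 with ⟨n, rfl⟩ | h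
  · exact np_nm n
  · exact h

theorem OK2 {a} (h : InOT a) : ∀ w u v, W a → (∀ γ ∈ G0 a, TLt γ (psi 1 Omega2T)) →
    (hd a = one → u = true) → (∀ c, hd a = psi 1 c → hd c = one → v = true) →
    (w = false → ∀ γ ∈ G1 a, hd γ ≠ one) → okL w u v a := by
  induction h with
  | zero => intros; simp
  | one => intro w u v _ _ h; simpa using h
  | psi2 => intro _ _ _ h; simp at h
  | @psi0 b hb hg h2 ih =>
    intro w u v hw hg0 _ _ _
    simp at hw hg0
    simp only [okL_psi0]
    refine ih _ _ _ hw hg0.2 (fun h => ?_) (fun c h1 h2 => ?_) (by simp)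
    · have := TLt_one hg0.1 h; simp at this
    · exfalso
      have h3 : TLt (psi 1 c) (psi 1 Omega2T) := by
        have := hg0.1
        cases this with
        | zero_lt => simp at h1
        | psi_mono h => simp at h1; subst h1; exact .psi_mono h
        | psi_lt h => simp at h1; omega
        | lex_hd _ h => rw [h1] at h; exact h
        | lex_tl _ _ h => have := TLt_lt h; simp [tl] at this
      cases h3 with
      | psi_mono h => have := TLt_one h h2; simp [Omega2T, np] at this
      | psi_lt h => omega
      | lex_hd h _ => simp [isAdd] at h
      | lex_tl h _ _ => simp [isAdd] at h
  | @psi1 b hb hg ih =>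
    intro w u v hw hg0 h1 h2 h3
    simp at hw hg0
    simp only [okL_psi1]
    have key : ∀ γ ∈ G1 b, hd γ ≠ one := by
      intro γ hγ hh
      have := TLt_one (hg γ hγ) hh
      rw [G1_hd hw γ hγ] at this; simp at this
    refine ih _ _ _ hw hg0 (fun h => h2 b rfl h) (fun c h1 h2 => ?_) (fun _ => key)
    exfalso
    refine key c ?_ h2
    cases b with
    | psi i d => simp at h1; obtain ⟨rfl, rfl⟩ := h1; simp
    | add d e => simp at h1; subst h1; simp
    | _ => simp at h1
  | @add c t hT hc ht ihc iht =>
    intro w u v hw hg0 h1 h2 h3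
    simp only [W_add] at hw
    simp at hg0 h1 h2 h3
    simp only [okL_add]
    have hcc : hd c = c := by cases c <;> simp_all
    have hle : TLe (hd t) c := by cases hT; assumption
    refine ⟨ihc _ _ _ hw.2.1 (fun γ hγ => hg0 γ (Or.inl hγ)) (by rwa [hcc]) (by rwa [hcc])
      (fun h γ hγ => h3 h γ (Or.inl hγ)),
      iht _ _ _ hw.2.2.1 (fun γ hγ => hg0 γ (Or.inr hγ)) (fun h => ?_) (fun d h4 h5 => ?_)
      (fun h γ hγ => h3 h γ (Or.inr hγ))⟩
    · rcases hle with hle | hle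
      · have := TLt_one hle (by rw [h]; rfl); rwa [hcc] at this
      · rw [← hle, h]; rfl
    · have hwt : w = true := by
        by_contra hwf
        refine h3 (by simpa using hwf) d (Or.inr ?_) h5
        cases t with
        | psi i e => simp at h4; obtain ⟨rfl, rfl⟩ := h4; simp
        | add d' e => simp at h4; subst h4; simp
        | _ => simp at h4
      subst hwt
      rw [h4] at hle
      rcases hle with hle | hle
      · cases hle with
        | psi_mono h => simpa using TLt_one h h5
        | @psi_lt _ j _ _ h => simp at hw; omega
        | lex_hd h _ => rcases h with h | h
                        · simp [isAdd] at h
                        · cases c <;> simp_all [isAdd]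
        | lex_tl h _ _ => rcases h with h | h
                          · simp [isAdd] at h
                          · cases c <;> simp_all [isAdd]
      · rw [← hle]; simp [h5]

theorem in_C {a} (h : InOT0 a) (h2 : TLt a OmegaT) : C a := by
  obtain ⟨hI, h3, h4⟩ := h
  have hlt := TLt_lt h2
  have hO : O a := D2 hI (hlt.trans (by simp [OmegaT, Omega2T])) (E_lem hI (TLt_lt h3)) (fun γ hγ => TLt_lt (h4 γ hγ))
  refine ⟨⟨hO, hlt⟩, OK2 hI _ _ _ hO.w h4 (fun h => ?_) (fun c h1 h2 => ?_) (by simp)⟩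
  · have := TLt_one h2 h; simp [OmegaT] at this
  · rw [OmegaT, lt_psi_iff, h1] at hlt; simp at hlt
theorem C_iff {a} : C a ↔ InOT0 a ∧ TLt a OmegaT := ⟨C_in, fun h => in_C h.1 h.2⟩
theorem C_tlt_iff {a b} (ha : C a) (hb : C b) : TLt a b ↔ a < b :=
  ⟨TLt_lt, C_tlt ha hb.1.w⟩
end GB

namespace GB
open Tm

inductive Mult : Tm → Prop
  | base (i ν) : kd ν = 1 → Mult (psi i ν)
  | add (c t) : Mult t → Mult (add c t)
  | psi (j e) : Mult e → Mult (psi j e)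

theorem kd_psi_12 {i a} (hi : i ≤ 1) (h : kd a = 1 ∨ kd a = 2) : kd (psi i a) = 2 := by
  interval_cases i
  · simp
  · rw [kd_psi1]; rcases h with h | h <;> simp [h]

theorem Mult.kd {l} (h : Mult l) : W l → kd l = 2 := by
  induction h with
  | base i ν h => intro hw; simp at hw; exact kd_psi_12 hw.1 (.inl h)
  | add c t h ih => intro hw; simp at hw; simpa using ih hw.2.2.1
  | psi j e h ih => intro hw; simp at hw; exact kd_psi_12 hw.1 (.inr (ih hw.2))

theorem rep_big {p} (hp : IsPrincipal p) : ∀ n α, W α → hd α ≤ p → normN α < n → α < rep p n := by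
  intro n
  induction n with
  | zero => intro α _ _ h; omega
  | succ n ih =>
    intro α hα h1 h2
    rw [rep_succ]
    by_cases h0 : α = zero
    · subst h0; simp [cons_ne_zero hp]
    obtain ⟨a, t, rfl, ha, hwa, hwt, hle⟩ := hα.eq_cons h0
    rw [hd_cons _ _ ha] at h1
    rw [normN_cons] at h2
    have := normN_pos hwa (pr_ne_zero ha)
    rw [cons_lt_cons ha hp]
    rcases lt_or_eq_of_le h1 with h | h
    · exact .inl h
    · exact .inr ⟨h, ih t hwt (h ▸ hle) (by omega)⟩

theorem hd_le_pred {i ν α} (hν : W ν) (h1 : kd ν = 1) (hα : W α) (hi : α < psi i ν) :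
    hd α ≤ psi i (fd ν zero) := by
  rw [lt_psi_iff] at hi
  by_cases h0 : α = zero
  · subst h0; simp
  obtain ⟨a, t, rfl, ha, hwa, hwt, hle⟩ := hα.eq_cons h0
  rw [hd_cons _ _ ha] at hi ⊢
  cases a with
  | zero => simp at ha
  | one => simp
  | add => simp at ha
  | psi j d =>
    simp at hi hwa ⊢
    rcases hi with h | h
    · exact .inl h
    · exact .inr ⟨h.1, pred_le _ _ hν hwa.2 h1 h.2⟩

theorem Cof {l} (h : Mult l) : ∀ α n, W l → W α → α < l → normN α < n → α < fd l (nm n) := by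
  induction h with
  | base i ν h1 =>
    intro α n hw hα hlt hn
    simp at hw
    rw [fd_psi_1 h1, tmToNat_nm]
    exact rep_big (by simp) n α hα (hd_le_pred hw.2 h1 hα hlt) hn
  | add c t h ih =>
    intro α n hw hα hlt hn
    have hw' := hw
    rw [W_add] at hw
    obtain ⟨hc, hwc, hwt, ht0, hle⟩ := hw
    rw [fd_add]
    by_cases h0 : α = zero
    · subst h0; simp [cons_ne_zero hc]
    obtain ⟨a, s, rfl, ha, hwa, hws, hle2⟩ := hα.eq_cons h0
    rw [add_eq_cons hw', cons_lt_cons ha hc] at hlt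
    rw [cons_lt_cons ha hc]
    rw [normN_cons] at hn
    rcases hlt with hh | ⟨rfl, hh⟩
    · exact .inl hh
    · exact .inr ⟨rfl, ih s n hwt hws hh (by omega)⟩
  | psi j e h ih =>
    intro α n hw hα hlt hn
    simp at hw
    rw [fd_psi_2 (h.kd hw.2)]
    rw [lt_psi_iff] at hlt ⊢
    by_cases h0 : α = zero
    · subst h0; simp
    obtain ⟨a, s, rfl, ha, hwa, hws, hle2⟩ := hα.eq_cons h0
    rw [hd_cons _ _ ha] at hlt ⊢
    cases a with
    | zero => simp at ha
    | one => simp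
    | add => simp at ha
    | psi i d =>
      simp [normN_cons, normN] at hn
      simp at hlt hwa ⊢
      rcases hlt with hh | hh
      · exact .inl hh
      · exact .inr ⟨hh.1, ih d n hw.2 hwa.2 hh.2 (by omega)⟩

theorem G0_k1 {ν} : W ν → kd ν = 1 → G0 (fd ν zero) = G0 ν := by
  induction ν with
  | zero => simp
  | one => simp
  | psi i a => intro _ h; have := kd_psi_ge i a; omega
  | add c t _ ih => intro hw h; simp at hw h; rw [fd_add, G0_cons, ih hw.2.2.1 h, G0_add]

theorem MG {e} (h : Mult e) : W e → ∀ γ ∈ G0 e, γ ∈ G0 (fd e (nm 1)) ∨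
    (kd γ = 1 ∧ fd γ zero ∈ G0 (fd e (nm 1))) ∨
    (Mult γ ∧ ∀ n, 1 ≤ n → fd γ (nm n) ∈ G0 (fd e (nm n))) := by
  induction h with
  | base i ν h1 =>
    intro hw γ hγ
    simp at hw
    have e1 : fd (psi i ν) (nm 1) = psi i (fd ν zero) := by
      rw [fd_psi_1 h1, tmToNat_nm]; simp [rep_succ]
    rw [e1]
    obtain ⟨hi, hw⟩ := hw
    interval_cases i
    · simp [G0_k1 hw h1] at hγ ⊢
      rcases hγ with rfl | hγ
      · exact .inr (.inl ⟨h1, .inl rfl⟩)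
      · exact .inl (.inr hγ)
    · simp [G0_k1 hw h1] at hγ ⊢
      exact .inl hγ
  | add c t h ih =>
    intro hw γ hγ
    simp at hw
    simp at hγ ⊢
    rcases hγ with hγ | hγ
    · exact .inl (.inl hγ)
    · rcases ih hw.2.2.1 γ hγ with h1 | h1 | h1
      · exact .inl (.inr h1)
      · exact .inr (.inl ⟨h1.1, .inr h1.2⟩)
      · exact .inr (.inr ⟨h1.1, fun n hn => .inr (h1.2 n hn)⟩)
  | psi j e h ih =>
    intro hw γ hγ
    simp at hw
    obtain ⟨hi, hw⟩ := hw
    simp only [fd_psi_2 (h.kd hw)]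
    interval_cases j
    · simp at hγ ⊢
      rcases hγ with rfl | hγ
      · exact .inr (.inr ⟨h, fun n _ => .inl rfl⟩)
      · rcases ih hw γ hγ with h1 | h1 | h1
        · exact .inl (.inr h1)
        · exact .inr (.inl ⟨h1.1, .inr h1.2⟩)
        · exact .inr (.inr ⟨h1.1, fun n hn => .inr (h1.2 n hn)⟩)
    · simp at hγ ⊢
      exact ih hw γ hγ

theorem CL {e} (h : Mult e) : W e → (∀ n, O (fd e (nm n))) → O e := by
  induction h with
  | base i ν h1 =>
    intro hw ho
    have := ho 1
    have e1 : fd (psi i ν) (nm 1) = psi i (fd ν zero) := by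
      rw [fd_psi_1 h1, tmToNat_nm]; simp [rep_succ]
    rw [e1] at this
    simp at hw
    obtain ⟨hi, hw⟩ := hw
    have hν : O ν := by
      have := O_psi this
      refine ⟨hw, ?_⟩
      have h2 := this.2
      rwa [G0_k1 hw h1] at h2
    interval_cases i
    · rw [O_psi0] at this ⊢
      refine ⟨hν, fun γ hγ => ?_⟩
      rw [← G0_k1 hw h1] at hγ
      exact (this.2 γ hγ).trans (fd_lt hw (Adm.w _ _ (by omega)) (ne_of_kd (by omega)))
    · rw [O_psi1]; exact hν
  | add c t h ih =>
    intro hw ho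
    rw [W_add] at hw
    simp only [fd_add, O_cons hw.1] at ho
    rw [O_add]
    exact ⟨hw.1, (ho 0).1, ih hw.2.2.1 (fun n => (ho n).2.1), hw.2.2.2⟩
  | psi j e h ih =>
    intro hw ho
    simp at hw
    obtain ⟨hi, hw⟩ := hw
    have hk := h.kd hw
    simp only [fd_psi_2 hk] at ho
    have hO : O e := ih hw fun n => O_psi (ho n)
    interval_cases j
    · simp only [O_psi0] at ho ⊢
      refine ⟨hO, fun γ hγ => ?_⟩
      obtain ⟨hwγ, -, hN⟩ := G0_W hw hγ
      have hlt : ∀ n, fd e (nm n) < e := fun n => fd_lt hw (adm_nm _ _) (ne_of_kd (by omega))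
      rcases MG h hw γ hγ with h1 | h1 | h1
      · exact ((ho 1).2 γ h1).trans (hlt 1)
      · have h2 := (ho 1).2 _ h1.2
        by_contra hc
        push_neg at hc
        have := pred_le γ (fd e (nm 1)) hwγ (ho 1).1.w h1.1 ((hlt 1).trans_le hc)
        exact absurd h2 (not_lt.2 this)
      · by_contra hc
        rcases lt_or_eq_of_le (not_lt.1 hc) with hc | hc
        · have h2 := Cof h1.1 e (normN e + 1) hwγ hw hc (by omega)
          have h3 := (ho (normN e + 1)).2 _ (h1.2 _ (by omega))
          exact absurd (h2.trans h3) (not_lt.2 (hlt _).le)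
        · rw [hc] at hN; omega
    · rw [O_psi1]; exact hO
end GB

namespace GB
open Tm
variable {f : ℕ → ℕ}

theorem okL_psi {i} (hi : i ≤ 1) (w u v b) :
    okL w u v (psi i b) ↔ okL (i == 0) (i != 0 && v) false b := by
  interval_cases i <;> simp

inductive GA : Bool → Bool → Bool → Tm → Tm → Prop
  | zero (w v) : GA w false v one (psi 0 zero)
  | add (w u v c a b) : GA w (np c) (w && nd c) a b → GA w u v (add c a) (add c b)

inductive Gap : Bool → Bool → Bool → Tm → Tm → Prop
  | base (w u v i a b) : GA (i == 0) (i != 0 && v) false a b → Gap w u v (psi i a) (psi i b)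
  | add (w u v c a b) : Gap w (np c) (w && nd c) a b → Gap w u v (add c a) (add c b)
  | psi (w u v i a b) : Gap (i == 0) (i != 0 && v) false a b → Gap w u v (psi i a) (psi i b)

theorem GA.w {w u v a b} (h : GA w u v a b) : W b → W a ∧ hd a ≤ hd b ∧ a < b ∧ kd a = 1 ∧ kd b = 2 ∧
    psi 0 Tm.zero ≤ hd b ∧ fd b Tm.zero = fd a Tm.zero ∧ hd (fd a Tm.zero) ≠ one := by
  induction h with
  | zero v => intro _; simp [fd_psi_0 (i := 0) (a := Tm.zero) rfl]
  | add u v c a b h ih =>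
    intro hw
    rw [W_add] at hw
    obtain ⟨hc, hwc, hwb, hb0, hle⟩ := hw
    obtain ⟨h1, h2, h3, h4, h5, h6, h7, h8⟩ := ih hwb
    have h9 := h6.trans hle
    refine ⟨?_, by simp, by simp [h3], by simpa, by simpa, by simpa, by simp [h7], ?_⟩
    · rw [W_add]; exact ⟨hc, hwc, h1, ne_of_kd (by omega), h2.trans hle⟩
    · rw [fd_add, hd_cons _ _ hc]; rintro rfl; simp at h9

theorem GA.ok {w u v a b} (h : GA w u v a b) : okL w u v b → okL w u v (fd a Tm.zero) := by
  induction h with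
  | zero v => simp
  | add u v c a b h ih =>
    intro ho; rw [okL_add] at ho; rw [fd_add, okL_cons]; exact ⟨ho.1, ih ho.2⟩

theorem GA.K {w u v a b} (h : GA w u v a b) : W b → ∀ t, W t → okL w u v t → a ≤ t → b ≤ t := by
  induction h with
  | zero v =>
    intro _ t hw ho h1
    have h2 : t ≠ Tm.zero := by rintro rfl; simp at h1
    have h3 : hd t ≠ one := fun h => by have := ok_hd1 hw ho h; simp at this
    refine le_trans ?_ hw.hd_le
    have := hw.hd_pr h2
    cases h : hd t with
    | zero => simp [h] at this
    | add => simp [h] at this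
    | one => exact absurd h h3
    | psi i a => simp; omega
  | add u v c a b h ih =>
    intro hwb t hw ho h1
    have := (GA.add w u v c a b h).w hwb
    rw [add_eq_cons hwb]
    rw [add_eq_cons this.1] at h1
    rw [W_add] at hwb
    by_cases h0 : t = Tm.zero
    · subst h0; rw [le_zero] at h1; exact absurd h1 (cons_ne_zero hwb.1)
    obtain ⟨d, s, rfl, hd, hwd, hws, hle⟩ := hw.eq_cons h0
    rw [cons_le_cons hwb.1 hd] at h1 ⊢
    rw [okL_cons] at ho
    rcases h1 with h1 | ⟨rfl, h1⟩
    · exact .inl h1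
    · exact .inr ⟨rfl, ih hwb.2.2.1 s hws ho.2 h1⟩

theorem Gap.mult {w u v l R} (h : Gap w u v l R) : W R → Mult l := by
  induction h with
  | base w u v i a b h => intro hw; simp at hw; exact .base _ _ (h.w hw.2).2.2.2.1
  | add w u v c a b h ih => intro hw; simp at hw; exact .add _ _ (ih hw.2.2.1)
  | psi w u v i a b h ih => intro hw; simp at hw; exact .psi _ _ (ih hw.2)

theorem fd_base1 {i a} (h : kd a = 1) : fd (psi i a) (nm 1) = psi i (fd a zero) := by
  rw [fd_psi_1 h, tmToNat_nm]; simp [rep_succ]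

theorem Gap.w {w u v l R} (h : Gap w u v l R) : W R → W l ∧ hd l ≤ hd R ∧ l < R ∧ kd R = 2 ∧
    fd R zero = fd l (nm 1) := by
  induction h with
  | base w u v i a b h =>
    intro hw
    simp at hw
    obtain ⟨h1, h2, h3, h4, h5, h6, h7, h8⟩ := h.w hw.2
    exact ⟨by simp [*], by simp [h3.le], by simp [h3], kd_psi_12 hw.1 (.inr h5), by
      rw [fd_psi_2 h5, fd_base1 h4, h7]⟩
  | add w u v c a b h ih =>
    intro hw
    rw [W_add] at hw
    obtain ⟨hc, hwc, hwb, hb0, hle⟩ := hw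
    obtain ⟨h1, h2, h3, h4, h5⟩ := ih hwb
    refine ⟨?_, by simp, by simp [h3], by simpa, by simp [h5]⟩
    rw [W_add]; exact ⟨hc, hwc, h1, ne_of_kd (by rw [(h.mult hwb).kd h1]; omega), h2.trans hle⟩
  | psi w u v i a b h ih =>
    intro hw
    simp at hw
    obtain ⟨h1, h2, h3, h4, h5⟩ := ih hw.2
    exact ⟨by simp [*], by simp [h3.le], by simp [h3], kd_psi_12 hw.1 (.inr h4), by
      rw [fd_psi_2 h4, fd_psi_2 ((h.mult hw.2).kd h1), h5]⟩

theorem Gap.K {w u v l R} (h : Gap w u v l R) : W R → ∀ t, W t → okL w u v t → l ≤ t → R ≤ t := by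
  induction h with
  | base w u v i a b h =>
    intro hw t ht ho h1
    simp at hw
    by_contra hc
    obtain ⟨d, s, rfl, h2, h3⟩ := sand ht h1 (not_le.1 hc)
    rw [okL_cons, okL_psi hw.1] at ho
    rw [W_cons (by simp)] at ht
    simp at ht
    exact absurd h3 (not_lt.2 (h.K hw.2 d ht.1.2 ho.1 h2))
  | psi w u v i a b h ih =>
    intro hw t ht ho h1
    simp at hw
    by_contra hc
    obtain ⟨d, s, rfl, h2, h3⟩ := sand ht h1 (not_le.1 hc)
    rw [okL_cons, okL_psi hw.1] at ho
    rw [W_cons (by simp)] at ht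
    simp at ht
    exact absurd h3 (not_lt.2 (ih hw.2 d ht.1.2 ho.1 h2))
  | add w u v c a b h ih =>
    intro hwb t hw ho h1
    have := (Gap.add w u v c a b h).w hwb
    rw [add_eq_cons hwb]
    rw [add_eq_cons this.1] at h1
    rw [W_add] at hwb
    by_cases h0 : t = Tm.zero
    · subst h0; rw [le_zero] at h1; exact absurd h1 (cons_ne_zero hwb.1)
    obtain ⟨d, s, rfl, hd, hwd, hws, hle⟩ := hw.eq_cons h0
    rw [cons_le_cons hwb.1 hd] at h1 ⊢
    rw [okL_cons] at ho
    rcases h1 with h1 | ⟨rfl, h1⟩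
    · exact .inl h1
    · exact .inr ⟨rfl, ih hwb.2.2.1 s hws ho.2 h1⟩

theorem okL_rep {i a} (hi : i ≤ 1) (hw : W a) (h1 : hd a ≠ one) : ∀ n w u v, okL w u v (psi i a) →
    okL w u v (rep (psi i a) n) := by
  intro n
  induction n with
  | zero => simp
  | succ n ih =>
    intro w u v h
    rw [rep_succ, okL_cons]
    refine ⟨h, ih _ _ _ ?_⟩
    rw [okL_psi hi] at h ⊢
    exact okL_u hw h1 _ _ _ _ h

theorem Gap.ok {w u v l R} (h : Gap w u v l R) : W R → okL w u v R → ∀ n, okL w u v (fd l (nm n)) := by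
  induction h with
  | base w u v i a b h =>
    intro hw ho n
    simp at hw
    obtain ⟨h1, h2, h3, h4, h5, h6, h7, h8⟩ := h.w hw.2
    rw [fd_psi_1 h4]
    rw [okL_psi hw.1] at ho
    exact okL_rep hw.1 (fd_W h1 (Adm.w _ _ (by omega))) h8 _ _ _ _ ((okL_psi hw.1 _ _ _ _).2 (h.ok ho))
  | add w u v c a b h ih =>
    intro hw ho n
    rw [okL_add] at ho; rw [fd_add, okL_cons]; simp at hw; exact ⟨ho.1, ih hw.2.2.1 ho.2 n⟩
  | psi w u v i a b h ih =>
    intro hw ho n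
    simp at hw
    rw [fd_psi_2 ((h.mult hw.2).kd (h.w hw.2).1)]
    rw [okL_psi hw.1] at ho ⊢
    exact ih hw.2 ho n

theorem Gap.G {w u v l R} (h : Gap w u v l R) : W R → ∀ γ ∈ G0 l, γ ∈ G0 (fd l (nm 1)) ∨
    (kd γ = 1 ∧ fd γ zero ∈ G0 (fd l (nm 1))) ∨
    ∃ R2 ∈ G0 R, Gap true false false γ R2 := by
  induction h with
  | base w u v i a b h =>
    intro hw γ hγ
    rcases MG ((Gap.base w u v i a b h).mult hw) ((Gap.base w u v i a b h).w hw).1 γ hγ with h1 | h1 | h1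
    · exact .inl h1
    · exact .inr (.inl h1)
    · simp at hw
      obtain ⟨g1, g2, g3, g4, g5, g6, g7, g8⟩ := h.w hw.2
      rw [fd_base1 g4] 
      obtain ⟨hi, hw⟩ := hw
      interval_cases i
      · simp [G0_k1 g1 g4] at hγ ⊢
        rcases hγ with rfl | hγ
        · exact .inr (.inl ⟨g4, .inl rfl⟩)
        · exact .inl (.inr hγ)
      · simp [G0_k1 g1 g4] at hγ ⊢
        exact .inl hγ
  | add w u v c t b h ih =>
    intro hw γ hγ
    simp at hw
    simp at hγ ⊢
    rcases hγ with hγ | hγ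
    · exact .inl (.inl hγ)
    · rcases ih hw.2.2.1 γ hγ with h1 | h1 | ⟨R2, h1, h2⟩
      · exact .inl (.inr h1)
      · exact .inr (.inl ⟨h1.1, .inr h1.2⟩)
      · exact .inr (.inr ⟨R2, .inr h1, h2⟩)
  | psi w u v j e b h ih =>
    intro hw γ hγ
    simp at hw
    obtain ⟨hi, hw⟩ := hw
    simp only [fd_psi_2 ((h.mult hw).kd (h.w hw).1)]
    interval_cases j
    · simp at hγ ⊢
      rcases hγ with rfl | hγ
      · exact .inr (.inr (.inl (by simpa using h)))
      · rcases ih hw γ hγ with h1 | h1 | ⟨R2, h1, h2⟩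
        · exact .inl (.inr h1)
        · exact .inr (.inl ⟨h1.1, .inr h1.2⟩)
        · exact .inr (.inr (.inr ⟨R2, h1, h2⟩))
    · simp at hγ ⊢
      exact ih hw γ hγ

theorem Gap.O {w u v l R} (h : Gap w u v l R) : O R → okL w u v R → O l := by
  induction h with
  | base w u v i a b h =>
    intro hO ho
    have hw := hO.w
    have hg := (Gap.base w u v i a b h)
    have h1 := O_fd0 hO
    rw [(hg.w hw).2.2.2.2] at h1
    simp at hw
    obtain ⟨g1, g2, g3, g4, g5, g6, g7, g8⟩ := h.w hw.2
    rw [fd_base1 g4] at h1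
    refine CL (hg.mult hO.w) (hg.w hO.w).1 fun n => ?_
    rw [fd_psi_1 g4]
    exact O_rep (by simp) h1 _
  | add w u v c t b h ih =>
    intro hO ho
    have hw := ((Gap.add w u v c t b h).w hO.w).1
    rw [W_add] at hw
    rw [O_add] at hO ⊢
    rw [okL_add] at ho
    exact ⟨hO.1, hO.2.1, ih hO.2.2.1 ho.2, hw.2.2.2⟩
  | psi w u v j e b h ih =>
    intro hO ho
    have hwb := hO.w
    have h0 := O_fd0 hO
    simp at hwb
    obtain ⟨hi, hwb⟩ := hwb
    rw [okL_psi hi] at ho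
    obtain ⟨g1, g2, g3, g4, g5⟩ := h.w hwb
    have he := ih (O_psi hO) ho
    rw [fd_psi_2 g4, g5] at h0
    have hm := h.mult hwb
    interval_cases j
    · rw [O_psi0] at hO h0 ⊢
      refine ⟨he, fun γ hγ => ?_⟩
      obtain ⟨hwγ, -, hN⟩ := G0_W g1 hγ
      have hlt : fd e (nm 1) < e := fd_lt g1 (adm_nm _ _) (ne_of_kd (by rw [hm.kd g1]; omega))
      rcases h.G hwb γ hγ with h1 | h1 | ⟨R2, h1, h2⟩
      · exact (h0.2 γ h1).trans hlt
      · have h2 := h0.2 _ h1.2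
        by_contra hc
        have := pred_le γ (fd e (nm 1)) hwγ h0.1.w h1.1 (hlt.trans_le (not_lt.1 hc))
        exact absurd h2 (not_lt.2 this)
      · by_contra hc
        rcases lt_or_eq_of_le (not_lt.1 hc) with hc | hc
        · have hR2 := (G0_W hwb h1).1
          have hok := G0_ok _ _ _ hwb ho R2 h1
          have hmγ := h2.mult hR2
          have h3 := Cof hmγ e (normN e + 1) hwγ g1 hc (by omega)
          have h4 := h.K hwb _ (fd_W hwγ (adm_nm _ _)) (by simpa using h2.ok hR2 hok (normN e + 1)) h3.le
          have h5 := fd_lt (x := nm (normN e + 1)) hwγ (adm_nm _ _) (ne_of_kd (by rw [hmγ.kd hwγ]; omega))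
          exact absurd (h4.trans_lt (h5.trans ((h2.w hR2).2.2.1.trans (hO.2 R2 h1)))) (lt_irrefl _)
        · rw [hc] at hN; omega
    · rw [O_psi1]; exact he

theorem GA.emb {w u v a b} (h : GA w u v a b) : W b → ∀ x, 1 ≤ x → kd (fd b (nm x)) = 1 ∧
    Emb (fd a Tm.zero) (fd (fd b (nm x)) Tm.zero) ∧ x ≤ normN (fd b (nm x)) := by
  induction h with
  | zero v =>
    intro _ x hx
    rw [fd_psi_0 rfl, kd_nm, if_neg (by omega), normN_nm]
    exact ⟨rfl, .zero _, le_rfl⟩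
  | add u v c a b h ih =>
    intro hw x hx
    rw [W_add] at hw
    obtain ⟨h1, h2, h3⟩ := ih hw.2.2.1 x hx
    have h4 : fd b (nm x) ≠ Tm.zero := ne_of_kd (by omega)
    rw [fd_add, fd_add, cons_nz _ h4, fd_add]
    exact ⟨by simpa, emb_cons (.refl _) h2, by simp [normN]; omega⟩

theorem Gap.emb {w u v l R} (h : Gap w u v l R) : W R → ∀ x, 1 ≤ x → kd (fd R (nm x)) = 2 ∧
    (∀ n m, n ≤ m → Emb (fd l (nm n)) (fd (fd R (nm x)) (nm m))) ∧ x ≤ normN (fd R (nm x)) := by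
  induction h with
  | base w u v i a b h =>
    intro hw x hx
    simp at hw
    obtain ⟨h1, h2, h3⟩ := h.emb hw.2 x hx
    obtain ⟨g1, g2, g3, g4, g5, g6, g7, g8⟩ := h.w hw.2
    rw [fd_psi_2 g5]
    refine ⟨kd_psi_12 hw.1 (.inl h1), fun n m hn => ?_, by simp [normN]; omega⟩
    rw [fd_psi_1 h1, fd_psi_1 g4, tmToNat_nm, tmToNat_nm]
    exact emb_rep (.psi _ h2) hn
  | add w u v c a b h ih =>
    intro hw x hx
    rw [W_add] at hw
    obtain ⟨h1, h2, h3⟩ := ih hw.2.2.1 x hx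
    have h4 : fd b (nm x) ≠ Tm.zero := ne_of_kd (by omega)
    rw [fd_add, cons_nz _ h4]
    exact ⟨by simpa, fun n m hn => by rw [fd_add, fd_add]; exact emb_cons (.refl _) (h2 n m hn),
      by simp [normN]; omega⟩
  | psi w u v i a b h ih =>
    intro hw x hx
    simp at hw
    obtain ⟨h1, h2, h3⟩ := ih hw.2 x hx
    obtain ⟨g1, g2, g3, g4, g5⟩ := h.w hw.2
    rw [fd_psi_2 g4]
    refine ⟨kd_psi_12 hw.1 (.inr h1), fun n m hn => ?_, by simp [normN]; omega⟩
    rw [fd_psi_2 h1, fd_psi_2 ((h.mult hw.2).kd g1)]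
    exact .psi _ (h2 n m hn)
end GB

namespace GB
open Tm
variable {f : ℕ → ℕ}

theorem mp_eq_cons (hf : Fm f) {α i d s} (hα : W α) (h : mp f α = cons (psi i d) s) :
    ∃ d0 s0, α = cons (psi i d0) s0 ∧ i ≤ 1 ∧ W d0 ∧ W s0 ∧ hd s0 ≤ psi i d0 ∧ mp f d0 = d ∧ mp f s0 = s := by
  rcases W_case hα with ⟨n, rfl⟩ | ⟨j, a, t, rfl, hj, ha, ht, hle⟩
  · rw [mp_nm hf] at h; exact absurd h.symm cons_psi_ne_nm
  · rw [mp_cons hf ht, cons_inj (by simp) (by simp)] at h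
    obtain ⟨h1, h2⟩ := h
    simp at h1
    obtain ⟨rfl, h1⟩ := h1
    exact ⟨a, t, rfl, hj, ha, ht, hle, h1, h2⟩

theorem mp_hd (hf : Fm f) {t i a} (ht : W t) (ha : W a) :
    hd (mp f t) ≤ psi i (mp f a) ↔ hd t ≤ psi i a := by
  rcases W_case ht with ⟨n, rfl⟩ | ⟨j, b, s, rfl, hj, hb, hs, hle⟩
  · rw [mp_nm hf, hd_rep (by simp), hd_rep (by simp)]
    constructor <;> intro _ <;> split <;> simp
  · rw [mp_cons hf hs, hd_cons _ _ (by simp), hd_cons _ _ (by simp)]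
    simp [mp_le_iff hf hb ha]

theorem mp_npd (hf : Fm f) {i c} (hc : W c) :
    np (psi i (mp f c)) = np (psi i c) ∧ nd (psi i (mp f c)) = nd (psi i c) := by
  cases i with
  | zero => simp
  | succ i => exact ⟨rfl, mp_np hf hc⟩

theorem mp_addp (i c t) : mp f (add (psi i c) t) = add (psi i (mp f c)) (mp f t) := by
  simp [mp]

theorem c_psi {c t} (h : W (add c t)) (hk : 2 ≤ kd t) : ∃ i d, c = psi i d ∧ i ≤ 1 ∧ W d := by
  rw [W_add] at h
  obtain ⟨hc, hwc, hwt, h0, hle⟩ := h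
  cases c with
  | zero => simp at hc
  | add => simp at hc
  | one =>
    obtain ⟨n, rfl⟩ := W_num hwt hle
    rw [kd_nm] at hk; split at hk <;> omega
  | psi i d => exact ⟨i, d, rfl, by simpa using hwc⟩

theorem W_addp (hf : Fm f) {i c0 b0 b} (h : W (add (psi i (mp f c0)) b)) (hc : W c0) (hb : W b0)
    (e : mp f b0 = b) : W (add (psi i c0) b0) := by
  rw [W_add] at h ⊢
  subst e
  simp at h
  refine ⟨by simp, by simp [hc, h.1.1], hb, ?_, (mp_hd hf hb hc).1 h.2.2.2⟩
  rintro rfl; simp at h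

theorem GA.pull (hf : Fm f) {w u v a b} (h : GA w u v a b) : W b → ∀ d0, W d0 → mp f d0 = fd a Tm.zero →
    ∃ a0 b0, W b0 ∧ GA w u v a0 b0 ∧ mp f a0 = a ∧ mp f b0 = b ∧ fd a0 Tm.zero = d0 := by
  induction h with
  | zero v =>
    intro _ d0 hd0 h
    simp at h
    have : d0 = Tm.zero := by
      by_contra hc; exact mp_ne_zero hf hd0 hc h
    exact ⟨one, _, by simp, .zero _ _, rfl, rfl, by simp [this]⟩
  | add u v c a b h ih =>
    intro hw d0 hd0 he
    have hw' := hw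
    obtain ⟨i, c, rfl, hi, hc⟩ := c_psi hw (by
      rw [W_add] at hw; rw [(h.w hw.2.2.1).2.2.2.2.1])
    rw [fd_add] at he
    obtain ⟨c0, s0, rfl, -, hc0, hs0, hle, rfl, h2⟩ := mp_eq_cons hf hd0 he
    simp at hw
    obtain ⟨a0, b0, g1, g2, g3, g4, g5⟩ := ih hw.2.1 s0 hs0 h2
    have hn := mp_npd hf (i := i) hc0
    rw [hn.1, hn.2] at g2
    exact ⟨Tm.add (Tm.psi i c0) a0, Tm.add (Tm.psi i c0) b0, W_addp hf hw' hc0 g1 g4, .add _ _ _ _ _ _ g2,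
      by rw [mp_addp, g3], by rw [mp_addp, g4], by rw [fd_add, g5]⟩

theorem Gap.pull (hf : Fm f) {w u v l R} (h : Gap w u v l R) : W R → ∀ α, W α → fd l (nm 1) ≤ mp f α →
    mp f α < l → ∃ l0 R0, W R0 ∧ Gap w u v l0 R0 ∧ mp f l0 = l ∧ mp f R0 = R ∧
      ∀ n, mp f (fd l0 (nm n)) = fd l (nm n) := by
  induction h with
  | base w u v i a b h =>
    intro hw α hα h1 h2
    simp at hw
    obtain ⟨g1, g2, g3, g4, g5, g6, g7, g8⟩ := h.w hw.2
    rw [fd_base1 g4] at h1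
    obtain ⟨d, s, he, h3, h4⟩ := sand (mp_W hf _ hα) h1 h2
    obtain ⟨d0, s0, rfl, -, hd0, hs0, hle, rfl, h6⟩ := mp_eq_cons hf hα he
    have h7 := le_antisymm (pred_le _ _ g1 (mp_W hf _ hd0) g4 h4) h3
    obtain ⟨a0, b0, k1, k2, k3, k4, k5⟩ := h.pull hf hw.2 d0 hd0 h7
    refine ⟨Tm.psi i a0, Tm.psi i b0, by simp [hw.1, k1], .base _ _ _ _ _ _ k2, by simp [k3], by simp [k4], fun n => ?_⟩
    have := (k2.w k1).2.2.2.1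
    rw [fd_psi_1 g4, fd_psi_1 this, mp_rep hf hw.1 (by rw [k5]; exact hd0), k5, h7]
  | psi w u v i a b h ih =>
    intro hw α hα h1 h2
    simp at hw
    obtain ⟨g1, g2, g3, g4, g5⟩ := h.w hw.2
    have hk := (h.mult hw.2).kd g1
    rw [fd_psi_2 hk] at h1
    obtain ⟨d, s, he, h3, h4⟩ := sand (mp_W hf _ hα) h1 h2
    obtain ⟨d0, s0, rfl, -, hd0, hs0, hle, rfl, h6⟩ := mp_eq_cons hf hα he
    obtain ⟨a0, b0, k1, k2, k3, k4, k5⟩ := ih hw.2 d0 hd0 h3 h4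
    refine ⟨Tm.psi i a0, Tm.psi i b0, by simp [hw.1, k1], .psi _ _ _ _ _ _ k2, by simp [k3], by simp [k4], fun n => ?_⟩
    rw [fd_psi_2 hk, fd_psi_2 ((k2.mult k1).kd (k2.w k1).1), mp_psi, k5]
  | add w u v c a b h ih =>
    intro hw α hα h1 h2
    have hw' := hw
    obtain ⟨i, c, rfl, hi, hc⟩ := c_psi hw (by
      rw [W_add] at hw; rw [(h.w hw.2.2.1).2.2.2.1])
    rw [fd_add] at h1
    obtain ⟨s, he, h3, h4, h5⟩ := sand_add ((Gap.add w u v _ a b h).w hw).1 (mp_W hf _ hα) h1 h2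
    obtain ⟨c0, s0, rfl, -, hc0, hs0, hle, rfl, rfl⟩ := mp_eq_cons hf hα he
    simp at hw
    obtain ⟨a0, b0, k1, k2, k3, k4, k5⟩ := ih hw.2.1 s0 hs0 h3 h4
    have hn := mp_npd hf (i := i) hc0
    rw [hn.1, hn.2] at k2
    refine ⟨Tm.add (Tm.psi i c0) a0, Tm.add (Tm.psi i c0) b0, W_addp hf hw' hc0 k1 k4, .add _ _ _ _ _ _ k2,
      by rw [mp_addp, k3], by rw [mp_addp, k4], fun n => ?_⟩
    rw [fd_add, fd_add, mp_cons hf (fd_W (k2.w k1).1 (adm_nm _ _)), k5]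

theorem okC {z} : ∀ w u v w' u' v', W z → z < psi 1 zero → okL w u v z → (u = true → u' = true) → okL w' u' v' z := by
  induction z with
  | zero => simp
  | one => intro w u v w' u' v' _ _ h1 h2; simp at h1 ⊢; exact h2 h1
  | psi i b =>
    intro w u v w' u' v' hw h h1 h2
    simp at h
    subst h; simpa using h1
  | add c t ihc iht =>
    intro w u v w' u' v' hw h h1 h2
    rw [W_add] at hw
    have hc : c < psi 1 zero := by rw [lt_psi_iff] at h; simpa using h
    have hn : np c = true ∧ nd c = false := by
      rcases pr_countable hw.1 hc with rfl | ⟨b, rfl⟩ <;> simp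
    have ht : t < psi 1 zero := by
      rw [lt_psi_iff]; exact hw.2.2.2.2.trans_lt hc
    rw [okL_add, hn.1, hn.2] at h1 ⊢
    exact ⟨ihc _ _ _ _ _ _ hw.2.1 hc h1.1 h2, iht _ _ _ _ _ _ hw.2.2.1 ht h1.2 id⟩

theorem okO {a} : ∀ w u v, W a → kd a = 3 → okL w u v a → ∀ z, W z → z < psi 1 zero →
    okL true false false z → okL w u v (fd a z) := by
  induction a with
  | zero => simp
  | one => simp
  | psi i a ih =>
    intro w u v hw hk ho z hz hz1 hoz
    simp at hw
    obtain ⟨hi, hw⟩ := hw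
    interval_cases i
    · simp at hk
    · rcases kd_split a with h | h | h | h
      · rw [fd_psi_0 h]; exact okC _ _ _ _ _ _ hz hz1 hoz (by simp)
      · simp [kd_psi1, h] at hk
      · simp [kd_psi1, h] at hk
      · rw [fd_psi1_3 h]; simp at ho ⊢; exact ih _ _ _ hw h ho z hz hz1 hoz
  | add c t _ ih =>
    intro w u v hw hk ho z hz hz1 hoz
    simp at hw hk
    rw [okL_add] at ho
    rw [fd_add, okL_cons]
    exact ⟨ho.1, ih _ _ _ hw.2.2.1 hk ho.2 z hz hz1 hoz⟩

theorem ok_pred {a} : ∀ w u v, kd a = 1 → okL w u v a → okL w u v (fd a zero) := by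
  induction a with
  | zero => simp
  | one => simp
  | psi i a => intro w u v h; have := kd_psi_ge i a; omega
  | add c t _ ih =>
    intro w u v h ho
    simp at h; rw [okL_add] at ho; rw [fd_add, okL_cons]; exact ⟨ho.1, ih _ _ _ h ho.2⟩

theorem okL_rep2 {i a} (hi : i ≤ 1) (hw : W a) : ∀ n w u v, (v = true → w = true) → okL w u v (psi i a) →
    okL w u v (rep (psi i a) n) := by
  by_cases h1 : hd a = one
  · intro n
    induction n with
    | zero => simp
    | succ n ih =>
      intro w u v hv h
      rw [rep_succ, okL_cons]
      refine ⟨h, ih _ _ _ (by simp; tauto) ?_⟩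
      interval_cases i
      · simpa using h
      · simp at h ⊢
        have := ok_hd1 hw h h1
        subst this
        simp at hv
        simpa [h1, hv] using h
  · intro n w u v _ h; exact okL_rep hi hw h1 n w u v h

theorem D {δ} : ∀ w u v, W δ → kd δ = 2 → okL w u v δ → (v = true → w = true) →
    (∀ n, okL w u v (fd δ (nm n))) ∨ (∃ l, Gap w u v l δ) ∨ (∃ l, GA w u v l δ) := by
  induction δ with
  | zero => simp
  | one => simp
  | psi i a ih =>
    intro w u v hw hk ho hv
    simp at hw
    obtain ⟨hi, hw⟩ := hw
    rcases kd_split a with h | h | h | h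
    · obtain rfl := (kd_eq_zero hw).1 h
      have : i = 0 := by
        interval_cases i
        · rfl
        · simp [kd_psi1] at hk
      subst this
      cases u with
      | false => exact .inr (.inr ⟨_, .zero _ _⟩)
      | true => left; intro n; rw [fd_psi_0 rfl, okL_nm]; simp
    · left; intro n
      rw [fd_psi_1 h]
      refine okL_rep2 hi (fd_W hw (Adm.w _ _ (by omega))) _ _ _ _ hv ?_
      rw [okL_psi hi] at ho ⊢
      exact ok_pred _ _ _ h ho
    · rw [okL_psi hi] at ho
      rcases ih _ _ _ hw h ho (by simp) with h1 | ⟨l, h1⟩ | ⟨l, h1⟩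
      · left; intro n; rw [fd_psi_2 h, okL_psi hi]; exact h1 n
      · exact .inr (.inl ⟨_, .psi _ _ _ _ _ _ h1⟩)
      · exact .inr (.inl ⟨_, .base _ _ _ _ _ _ h1⟩)
    · left; intro n
      have : i = 0 := by
        interval_cases i
        · rfl
        · simp [kd_psi1, h] at hk
      subst this
      rw [fd_psi0_3 h, tmToNat_nm, zz_succ, okL_psi0]
      simp at ho
      induction n with
      | zero => exact okO _ _ _ hw h ho _ (by simp) (by simp) (by simp)
      | succ n ihn => exact okO _ _ _ hw h ho _ (zz_W hw h _) (zz_lt_Omega _ _) (by rw [zz_succ, okL_psi0]; exact ihn)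
  | add c t _ ih =>
    intro w u v hw hk ho hv
    simp at hw hk
    rw [okL_add] at ho
    rcases ih _ _ _ hw.2.2.1 hk ho.2 (by simp; tauto) with h1 | ⟨l, h1⟩ | ⟨l, h1⟩
    · left; intro n; rw [fd_add, okL_cons]; exact ⟨ho.1, h1 n⟩
    · exact .inr (.inl ⟨_, .add _ _ _ _ _ _ h1⟩)
    · exact .inr (.inr ⟨_, .add _ _ _ _ _ _ h1⟩)

def suc : Tm → Tm
  | .zero => one
  | .add c t => add c (suc t)
  | .one => add one one
  | .psi i a => add (psi i a) one

theorem suc_ne (d) : suc d ≠ zero := by cases d <;> simp [suc]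
theorem suc_pr {c} (h : IsPrincipal c) : suc c = add c one := by
  cases c <;> simp at h <;> rfl
theorem suc_cons {c t} (h : IsPrincipal c) : suc (cons c t) = cons c (suc t) := by
  by_cases h0 : t = zero
  · subst h0; rw [cons_zero, suc_pr h]; simp [suc, cons]
  · rw [cons_nz _ h0, suc, cons_nz _ (suc_ne t)]
theorem suc_nm (n) : suc (nm n) = nm (n + 1) := by
  induction n with
  | zero => rfl
  | succ n ih => rw [nm, rep_succ, suc_cons (by simp), ← nm, ih]; rfl
theorem suc_W {d} : W d → W (suc d) ∧ kd (suc d) = 1 ∧ fd (suc d) zero = d ∧ (d ≠ zero → hd (suc d) = hd d)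
    ∧ G0 (suc d) = G0 d := by
  induction d with
  | zero => simp [suc]
  | one => simp [suc, cons_zero]
  | psi i a => intro h; simp at h; simp [suc, h]
  | add c t _ ih =>
    intro h
    rw [W_add] at h
    obtain ⟨h1, h2, h3, h4, h5⟩ := ih h.2.2.1
    simp only [suc]
    refine ⟨?_, by simpa, ?_, by simp, by simp [h5]⟩
    · rw [W_add]; exact ⟨h.1, h.2.1, h1, suc_ne _, by rw [h4 h.2.2.2.1]; exact h.2.2.2.2⟩
    · rw [fd_add, h3, cons_nz _ h.2.2.2.1]
theorem suc_k1 {a} : kd a = 1 → W a → suc (fd a zero) = a := by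
  induction a with
  | zero => simp
  | one => simp [suc]
  | psi i a => intro h; have := kd_psi_ge i a; omega
  | add c t _ ih =>
    intro h hw
    simp at h
    rw [W_add] at hw
    rw [fd_add, suc_cons hw.1, ih h hw.2.2.1, cons_nz _ hw.2.2.2.1]

theorem suc_ok (hf : Fm f) : ∀ d, W d → (∀ w u v, okL w u v d → okL w u v (suc d)) ∨ mp f (suc d) = suc (mp f d) := by
  apply W_ind
  · intro n
    by_cases h : n = 0
    · subst h; right; rfl
    · left; intro w u v; rw [suc_nm, okL_nm, okL_nm]; tauto
  · intro i a s hi ha hs hle _ ih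
    rw [suc_cons (by simp)]
    rcases ih with h | h
    · left; intro w u v; rw [okL_cons, okL_cons]; exact fun h1 => ⟨h1.1, h _ _ _ h1.2⟩
    · right; rw [mp_cons hf (suc_W hs).1, mp_cons hf hs, suc_cons (by simp), h]

theorem suc_okC {d} : ∀ w u v, W d → d < psi 1 zero → d ≠ zero → okL w u v d → okL w u v (suc d) := by
  induction d with
  | zero => simp
  | one => intro w u v; simp [suc]
  | psi i a => intro w u v hw h _ ho; simp at h; subst h; simp [suc] at ho ⊢; exact ho
  | add c t _ ih =>
    intro w u v hw h _ ho
    rw [W_add] at hw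
    have hc : c < psi 1 zero := by rw [lt_psi_iff] at h; simpa using h
    have ht : t < psi 1 zero := by
      rw [lt_psi_iff]; exact hw.2.2.2.2.trans_lt hc
    rw [okL_add] at ho
    rw [suc, okL_add]
    exact ⟨ho.1, ih _ _ _ hw.2.2.1 ht hw.2.2.2.1 ho.2⟩

theorem O_suc {d} (h : O d) : O (suc d) := by
  obtain ⟨h1, h2, h3, h4, h5⟩ := suc_W h.w
  exact ⟨h1, by rw [h5]; exact h.2⟩

theorem C_suc {d} (h : C d) (h0 : d ≠ zero) : C (suc d) := by
  obtain ⟨h1, h2, h3, h4, h5⟩ := suc_W h.1.w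
  refine ⟨⟨O_suc h.1.1, ?_⟩, suc_okC _ _ _ h.1.w h.1.2 h0 h.2⟩
  rw [lt_psi_iff, h4 h0, ← lt_psi_iff]; exact h.1.2
end GB

namespace GB
open Tm
variable {f : ℕ → ℕ}

theorem FO (hf : Fm f) {a} : W a → kd a = 3 → ∀ z d, W z → z < psi 1 zero → W d → fd a z ≤ mp f d →
    mp f d < a → ∃ e, W e ∧ mp f e = a := by
  induction a with
  | zero => simp
  | one => simp
  | psi i a ih =>
    intro hw hk z d hz hz1 hd h1 h2
    simp at hw
    obtain ⟨hi, hw⟩ := hw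
    interval_cases i
    · simp at hk
    · rcases kd_split a with h | h | h | h
      · rw [kd_eq_zero hw] at h; subst h; exact ⟨psi 1 zero, by simp, rfl⟩
      · simp [kd_psi1, h] at hk
      · simp [kd_psi1, h] at hk
      · rw [fd_psi1_3 h] at h1
        obtain ⟨d1, s, he, h3, h4⟩ := sand (mp_W hf _ hd) h1 h2
        obtain ⟨d0, s0, rfl, -, hd0, hs0, hle, rfl, h6⟩ := mp_eq_cons hf hd he
        obtain ⟨e, he1, he2⟩ := ih hw h z d0 hz hz1 hd0 h3 h4
        exact ⟨psi 1 e, by simp [he1], by simp [he2]⟩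
  | add c t _ ih =>
    intro hw hk z d hz hz1 hd h1 h2
    simp at hk
    obtain ⟨i, c, rfl, hi, hc⟩ := c_psi hw (by omega)
    rw [fd_add] at h1
    obtain ⟨s, he, h3, h4, h5⟩ := sand_add hw (mp_W hf _ hd) h1 h2
    obtain ⟨c0, s0, rfl, -, hc0, hs0, hle, rfl, rfl⟩ := mp_eq_cons hf hd he
    have hw' := hw
    simp at hw
    obtain ⟨e, he1, he2⟩ := ih hw.2.1 hk z s0 hz hz1 hs0 h3 h4
    exact ⟨add (psi i c0) e, W_addp hf hw' hc0 he1 he2, by rw [mp_addp, he2]⟩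

def FC (f : ℕ → ℕ) (w u v : Bool) (δ ε : Tm) (g : ℕ → ℕ) : Prop :=
  W ε ∧ kd ε = 2 ∧ okL w u v ε ∧ δ ≤ mp f ε ∧ (∀ τ, W τ → δ ≤ mp f τ → ε ≤ τ) ∧
  (∀ y, g y ≤ f y) ∧ (∀ y, mp f (fd ε (nm y)) = fd δ (nm (g y))) ∧ (mp f ε = δ ∨ Mult ε)

theorem psi_le_aux (hf : Fm f) {i a e τ} (hτ : W τ) (hm : ∀ t, W t → a ≤ mp f t → e ≤ t)
    (h : psi i a ≤ mp f τ) : psi i e ≤ τ := by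
  by_contra hc
  refine absurd h (not_le.2 ?_)
  rw [not_le] at hc
  rw [lt_psi_iff] at hc ⊢
  rcases W_case hτ with ⟨n, rfl⟩ | ⟨j, b, s, rfl, hj, hb, hs, hle⟩
  · rw [mp_nm hf, ← lt_psi_iff]; simp
  · rw [mp_cons hf hs, hd_cons _ _ (by simp)]
    rw [hd_cons _ _ (by simp)] at hc
    simp at hc ⊢
    rcases hc with hc | hc
    · exact .inl hc
    · refine .inr ⟨hc.1, ?_⟩
      by_contra h2
      exact absurd (hm b hb (not_lt.1 h2)) (not_le.2 hc.2)

theorem F (hf : Fm f) {δ} : ∀ w u v, W δ → kd δ = 2 → okL w u v δ → ∀ α x, W α →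
    fd δ (nm x) ≤ mp f α → 1 ≤ x → mp f α < δ → ∃ ε g, FC f w u v δ ε g := by
  induction δ with
  | zero => simp
  | one => simp
  | psi i a ih =>
    intro w u v hw hk ho α x hα h1 hx h2
    simp at hw
    obtain ⟨hi, hw⟩ := hw
    rcases kd_split a with h | h | h | h
    · obtain rfl := (kd_eq_zero hw).1 h
      have : i = 0 := by
        interval_cases i
        · rfl
        · simp [kd_psi1] at hk
      subst this
      refine ⟨psi 0 zero, f, by simp, by simp, ho, le_rfl, fun τ hτ h => ?_, fun y => le_rfl, fun y => ?_, .inl rfl⟩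
      · rwa [← mp_le_iff hf (by simp) hτ]
      · rw [fd_psi_0 rfl, fd_psi_0 rfl, mp_nm hf]
    · rw [fd_psi_1 h, tmToNat_nm] at h1
      have hp : psi i (fd a zero) ≤ mp f α := by
        refine le_trans ?_ h1
        have := (rep_le (a := psi i (fd a zero)) (by simp)).2 hx
        simpa [rep_succ] using this
      obtain ⟨d, s, he, h3, h4⟩ := sand (mp_W hf _ hα) hp h2
      obtain ⟨d0, s0, rfl, -, hd0, hs0, hle, rfl, h6⟩ := mp_eq_cons hf hα he
      have h7 := le_antisymm (pred_le _ _ hw (mp_W hf _ hd0) h h4) h3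
      obtain ⟨s1, s2, s3, s4, s5⟩ := suc_W hd0
      have hlt : d0 < suc d0 := by
        conv_lhs => rw [← s3]
        exact fd_lt s1 (Adm.w _ _ (by omega)) (suc_ne _)
      refine ⟨psi i (suc d0), id, by simp [hi, s1], kd_psi_12 hi (.inl s2), ?_, ?_, ?_, fun y => hf.sm.le_apply, ?_, .inr (.base _ _ s2)⟩
      · rw [okL_psi hi] at ho ⊢
        rcases suc_ok hf d0 hd0 with hh | hh
        · apply hh
          rw [← mp_okL hf _ hd0, h7]
          exact ok_pred _ _ _ h ho
        · rw [← mp_okL hf _ s1, hh, h7, suc_k1 h hw]; exact ho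
      · have h8 := mp_lt hf _ hd0 _ s1 hlt
        rw [mp_psi, psi_le_psi]
        refine .inr ⟨rfl, ?_⟩
        by_contra hc
        have := pred_le _ _ hw (mp_W hf _ s1) h (not_le.1 hc)
        rw [h7] at h8
        exact absurd h8 (not_lt.2 this)
      · intro τ hτ hle
        by_contra hc
        have h8 := hd_le_pred s1 s2 hτ (not_le.1 hc)
        rw [s3, ← mp_hd hf hτ hd0, h7] at h8
        refine absurd hle (not_le.2 ?_)
        rw [lt_psi_iff]
        refine h8.trans_lt ?_
        simp
        exact fd_lt hw (Adm.w _ _ (by omega)) (ne_of_kd (by omega))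
      · intro y
        rw [fd_psi_1 s2, fd_psi_1 h, s3, mp_rep hf hi hd0, h7]; rfl
    · rw [fd_psi_2 h] at h1
      obtain ⟨d, s, he, h3, h4⟩ := sand (mp_W hf _ hα) h1 h2
      obtain ⟨d0, s0, rfl, -, hd0, hs0, hle, rfl, h6⟩ := mp_eq_cons hf hα he
      rw [okL_psi hi] at ho
      obtain ⟨e, g, e1, e2, e3, e4, e5, e6, e7, e8⟩ := ih _ _ _ hw h ho d0 x hd0 h3 hx h4
      refine ⟨psi i e, g, by simp [hi, e1], kd_psi_12 hi (.inr e2), ?_, by simp [e4],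
        fun τ hτ h => psi_le_aux hf hτ e5 h, e6, ?_, ?_⟩
      · rw [okL_psi hi]; exact e3
      · intro y; rw [fd_psi_2 e2, fd_psi_2 h, mp_psi, e7]
      · rcases e8 with e8 | e8
        · left; simp [e8]
        · right; exact .psi _ _ e8
    · have : i = 0 := by
        interval_cases i
        · rfl
        · simp [kd_psi1, h] at hk
      subst this
      rw [fd_psi0_3 h, zz_succ] at h1
      obtain ⟨d, s, he, h3, h4⟩ := sand (mp_W hf _ hα) h1 h2
      obtain ⟨d0, s0, rfl, -, hd0, hs0, hle, rfl, h6⟩ := mp_eq_cons hf hα he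
      obtain ⟨e, e1, rfl⟩ := FO hf hw h _ d0 (zz_W hw h _) (zz_lt_Omega _ _) hd0 h3 h4
      have hk3 : kd e = 3 := by rwa [mp_kd hf _ e1] at h
      refine ⟨psi 0 e, id, by simp [e1], by simp, ?_, le_rfl, fun τ hτ h => ?_, fun y => hf.sm.le_apply, fun y => ?_, .inl rfl⟩
      · rw [← mp_psi, mp_okL hf _ (by simp [e1])] at ho; exact ho
      · rwa [← mp_psi, mp_le_iff hf (by simp [e1]) hτ] at h
      · rw [fd_psi0_3 hk3, fd_psi0_3 h, mp_zz hf e1 hk3]; rfl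
  | add c t _ ih =>
    intro w u v hw hk ho α x hα h1 hx h2
    simp at hk
    obtain ⟨i, c, rfl, hi, hc⟩ := c_psi hw (by omega)
    rw [fd_add] at h1
    obtain ⟨s, he, h3, h4, h5⟩ := sand_add hw (mp_W hf _ hα) h1 h2
    obtain ⟨c0, s0, rfl, -, hc0, hs0, hle, rfl, rfl⟩ := mp_eq_cons hf hα he
    have hw' := hw
    rw [W_add] at hw
    rw [okL_add] at ho
    obtain ⟨e, g, e1, e2, e3, e4, e5, e6, e7, e8⟩ := ih _ _ _ hw.2.2.1 hk ho.2 s0 x hs0 h3 hx h4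
    have hn := mp_npd hf (i := i) hc0
    rw [hn.1, hn.2] at e3
    have he0 : e ≠ zero := ne_of_kd (by omega)
    have hle2 : hd e ≤ psi i c0 := by
      have h6 := rep_big (p := psi i (mp f c0)) (by simp) _ t hw.2.2.1 hw.2.2.2.2 (Nat.lt_succ_self _)
      rw [← mp_rep hf hi hc0] at h6
      have hwr := W_rep (a := psi i c0) (by simp) (by simp [hi, hc0]) (normN t).succ
      have := hd_mono e1 hwr (e5 _ hwr h6.le)
      simpa [hd_rep] using this
    have hwe : W (add (psi i c0) e) := by rw [W_add]; exact ⟨by simp, by simp [hi, hc0], e1, he0, hle2⟩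
    refine ⟨add (psi i c0) e, g, hwe, by simpa, ?_, ?_, ?_, e6, ?_, ?_⟩
    · rw [okL_add]
      refine ⟨?_, e3⟩
      rw [← mp_okL hf _ (by simp [hi, hc0])]; exact ho.1
    · rw [mp_addp, add_eq_cons hw', ← cons_nz _ (mp_ne_zero hf e1 he0), cons_le_cons (by simp) (by simp)]
      exact .inr ⟨rfl, e4⟩
    · intro τ hτ h
      rw [add_eq_cons hwe]
      rw [add_eq_cons hw'] at h
      rcases W_case hτ with ⟨n, rfl⟩ | ⟨j, b, s, rfl, hj, hb, hs, hle⟩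
      · have h6 : psi i (mp f c0) ≤ cons (psi i (mp f c0)) t := by
          conv_lhs => rw [← cons_zero (psi i (mp f c0))]
          rw [cons_le_cons (by simp) (by simp)]; simp
        rw [mp_nm hf] at h
        exact absurd (nm_lt_psi (f n) i (mp f c0)) (not_lt.2 (h6.trans h))
      · rw [mp_cons hf hs, cons_le_cons (by simp) (by simp)] at h
        rw [cons_le_cons (by simp) (by simp)]
        rcases h with h | ⟨h, h'⟩
        · left; rw [← mp_psi, ← mp_psi, mp_lt_iff hf (by simp [hi, hc0]) (by simp [hj, hb])] at h; exact h
        · right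
          rw [← mp_psi, ← mp_psi] at h
          exact ⟨mp_inj hf (by simp [hi, hc0]) (by simp [hj, hb]) h, e5 _ hs h'⟩
    · intro y
      rw [fd_add, fd_add, mp_cons hf (fd_W e1 (adm_nm _ _)), e7]
    · rcases e8 with e8 | e8
      · left; rw [mp_addp, e8]
      · right; exact .add _ _ e8
end GB

namespace GB
open Tm
variable {f : ℕ → ℕ}

def Nrm (k : ℕ) (α : Tm) : Prop := C α ∧ ∀ β, C β → α < β → H α k < H β k

theorem C_mp (hf : Fm f) {a} (ha : W a) : C (mp f a) ↔ C a := by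
  unfold C CO; rw [mp_O hf ha, mp_lt_Om hf ha, mp_okL hf a ha]

theorem GA_co {w u v l b} (h : GA w u v l b) : W b → b < Tm.psi 1 Tm.zero → u = false ∧ b = Tm.psi 0 Tm.zero := by
  induction h with
  | zero v => intro _ _; exact ⟨rfl, rfl⟩
  | add u v c a b h ih =>
    intro hw hlt
    simp only [W_add] at hw
    rw [lt_psi_iff] at hlt
    have hb : b < Tm.psi 1 Tm.zero := by rw [lt_psi_iff]; exact hw.2.2.2.2.trans_lt hlt
    have := (ih hw.2.2.1 hb).1
    rcases pr_countable hw.1 hlt with rfl | ⟨d, rfl⟩ <;> simp at this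

noncomputable def ui (α : Tm) (k : ℕ) : ℕ → ℕ
  | 0 => 0
  | b + 1 => H (it α k b) k
theorem it_ui (α k b) : it α k b = fd α (nm (ui α k b)) := by
  cases b with
  | zero => rfl
  | succ b => rfl

theorem fd_le_lt {δ a b} (hw : W δ) (hk : kd δ = 2) (h : a < b) : fd δ (nm a) < fd δ (nm b) :=
  fd_mono δ _ _ hw (adm_nm _ _) (adm_nm _ _) (by omega) ((rep_lt_iff (by simp)).2 h)

theorem H_fd_le {δ a b k} (hδ : CO δ) (hk : kd δ = 2) (h : a ≤ b) (h2 : 2 ≤ k) :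
    H (fd δ (nm a)) k ≤ H (fd δ (nm b)) k :=
  H_mono (CO_fdn hδ _) (CO_fdn hδ _) (fd_emb hδ.1 hk h) h2 le_rfl

theorem H_fd_le_H {δ a k} (hδ : CO δ) (hk : kd δ = 2) (h2 : 2 ≤ k) (ha : a ≤ ui δ k k) :
    H (fd δ (nm a)) k ≤ H δ k := by
  rw [H_lim hδ hk, it_ui]; exact H_fd_le hδ hk ha h2

theorem it_mono_H {δ k} (hδ : CO δ) (hk : kd δ = 2) (h2 : 2 ≤ k) {b b'} (hb : b < b') :
    it δ k b < it δ k b' ∧ H (it δ k b) k < H (it δ k b') k := by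
  induction b' with
  | zero => omega
  | succ n ih =>
    have := H_it_lt hδ hk h2 n
    rcases Nat.lt_succ_iff_lt_or_eq.1 hb with h | rfl
    · have := ih h; exact ⟨this.1.trans (by assumption : _ ∧ _).1, by omega⟩
    · exact this

theorem Claim_gap {k α0 l δ} (hk : 2 ≤ k) (hf : Fm f) (hn : Nrm k α0) (hδ : C δ) (hlt : mp f α0 < δ)
    (IH : ∀ β, C β → β < δ → mp f α0 < β → H (mp f α0) (k+1) < H β (k+1))
    (hg : Gap true false false l δ) : H (mp f α0) (k+1) < H δ (k+1) := by
  have hwδ := hδ.1.w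
  obtain ⟨hwl, hhl, hlδ, hkδ, h01⟩ := hg.w hwδ
  have hwa := hn.1.1.w
  have hK : 2 ≤ k + 1 := by omega
  have hAC : C (mp f α0) := (C_mp hf hwa).2 hn.1
  have hAl : mp f α0 < l := by
    by_contra hc
    exact absurd (hg.K hwδ _ hAC.1.w hAC.2 (not_lt.1 hc)) (not_le.2 hlt)
  have hCOl : CO l := ⟨hg.O hδ.1.1 hδ.2, hlδ.trans hδ.1.2⟩
  have hCl : ∀ n, C (fd l (nm n)) := fun n => ⟨CO_fdn hCOl n, hg.ok hwδ hδ.2 n⟩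
  have hl0 : l ≠ zero := by rintro rfl; simp at hAl
  have hfl : ∀ n, fd l (nm n) < δ := fun n => (fd_lt hwl (adm_nm _ _) hl0).trans hlδ
  by_cases h1 : mp f α0 < fd l (nm 1)
  · refine (IH _ (hCl 1) (hfl 1) h1).trans_le ?_
    rw [← h01]; exact H_fd_le_H (a := 0) hδ.1 hkδ hK (Nat.zero_le _)
  · obtain ⟨l0, R0, hwR0, hg0, e1, e2, e3⟩ := hg.pull hf hwδ α0 hwa (not_lt.1 h1) hAl
    obtain ⟨hwl0, -, hlR0, hkR0, -⟩ := hg0.w hwR0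
    have hCR0 : C R0 := (C_mp hf hwR0).1 (e2 ▸ hδ)
    have ha0 : α0 < l0 := by rw [← mp_lt_iff hf hwa hwl0, e1]; exact hAl
    have hH0 := hn.2 R0 hCR0 (ha0.trans hlR0)
    have hN := N_lt_H hk α0 hn.1.1
    set n := normN α0 + 1 with hnn
    have h3 : mp f α0 < fd l (nm n) := by
      rw [← e3, mp_lt_iff hf hwa (fd_W hwl0 (adm_nm _ _))]
      exact Cof (hg0.mult hwR0) α0 n hwl0 hwa ha0 (by omega)
    refine (IH _ (hCl n) (hfl n) h3).trans_le ?_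
    -- x
    have hemb : Emb R0 δ := by rw [← e2]; exact mp_emb hf R0 hwR0
    have hx : H R0 k ≤ H (it δ (k+1) k) (k+1) := by
      rcases lemS hemb hwR0 hwδ (ne_of_kd (by omega)) with hs | hs
      · obtain ⟨j, rfl⟩ : ∃ j, k = j + 1 := ⟨k - 1, by omega⟩
        refine H_mono hCR0.1 (CO_it hδ.1 _ _) ?_ hk (by omega)
        refine hs _ (adm_nm _ _) (nm_ne ?_)
        have := H_ge hK (CO_it hδ.1 (j+1+1) j)
        omega
      · rw [H_lim hCR0.1 hkR0]
        refine H_mono (CO_it hCR0.1 _ _) (CO_it hδ.1 _ _) ?_ hk (by omega)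
        exact it_emb hCR0.1 hδ.1 (fun w w' h => hs.2.1 _ _ (adm_nm _ _) (adm_nm _ _) (emb_nm.2 h)) hk (by omega) _ _ le_rfl
    set x := H (it δ (k+1) k) (k+1) with hxd
    obtain ⟨g1, g2, g3⟩ := hg.emb hwδ x (by omega)
    have hs : CO (fd δ (nm x)) := CO_fdn hδ.1 x
    rw [H_lim hδ.1 hkδ]
    change _ ≤ H (fd δ (nm x)) (k+1)
    set s := fd δ (nm x) with hsd
    rw [H_lim hs g1]
    change _ ≤ H (fd s (nm (H (it s (k+1) k) (k+1)))) (k+1)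
    refine H_mono (hCl n).1 (CO_fdn hs _) (g2 _ _ ?_) hK le_rfl
    have i1 := N_lt_H hK _ (CO_it hs (k+1) k)
    have i2 : normN s ≤ normN (it s (k+1) k) := by
      obtain ⟨j, hj⟩ : ∃ j, k = j + 1 := ⟨k - 1, by omega⟩
      have := norm_k2 s (H (it s (k+1) j) (k+1)) hs.w g1 (hK.trans (H_ge hK (CO_it hs _ _)))
      have e : ∀ K, it s K k = fd s (nm (H (it s K j) K)) := by
        intro K; rw [hj]; rfl
      rwa [e]
    omega

theorem Claim_reg {k α0 δ} (hk : 2 ≤ k) (hf : Fm f) (hn : Nrm k α0)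
    (hfH : ∀ γ, Nrm k γ → γ < α0 → f (H γ k) = H (mp f γ) (k+1))
    (hδ : C δ) (hkδ : kd δ = 2) (hlt : mp f α0 < δ)
    (IH : ∀ β, C β → β < δ → mp f α0 < β → H (mp f α0) (k+1) < H β (k+1))
    (hg : ∀ n, okL true false false (fd δ (nm n))) : H (mp f α0) (k+1) < H δ (k+1) := by
  have hwδ := hδ.1.w
  have hwa := hn.1.1.w
  have hK : 2 ≤ k + 1 := by omega
  have hCd : ∀ n, C (fd δ (nm n)) := fun n => ⟨CO_fdn hδ.1 n, hg n⟩
  have hδ0 : δ ≠ zero := ne_of_kd (by omega)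
  by_cases h1 : mp f α0 < it δ (k+1) (k+1)
  · rw [H_lim hδ.1 hkδ]
    refine IH _ ?_ (it_lt hwδ hδ0 _ _) h1
    rw [it_ui]; exact hCd _
  exfalso
  have h1 := not_lt.1 h1
  have hv : 1 ≤ ui δ (k+1) (k+1) := by
    have := H_ge hK (CO_it hδ.1 (k+1) k)
    show 1 ≤ H (it δ (k+1) k) (k+1)
    omega
  obtain ⟨ε, g, hwε, hkε, hoε, hle, hmin, hgf, hgy, hor⟩ :=
    F hf true false false hwδ hkδ hδ.2 α0 _ hwa (by rw [← it_ui]; exact h1) hv hlt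
  have hOy : ∀ y, C (fd ε (nm y)) := fun y => by
    rw [← C_mp hf (fd_W hwε (adm_nm _ _)), hgy]; exact hCd _
  have hOε : O ε := by
    rcases hor with h | h
    · rw [← mp_O hf hwε, h]; exact hδ.1.1
    · exact CL h hwε (fun n => (hOy n).1.1)
  have hεΩ : ε < psi 1 zero := by
    have := hmin (psi 1 zero) (by simp) (by simpa using hδ.1.2.le)
    refine lt_of_le_of_ne this ?_
    intro he
    rw [he] at hkε
    revert hkε; simp [kd]
  have hCε : C ε := ⟨⟨hOε, hεΩ⟩, hoε⟩
  have hε0 : ε ≠ zero := ne_of_kd (by omega)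
  have haε : α0 < ε := by
    rw [← mp_lt_iff hf hwa hwε]; exact hlt.trans_le hle
  have hH := hn.2 ε hCε haε
  have low : ∀ b, it ε k b ≤ α0 → H (it ε k b) k ≤ H α0 k := fun b hb => by
    rw [it_ui] at hb ⊢
    exact H_mono (CO_fdn hCε.1 _) hn.1.1 (BE2 ε α0 _ hwε hkε hn.1.1.1 hb haε) hk le_rfl
  have nrm : ∀ b, it ε k b < α0 → Nrm k (it ε k b) := fun b hb => by
    have hC : C (it ε k b) := by rw [it_ui]; exact hOy _
    refine ⟨hC, fun β hβ hlt' => ?_⟩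
    by_cases hc : β < ε
    · refine H_strict hC.1 hβ.1 ?_ hlt'.ne hk
      rw [it_ui] at hlt' ⊢
      exact BE2 ε β _ hwε hkε hβ.1.1 hlt'.le hc
    · exact (low b hb.le).trans_lt (hn.2 β hβ (haε.trans_le (not_lt.1 hc)))
  have key : ∀ b, b ≤ k → g (ui ε k b) ≤ ui δ (k+1) b := by
    intro b
    induction b with
    | zero => intro _; have := hgf 0; rw [hf.z] at this; exact this
    | succ b ih =>
      intro hb
      have ih := ih (by omega)
      have e : mp f (it ε k b) = fd δ (nm (g (ui ε k b))) := by rw [it_ui, hgy]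
      have l1 : fd δ (nm (g (ui ε k b))) ≤ it δ (k+1) b := by
        rw [it_ui]
        exact fd_mono_le hwδ (adm_nm _ _) (adm_nm _ _) (by omega) ((rep_le (by simp)).2 ih)
      have l2 : it ε k b < α0 := by
        rw [← mp_lt_iff hf (by rw [it_ui]; exact (hOy _).1.w) hwa, e]
        exact (l1.trans_lt (it_mono_H hδ.1 hkδ hK (by omega : b < k + 1)).1).trans_le h1
      have l3 := hfH _ (nrm b l2) l2
      refine (hgf _).trans ?_
      show f (H (it ε k b) k) ≤ H (it δ (k+1) b) (k+1)
      rw [l3, e, it_ui]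
      exact H_fd_le hδ.1 hkδ ih hK
  have fin : it ε k k ≤ α0 := by
    rw [← mp_le_iff hf (by rw [it_ui]; exact (hOy _).1.w) hwa]
    rw [it_ui, hgy]
    refine le_trans ?_ h1
    refine le_trans ?_ (it_mono_H hδ.1 hkδ hK (by omega : k < k + 1)).1.le
    rw [it_ui]
    exact fd_mono_le hwδ (adm_nm _ _) (adm_nm _ _) (by omega) ((rep_le (by simp)).2 (key k le_rfl))
  have := low k fin
  rw [H_lim hCε.1 hkε] at hH
  omega

theorem Claim {k α0} (hk : 2 ≤ k) (hf : Fm f) (hn : Nrm k α0)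
    (hfH : ∀ γ, Nrm k γ → γ < α0 → f (H γ k) = H (mp f γ) (k+1)) : Nrm (k+1) (mp f α0) := by
  have hwa := hn.1.1.w
  have hK : 2 ≤ k + 1 := by omega
  have hAC : C (mp f α0) := (C_mp hf hwa).2 hn.1
  refine ⟨hAC, fun δ hδ => ?_⟩
  have := co_ind (P := fun δ => C δ → mp f α0 < δ → H (mp f α0) (k+1) < H δ (k+1)) ?_ δ hδ.1 hδ
  · exact this
  clear hδ δ
  intro δ _ IH hδ hlt
  have IH' : ∀ β, C β → β < δ → mp f α0 < β → H (mp f α0) (k+1) < H β (k+1) :=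
    fun β hβ h1 h2 => IH β hβ.1 h1 hβ h2
  have hwδ := hδ.1.w
  have h2 := kd_co hwδ hδ.1.2
  have hc : kd δ = 0 ∨ kd δ = 1 ∨ kd δ = 2 := by omega
  rcases hc with hc | hc | hc
  · rw [kd_eq_zero hwδ] at hc; subst hc; simp at hlt
  · have h3 := pred_le δ _ hwδ hAC.1.w hc hlt
    have h4 : C (fd δ zero) := ⟨CO_fd0 hδ.1, ok_pred _ _ _ hc hδ.2⟩
    have h5 : H (mp f α0) (k+1) ≤ H (fd δ zero) (k+1) := by
      rcases h3.lt_or_eq with h | h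
      · exact (IH' _ h4 (fd_lt hwδ (adm_nm _ 0) (ne_of_kd (by omega))) h).le
      · rw [← h]
    rw [H_succ hδ.1 hc]
    have := H_ge hK hAC.1
    nlinarith
  · rcases D true false false hwδ hc hδ.2 (by simp) with h | ⟨l, h⟩ | ⟨l, h⟩
    · exact Claim_reg hk hf hn hfH hδ hc hlt IH' h
    · exact Claim_gap hk hf hn hδ hlt IH' h
    · have := (GA_co h hwδ hδ.1.2).2
      subst this
      have h6 : hd (mp f α0) ≤ one := by
        by_cases h0 : mp f α0 = zero
        · rw [h0]; simp
        have hp := hAC.1.w.hd_pr h0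
        rw [lt_psi_iff] at hlt
        generalize hd (mp f α0) = z at hlt hp
        cases z <;> simp at hlt hp ⊢
      obtain ⟨n, e⟩ := W_num hAC.1.w h6
      have h7 := hAC.2
      rw [e, okL_nm] at h7
      simp at h7
      subst h7
      rw [e]
      exact H_strict CO_zero hδ.1 (.zero _) (by simp [nm]) hK
end GB

namespace GB
open Tm
variable {f : ℕ → ℕ}

theorem fin_W (n : ℕ) : {t | W t ∧ normN t ≤ n}.Finite := by
  induction n with
  | zero =>
    refine (Set.finite_singleton zero).subset ?_
    rintro t ⟨hw, hn⟩
    by_contra h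
    have := normN_pos hw h
    omega
  | succ n ih =>
    refine (((Set.finite_singleton zero).union (Set.finite_singleton one)).union
      (((ih.image (psi 0)).union (ih.image (psi 1))).union (ih.image2 add ih))).subset ?_
    rintro t ⟨hw, hn⟩
    cases t with
    | zero => simp
    | one => simp
    | psi i a =>
      simp only [W_psi] at hw
      simp only [normN] at hn
      have hi : i = 0 ∨ i = 1 := by omega
      right; left
      rcases hi with rfl | rfl
      · left; exact ⟨a, ⟨hw.2, by omega⟩, rfl⟩
      · right; exact ⟨a, ⟨hw.2, by omega⟩, rfl⟩
    | add a b =>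
      simp only [W_add] at hw
      simp only [normN] at hn
      have h1 := normN_pos hw.2.1 (pr_ne_zero hw.1)
      have h2 := normN_pos hw.2.2.1 hw.2.2.2.1
      right; right
      exact ⟨a, ⟨hw.2.1, by omega⟩, b, ⟨hw.2.2.1, by omega⟩, rfl⟩

def IsNF (k m : ℕ) (α : Tm) : Prop := C α ∧ H α k ≤ m ∧ ∀ β, C β → α < β → m < H β k

theorem C_zero : C zero := ⟨CO_zero, by simp⟩

theorem nf_ex {k m} (hk : 2 ≤ k) (hm : k ≤ m) : ∃ α, IsNF k m α := by
  have hfin : {α | C α ∧ H α k ≤ m}.Finite := by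
    refine (fin_W m).subset ?_
    rintro t ⟨h1, h2⟩
    exact ⟨h1.1.w, (N_lt_H hk t h1.1).le.trans h2⟩
  obtain ⟨α, ha⟩ := hfin.exists_maximal ⟨zero, C_zero, by rw [H_zero]; exact hm⟩
  refine ⟨α, ha.1.1, ha.1.2, fun β hβ hlt => ?_⟩
  by_contra hc
  exact absurd (ha.2 (y := β) ⟨hβ, not_lt.1 hc⟩ hlt.le) (not_le.2 hlt)

theorem nf_uniq {k m α β} (ha : IsNF k m α) (hb : IsNF k m β) : α = β := by
  rcases lt_trichotomy α β with h | h | h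
  · have := ha.2.2 β hb.1 h; have := hb.2.1; omega
  · exact h
  · have := hb.2.2 α ha.1 h; have := ha.2.1; omega

theorem nf_iff {k m α} : IsNF k m α ↔ (InOT0 α ∧ TLt α OmegaT ∧ H α k ≤ m ∧
      ∀ β : Tm, InOT0 β → TLt β OmegaT → TLt α β → m < H β k) := by
  constructor
  · rintro ⟨h1, h2, h3⟩
    refine ⟨(C_iff.1 h1).1, (C_iff.1 h1).2, h2, fun β hb hb' hlt => h3 β (C_iff.2 ⟨hb, hb'⟩) (TLt_lt hlt)⟩
  · rintro ⟨h1, h2, h3, h4⟩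
    have h := C_iff.2 ⟨h1, h2⟩
    exact ⟨h, h3, fun β hb hlt => h4 β (C_iff.1 hb).1 (C_iff.1 hb).2 ((C_tlt_iff h hb).2 hlt)⟩

theorem nf_alpha {k m α} (h : IsNF k m α) : nfAlpha k m = α := by
  refine nf_uniq (k := k) (m := m) (nf_iff.2 ?_) h
  unfold nfAlpha
  exact Classical.epsilon_spec (p := fun α => InOT0 α ∧ TLt α OmegaT ∧ H α k ≤ m ∧
      ∀ β : Tm, InOT0 β → TLt β OmegaT → TLt α β → m < H β k) ⟨α, nf_iff.1 h⟩

theorem nf_nrm {k m α} (h : IsNF k m α) : Nrm k α := ⟨h.1, fun β hb hlt => by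
  have := h.2.2 β hb hlt; have := h.2.1; omega⟩
theorem nrm_nf {k α} (h : Nrm k α) : IsNF k (H α k) α := ⟨h.1, le_rfl, h.2⟩

theorem bcN_lt {k m} (h : m < k) : bcN k m = m := by rw [bcN, dif_pos h]
theorem bcT_zero (k) : bcT k zero = zero := by rw [bcT]

theorem bcN_nf {k m α} (hk : 2 ≤ k) (hm : k ≤ m) (h : IsNF k m α) :
    bcN k m = H (bcT k α) (k+1) * (m / H α k) + bcN k (m % H α k) := by
  by_cases h2 : m = k
  · subst h2
    have : α = zero := by
      refine nf_uniq h ⟨C_zero, by rw [H_zero], fun β hb hlt => ?_⟩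
      have := H_strict CO_zero hb.1 (.zero _) hlt.ne hk
      rwa [H_zero] at this
    subst this
    rw [bcT_zero, H_zero, H_zero, Nat.div_self (by omega), Nat.mod_self, bcN_lt (by omega : 0 < m)]
    rw [bcN, dif_neg (by omega), dif_pos rfl]; omega
  · rw [bcN, dif_neg (by omega), dif_neg h2, nf_alpha h, dif_pos]
    have := N_lt_H hk α h.1.1
    have := h.2.1
    have := H_ge hk h.1.1
    exact ⟨by omega, by omega, by omega⟩

theorem bcN_H {k α} (hk : 2 ≤ k) (h : Nrm k α) : bcN k (H α k) = H (bcT k α) (k+1) := by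
  have h1 := H_ge hk h.1.1
  rw [bcN_nf hk h1 (nrm_nf h), Nat.div_self (by omega), Nat.mod_self, bcN_lt (by omega)]; omega

theorem bcT_mp {k} : ∀ t, W t → (∀ n, n ≤ normN t → f n = bcN k n) → bcT k t = mp f t := by
  intro t
  induction t with
  | zero => intro _ _; rw [bcT_zero]; rfl
  | one => intro _ _; rw [bcT]; rfl
  | psi i a ih =>
    intro hw hf
    simp only [W_psi] at hw
    simp only [normN] at hf
    rw [bcT, mp_psi, ih hw.2 fun n hn => hf n (by omega)]
  | add a b iha ihb =>
    intro hw hf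
    have h3 := tmToNat_le_normN (add a b)
    simp only [W_add] at hw
    have h1 := normN_pos hw.2.1 (pr_ne_zero hw.1)
    have h2 := normN_pos hw.2.2.1 hw.2.2.2.1
    rw [bcT, mp]
    split
    · rw [nat_rep, hf _ h3]
    · simp only [normN] at hf
      rw [dif_pos ⟨h1, h2⟩, iha hw.2.1 fun n hn => hf n (by omega), ihb hw.2.2.1 fun n hn => hf n (by omega)]

noncomputable def xt (k n x : ℕ) : ℕ := if x < n then bcN k x else bcN k (n-1) + (x + 1 - n)

theorem xt_Fm {k n} (hk : 2 ≤ k) (hn : k ≤ n) (h : ∀ a b, a < b → b < n → bcN k a < bcN k b) : Fm (xt k n) := by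
  refine ⟨fun a b hab => ?_, ?_, ?_⟩
  · unfold xt
    split_ifs with h1 h2 h2
    · exact h a b hab h2
    · rcases (by omega : a < n - 1 ∨ a = n - 1) with h3 | rfl
      · have := h a (n-1) h3 (by omega); omega
      · omega
    · omega
    · omega
  · unfold xt; rw [if_pos (by omega), bcN_lt (by omega)]
  · unfold xt; rw [if_pos (by omega), bcN_lt (by omega)]

theorem arith1 {k r s e : ℕ} (he : 1 ≤ e) (hs : s < k) (h : k * r + s < k ^ e) :
    (k+1) * r + s < (k+1) ^ e := by
  obtain ⟨e, rfl⟩ : ∃ j, e = j + 1 := ⟨e - 1, by omega⟩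
  rw [pow_succ] at h ⊢
  have h1 : r < k ^ e := by
    by_contra hc
    have := Nat.mul_le_mul_left k (not_lt.1 hc)
    rw [mul_comm k (k ^ e)] at this
    omega
  have h2 : k ^ e ≤ (k+1) ^ e := Nat.pow_le_pow_left (by omega) e
  have h3 : r + 1 ≤ (k+1) ^ e := by omega
  have h4 := Nat.mul_le_mul_right (k+1) h3
  nlinarith

theorem pow_gap {k α β} (hk : 2 ≤ k) (ha : CO α) (hb : CO β) (h : H α k < H β k) : H α k * k ≤ H β k := by
  rw [(ex_spec hk ha).2, (ex_spec hk hb).2] at h ⊢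
  rw [← pow_succ]
  exact Nat.pow_le_pow_right (by omega) ((Nat.pow_lt_pow_iff_right (by omega)).1 h)

/-- numbers with the given normal form stay below the base-changed bound -/
theorem below {k m γ} (hk : 2 ≤ k) (hm : k ≤ m) (h : IsNF k m γ) (hN : Nrm (k+1) (bcT k γ))
    (hs : bcN k (m % H γ k) < H (bcT k γ) (k+1)) {β'} (hb' : C β') (hlt' : bcT k γ < β')
    (hz : γ = zero → ∃ β, C β ∧ γ < β ∧ Emb β β') : bcN k m < H β' (k+1) := by
  rw [bcN_nf hk hm h]
  by_cases h0 : γ = zero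
  · obtain ⟨β, hb, hlt, he⟩ := hz h0
    subst h0
    have h1 := h.2.2 β hb hlt
    rw [bcT_zero, H_zero, H_zero] at *
    rw [bcN_lt (Nat.mod_lt _ (by omega))]
    have h3 := ex_mono hb.1 hb'.1 he hk (by omega : k ≤ k + 1)
    rw [(ex_spec hk hb.1).2] at h1
    rw [(ex_spec (by omega : 2 ≤ k + 1) hb'.1).2]
    refine lt_of_lt_of_le (arith1 (ex_spec hk hb.1).1 (Nat.mod_lt _ (by omega)) ?_) (Nat.pow_le_pow_right (by omega) h3)
    rwa [Nat.div_add_mod]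
  · obtain ⟨s1, s2, s3, s4, s5⟩ := suc_W h.1.1.w
    have hsC := C_suc h.1 h0
    have hsl : γ < suc γ := by
      conv_lhs => rw [← s3]
      exact fd_lt s1 (adm_nm _ 0) (ne_of_kd (by omega))
    have h1 := h.2.2 _ hsC hsl
    rw [H_succ hsC.1 s2, s3] at h1
    have h2 : m / H γ k < k := Nat.div_lt_of_lt_mul h1
    have h3 := pow_gap (by omega : 2 ≤ k + 1) hN.1.1 hb'.1 (hN.2 β' hb' hlt')
    refine lt_of_lt_of_le ?_ h3
    generalize H (bcT k γ) (k+1) = X at *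
    have := Nat.mul_le_mul_left X (by omega : m / H γ k + 1 ≤ k + 1)
    nlinarith

theorem MM {k} (hk : 2 ≤ k) (n) : (∀ γ, Nrm k γ → H γ k < n → Nrm (k+1) (bcT k γ)) →
    ∀ m, m < n → bcN k m < bcN k n := by
  induction n using Nat.strong_induction_on with
  | _ n IH =>
  intro h m hmn
  have sm : ∀ a b, a < b → b < n → bcN k a < bcN k b := fun a b hab hb =>
    IH b hb (fun γ hγ hlt => h γ hγ (by omega)) a hab
  by_cases hn : n < k
  · rw [bcN_lt hn, bcN_lt (by omega)]; exact hmn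
  have hn := not_lt.1 hn
  have hF := xt_Fm hk hn sm
  obtain ⟨β, hβ⟩ := nf_ex hk hn
  have bm : ∀ t, C t → H t k ≤ n → bcT k t = mp (xt k n) t := fun t ht hle =>
    bcT_mp t ht.1.w fun x hx => by
      have := N_lt_H hk t ht.1
      unfold xt; rw [if_pos (by omega)]
  have hbβ := bm β hβ.1 hβ.2.1
  have hCβ' : C (bcT k β) := by rw [hbβ, C_mp hF hβ.1.1.w]; exact hβ.1
  have hHβ := H_ge hk hβ.1.1
  have hHβ' := H_ge (by omega : 2 ≤ k + 1) hCβ'.1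
  have hr : 1 ≤ n / H β k := Nat.div_pos hβ.2.1 (by omega)
  have en := bcN_nf hk hn hβ
  have hge : H (bcT k β) (k+1) ≤ bcN k n := by
    rw [en]; nlinarith
  by_cases hm : m < k
  · rw [bcN_lt hm]; omega
  have hm := not_lt.1 hm
  obtain ⟨γ, hγ⟩ := nf_ex hk hm
  have hHγ := H_ge hk hγ.1.1
  have hγs : bcN k (m % H γ k) < H (bcT k γ) (k+1) := by
    rw [← bcN_H hk (nf_nrm hγ)]
    exact sm _ _ (Nat.mod_lt _ (by omega)) (by have := hγ.2.1; omega)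
  rcases lt_trichotomy γ β with hc | hc | hc
  · have hbγ := bm γ hγ.1 (by have := hγ.2.1; omega)
    have hlt' : bcT k γ < bcT k β := by
      rw [hbγ, hbβ, mp_lt_iff hF hγ.1.1.w hβ.1.1.w]; exact hc
    refine lt_of_lt_of_le (below hk hm hγ (h γ (nf_nrm hγ) (by have := hγ.2.1; omega)) hγs hCβ' hlt' fun _ => ⟨β, hβ.1, hc, ?_⟩) hge
    rw [hbβ]; exact mp_emb hF β hβ.1.1.w
  · subst hc
    rw [bcN_nf hk hm hγ, en]
    have d1 := Nat.div_add_mod m (H γ k)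
    have d2 := Nat.div_add_mod n (H γ k)
    rcases lt_trichotomy (m / H γ k) (n / H γ k) with hd | hd | hd
    · have := Nat.mul_le_mul_left (H (bcT k γ) (k+1)) (by omega : m / H γ k + 1 ≤ n / H γ k)
      rw [mul_add] at this
      omega
    · rw [hd] at d1 ⊢
      have : m % H γ k < n % H γ k := by omega
      have h5 := Nat.mod_lt n (y := H γ k) (by omega)
      have := sm _ _ this (by have := hγ.2.1; omega)
      omega
    · have := Nat.div_le_div_right (c := H γ k) hmn.le
      omega
  · have := hβ.2.2 γ hγ.1 hc; have := hγ.2.1; omega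

theorem PP {k} (hk : 2 ≤ k) : ∀ α, CO α → Nrm k α → Nrm (k+1) (bcT k α) := by
  apply co_ind
  intro α hα IH hn
  have hB := H_ge hk hα
  have sm : ∀ a b, a < b → b < H α k → bcN k a < bcN k b := fun a b hab hb => by
    refine MM hk b (fun γ hγ hlt => IH γ hγ.1.1 ?_ hγ) a hab
    by_contra hc
    rcases (not_lt.1 hc).lt_or_eq with h | rfl
    · have := hn.2 γ hγ.1 h; omega
    · omega
  have hF := xt_Fm hk hB sm
  have bm : ∀ t, C t → H t k ≤ H α k → bcT k t = mp (xt k (H α k)) t := fun t ht hle =>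
    bcT_mp t ht.1.w fun x hx => by
      have := N_lt_H hk t ht.1
      unfold xt; rw [if_pos (by omega)]
  rw [bm α hn.1 le_rfl]
  refine Claim hk hF hn fun γ hγ hlt => ?_
  have h1 := hγ.2 α hn.1 hlt
  rw [← bm γ hγ.1 h1.le, ← bcN_H hk hγ]
  unfold xt; rw [if_pos h1]

theorem bcN_sm {k} (hk : 2 ≤ k) {m n} (h : m < n) : bcN k m < bcN k n :=
  MM hk n (fun γ hγ _ => PP hk γ hγ.1.1 hγ) m h
end GB

open GB

/-- Normal forms are preserved under base change: if `m =_k H_α(k)·p + q` then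
`m[k←k+1] =_(k+1) H_(α')(k+1)·p + q[k←k+1]`, with `α'` and `p` again maximal. -/
theorem normal_form_preserved_by_base_change (k m p q : ℕ) (hk : 2 ≤ k)
    (hm : k ≤ m) (α : Tm) (hα : InOT0 α) (hαW : TLt α OmegaT)
    (hαmax : ∀ β : Tm, InOT0 β → TLt β OmegaT → TLt α β → m < H β k)
    (hp1 : 1 ≤ p) (hpm : H α k * p ≤ m) (hpmax : m < H α k * (p + 1))
    (hq : q = m - H α k * p) :
    bcN k m = H (bcT k α) (k + 1) * p + bcN k q ∧
    InOT0 (bcT k α) ∧ TLt (bcT k α) OmegaT ∧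
    (∀ β : Tm, InOT0 β → TLt β OmegaT → TLt (bcT k α) β → bcN k m < H β (k + 1)) ∧
    H (bcT k α) (k + 1) * p ≤ bcN k m ∧
    bcN k m < H (bcT k α) (k + 1) * (p + 1) := by
  have hα' : C α := C_iff.2 ⟨hα, hαW⟩
  have hH := H_ge hk hα'.1
  have hle : H α k ≤ m := by nlinarith
  have hnf : IsNF k m α := nf_iff.2 ⟨hα, hαW, hle, hαmax⟩
  have hn := nf_nrm hnf
  have hN := PP hk α hα'.1 hn
  have ed : m / H α k = p := Nat.div_eq_of_lt_le (by rw [mul_comm]; exact hpm) (by rw [mul_comm]; exact hpmax)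
  have em : m % H α k = q := by
    have := Nat.div_add_mod m (H α k); rw [ed] at this; omega
  have e := bcN_nf hk hm hnf
  have hs : bcN k (m % H α k) < H (bcT k α) (k+1) := by
    rw [← bcN_H hk hn]; exact bcN_sm hk (Nat.mod_lt _ (by omega))
  have hC' := C_iff.1 hN.1
  refine ⟨by rw [e, ed, em], hC'.1, hC'.2, ?_, by rw [e, ed]; omega, by rw [e, ed, mul_add]; omega⟩
  intro β hβ hβW hlt
  have hβC : C β := C_iff.2 ⟨hβ, hβW⟩
  have hlt' := TLt_lt hlt
  refine below hk hm hnf hN hs hβC hlt' fun h0 => ⟨β, hβC, ?_, Emb.refl _⟩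
  rw [h0, bcT_zero] at hlt'
  rw [h0]; exact hlt'
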